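/- arXiv:1705.09615 — 2 statements merged into one kernel-verified Lean document; each statement's English description precedes it below -/
import Mathlib

section
/- Let S be a special schema, let u be a variable, and let T be a subschema of S that is a u-slice of S. Then for every function or predicate symbol x that has a labelled occurrence in Need_S(u), T contains at least one occurrence of x. -/
/-!
Call a predicate *relevant* for `u` (`InK`) when, along some path, the outcome of one of its tests
can be flipped and both resulting prefixes completed, consistently with each other apart from that
test, to executions with different final values of `u`. Call an assignment *good* (`Good`) when the
value it creates flows into a relevant test or into the final value of `u`.

Freeness forbids testing the same predicate on the same terms twice along a path, and liberality
makes the Herbrand semantics cancellative (`cancel`), so the head of a path may be exchanged for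
another one leading to the same program point (`cpl_transfer`); hence relevance does not depend on
the head that witnesses it (`InK.at`). Two complete paths which agree on all relevant tests they
have in common yield the same value of `u` (`compat`).

The main step compares two heads that reach the same program point and make the same relevant
tests: every relevant test performed afterwards sees the same terms, and the final value of `u` is
the same (`Heads.test_eq`, `Heads.var_eq`, resting on the counting arguments `Heads.no_repeat` and
`Heads.claim`). If a predicate controlling a relevant predicate or a good assignment were not
relevant, one could avoid the controlled symbol without affecting any relevant test, contradicting
`compat` or the comparison of heads; for an assignment inside an if-schema this uses that equal
function symbols in the two parts assign to distinct variables. So relevance passes to controlling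
predicates (`InK.ctrl`, `Good.ctrl`), and by induction every symbol of `Need_S(u)` is relevant or
good (`need_rel`).

Finally, a relevant predicate gives two interpretations which differ at a single test of that
predicate and for which `S` terminates with different values of `u`. A slice in which the predicate
symbol does not occur cannot tell them apart (`slice_couple`, `InK.mem_slice`). For a good
assignment either the final value of `u`, or the terms of such a decisive test, contain its function
symbol, and the slice has to compute them (`Good.mem_slice`).
-/

/-!
Common formalization of program schemas (Danicic–Hierons–Laurence):
letters/paths, Herbrand semantics, freeness, liberality, subschemas,
data/control dependence, Weiser's set `Need`, slices and couples.
Function symbols, predicate symbols, variables and labels are all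
modelled by `ℕ` (function and predicate symbols kept disjoint by
construction of the syntax).
-/

namespace SchemaSlicing

/-- Letters of the alphabet Λ(S): assignment letters `y := f^(l)(args)` and
predicate letters `⟨p^(l)(args), b⟩`. -/
inductive Letter : Type
  | asn (y : ℕ) (f : ℕ) (l : ℕ) (args : List ℕ)
  | prd (p : ℕ) (l : ℕ) (args : List ℕ) (b : Bool)
  deriving DecidableEq

/-- Program schemas. -/
inductive Schema : Type
  | skip
  | assign (y : ℕ) (f : ℕ) (l : ℕ) (args : List ℕ)
  | seq (S₁ S₂ : Schema)
  | ite (p : ℕ) (l : ℕ) (args : List ℕ) (Tt Tf : Schema)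
  | whil (p : ℕ) (l : ℕ) (args : List ℕ) (body : Schema)

/-- Complete paths of a while loop iterated `n` times. -/
def whileIter (p l : ℕ) (args : List ℕ) (B : Set (List Letter)) : ℕ → Set (List Letter)
  | 0 => {[Letter.prd p l args false]}
  | n + 1 => {σ | ∃ x ∈ B, ∃ y ∈ whileIter p l args B n, σ = Letter.prd p l args true :: (x ++ y)}

/-- The set Π(S) of complete paths through a schema. -/
def Paths : Schema → Set (List Letter)
  | .skip => {[]}
  | .assign y f l args => {[Letter.asn y f l args]}
  | .seq S₁ S₂ => {σ | ∃ x ∈ Paths S₁, ∃ y ∈ Paths S₂, σ = x ++ y}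
  | .ite p l args Tt Tf =>
      {σ | (∃ x ∈ Paths Tt, σ = Letter.prd p l args true :: x) ∨
           (∃ x ∈ Paths Tf, σ = Letter.prd p l args false :: x)}
  | .whil p l args body => {σ | ∃ n, σ ∈ whileIter p l args (Paths body) n}

/-- pre(Π(S)): finite prefixes of complete paths. -/
def PrePaths (S : Schema) : Set (List Letter) := {σ | ∃ τ, σ <+: τ ∧ τ ∈ Paths S}

/-- μ is a path-segment of S. -/
def PathSegment (S : Schema) (μ : List Letter) : Prop := ∃ a b, a ++ μ ++ b ∈ Paths S

/-- μ is a terminal path-segment of S. -/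
def TerminalSegment (S : Schema) (μ : List Letter) : Prop := ∃ a, a ++ μ ∈ Paths S

/-- An interpretation over a domain `D`. -/
structure Interp (D : Type) where
  fn : ℕ → List D → D
  pr : ℕ → List D → Bool

/-- One execution step on states. -/
def stepL {D : Type} (I : Interp D) (d : ℕ → D) : Letter → (ℕ → D)
  | .asn y f _ args => Function.update d y (I.fn f (args.map d))
  | .prd _ _ _ _ => d

/-- `M[σ]^I_d`: the state after executing the assignment letters of σ from d. -/
def execP {D : Type} (I : Interp D) (d : ℕ → D) (σ : List Letter) : ℕ → D :=
  σ.foldl (stepL I) d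

/-- σ is consistent with the interpretation `I` from initial state `d`:
every predicate letter along σ is evaluated according to `I`. -/
def Agrees {D : Type} (I : Interp D) (d : ℕ → D) (σ : List Letter) : Prop :=
  ∀ τ p l args b, τ ++ [Letter.prd p l args b] <+: σ →
    I.pr p (args.map (execP I d τ)) = b

/-- σ is the (terminating) path `π_S(I,d)`. -/
def TermRun {D : Type} (S : Schema) (I : Interp D) (d : ℕ → D) (σ : List Letter) : Prop :=
  σ ∈ Paths S ∧ Agrees I d σ

/-- `M[S]^I_d ≠ ⊥`. -/
def Terminates {D : Type} (S : Schema) (I : Interp D) (d : ℕ → D) : Prop :=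
  ∃ σ, TermRun S I d σ

/-- Terms over function symbols and variables (the Herbrand domain). -/
inductive Trm : Type
  | var : ℕ → Trm
  | app : ℕ → List Trm → Trm

/-- A Herbrand interpretation is determined by its predicate part. -/
abbrev HInterp := ℕ → List Trm → Bool

/-- The Herbrand interpretation with predicate part `h`. -/
def herb (h : HInterp) : Interp Trm := ⟨Trm.app, h⟩

/-- The natural state `e`. -/
def eSt : ℕ → Trm := Trm.var

/-- `M[σ]_e`: Herbrand execution of the assignment letters of σ from e. -/
def hexec (σ : List Letter) : ℕ → Trm := execP (herb fun _ _ => false) eSt σ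

/-- σ is consistent with the Herbrand interpretation `i` from `e`. -/
def hAgrees (i : HInterp) (σ : List Letter) : Prop := Agrees (herb i) eSt σ

/-- A schema is free if every prefix of a complete path is a prefix of
`π_S(i,e)` for some Herbrand interpretation i. -/
def Free (S : Schema) : Prop := ∀ σ ∈ PrePaths S, ∃ i : HInterp, hAgrees i σ

/-- A schema is liberal if along any executable path (from `e`, under a
Herbrand interpretation) no two assignments produce the same term. -/
def Liberal (S : Schema) : Prop :=
  ∀ (i : HInterp) (μ ν : List Letter) (y f l args w g m brgs),
    (μ ++ Letter.asn y f l args :: (ν ++ [Letter.asn w g m brgs])) ∈ PrePaths S →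
    hAgrees i (μ ++ Letter.asn y f l args :: (ν ++ [Letter.asn w g m brgs])) →
    hexec (μ ++ [Letter.asn y f l args]) y ≠
      hexec (μ ++ Letter.asn y f l args :: (ν ++ [Letter.asn w g m brgs])) w

/-- Labelled symbols: labelled function symbols and labelled predicate symbols. -/
inductive LSym : Type
  | fn (f l : ℕ)
  | pr (p l : ℕ)
  deriving DecidableEq

/-- The set of labelled symbols occurring in a schema. -/
def lsymSet : Schema → Set LSym
  | .skip => ∅
  | .assign _ f l _ => {LSym.fn f l}
  | .seq a b => lsymSet a ∪ lsymSet b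
  | .ite p l _ t e => insert (LSym.pr p l) (lsymSet t ∪ lsymSet e)
  | .whil p l _ b => insert (LSym.pr p l) (lsymSet b)

/-- Number of occurrences of a labelled symbol in a schema. -/
def lsymCount : Schema → LSym → ℕ
  | .skip, _ => 0
  | .assign _ f l _, x => if x = LSym.fn f l then 1 else 0
  | .seq a b, x => lsymCount a x + lsymCount b x
  | .ite p l _ t e, x => (if x = LSym.pr p l then 1 else 0) + lsymCount t x + lsymCount e x
  | .whil p l _ b, x => (if x = LSym.pr p l then 1 else 0) + lsymCount b x

/-- Standing convention: distinct occurrences of the same symbol carry distinct labels. -/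
def WellLabelled (S : Schema) : Prop := ∀ x, lsymCount S x ≤ 1

/-- Number of occurrences of a predicate symbol in a schema. -/
def predCount : Schema → ℕ → ℕ
  | .skip, _ => 0
  | .assign _ _ _ _, _ => 0
  | .seq a b, p => predCount a p + predCount b p
  | .ite q _ _ t e, p => (if q = p then 1 else 0) + predCount t p + predCount e p
  | .whil q _ _ b, p => (if q = p then 1 else 0) + predCount b p

/-- No predicate symbol occurs more than once. -/
def PredLinear (S : Schema) : Prop := ∀ p, predCount S p ≤ 1

/-- `Occurs T S`: T occurs as a subtree (statement) of S. -/
inductive Occurs : Schema → Schema → Prop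
  | refl (S : Schema) : Occurs S S
  | seqL {S T U : Schema} : Occurs S T → Occurs S (.seq T U)
  | seqR {S T U : Schema} : Occurs S U → Occurs S (.seq T U)
  | iteT {S t e : Schema} {p l args} : Occurs S t → Occurs S (.ite p l args t e)
  | iteF {S t e : Schema} {p l args} : Occurs S e → Occurs S (.ite p l args t e)
  | whilB {S b : Schema} {p l args} : Occurs S b → Occurs S (.whil p l args b)

/-- The schema contains an assignment to the variable v. -/
def AssignsTo : Schema → ℕ → Prop
  | .skip, _ => False
  | .assign y _ _ _, v => y = v
  | .seq a b, v => AssignsTo a v ∨ AssignsTo b v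
  | .ite _ _ _ t e, v => AssignsTo t v ∨ AssignsTo e v
  | .whil _ _ _ b, v => AssignsTo b v

/-- The schema contains an assignment `v := f(...)`. -/
def AssignsWith : Schema → ℕ → ℕ → Prop
  | .skip, _, _ => False
  | .assign y g _ _, f, v => g = f ∧ y = v
  | .seq a b, f, v => AssignsWith a f v ∨ AssignsWith b f v
  | .ite _ _ _ t e, f, v => AssignsWith t f v ∨ AssignsWith e f v
  | .whil _ _ _ b, f, v => AssignsWith b f v

/-- If a function symbol occurs in assignments in both parts of an if
predicate, then those assignments assign to distinct variables. -/
def IfPartsCondition (S : Schema) : Prop :=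
  ∀ p l args t e, Occurs (Schema.ite p l args t e) S →
    ∀ f v, AssignsWith t f v → AssignsWith e f v → False

/-- Special schemas: (well-labelled,) predicate-linear, free, liberal,
satisfying the condition on the two parts of each if predicate. -/
def Special (S : Schema) : Prop :=
  WellLabelled S ∧ PredLinear S ∧ Free S ∧ Liberal S ∧ IfPartsCondition S

/-- `Subschema T S`: T is obtained from S by deleting statements. -/
inductive Subschema : Schema → Schema → Prop
  | skip (S : Schema) : Subschema .skip S
  | refl (S : Schema) : Subschema S S
  | seqL (S₁ S₂ : Schema) : Subschema S₁ (.seq S₁ S₂)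
  | seqR (S₁ S₂ : Schema) : Subschema S₂ (.seq S₁ S₂)
  | seqCongrL {S' S : Schema} (T : Schema) :
      Subschema S' S → Subschema (.seq S' T) (.seq S T)
  | seqCongrR {T' T : Schema} (S : Schema) :
      Subschema T' T → Subschema (.seq S T') (.seq S T)
  | whilCongr {T' T : Schema} (p l : ℕ) (args : List ℕ) :
      Subschema T' T → Subschema (.whil p l args T') (.whil p l args T)
  | iteCongrT {T' T : Schema} (p l : ℕ) (args : List ℕ) (E : Schema) :
      Subschema T' T → Subschema (.ite p l args T' E) (.ite p l args T E)
  | iteCongrF {E' E : Schema} (p l : ℕ) (args : List ℕ) (T : Schema) :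
      Subschema E' E → Subschema (.ite p l args T E') (.ite p l args T E)
  | trans {A B C : Schema} : Subschema A B → Subschema B C → Subschema A C

/-- T is a u-slice of S (u a variable): over every domain, state and
interpretation, if S terminates then T terminates with the same final value of u. -/
def IsUSlice (S T : Schema) (u : ℕ) : Prop :=
  ∀ (D : Type) (I : Interp D) (d : ℕ → D),
    Terminates S I d →
      Terminates T I d ∧
      ∀ σ τ, TermRun S I d σ → TermRun T I d τ → execP I d σ u = execP I d τ u

/-- T is an ω-slice of S: S and T have the same termination behaviour. -/
def IsOmegaSlice (S T : Schema) : Prop :=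
  ∀ (D : Type) (I : Interp D) (d : ℕ → D), Terminates S I d ↔ Terminates T I d

/-- `IsFTrm F t`: t is an F-term, for a (nonempty) word F of function symbols. -/
inductive IsFTrm : List ℕ → Trm → Prop
  | base (f : ℕ) (ts : List Trm) : IsFTrm [f] (.app f ts)
  | step {F : List ℕ} {t : Trm} (g : ℕ) {ts : List Trm} :
      t ∈ ts → IsFTrm F t → IsFTrm (F ++ [g]) (.app g ts)

/-- `IsVFTrm v F t`: t is a vF-term. -/
inductive IsVFTrm (v : ℕ) : List ℕ → Trm → Prop
  | base : IsVFTrm v [] (.var v)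
  | step {F : List ℕ} {t : Trm} (g : ℕ) {ts : List Trm} :
      t ∈ ts → IsVFTrm v F t → IsVFTrm v (F ++ [g]) (.app g ts)

/-- The function symbol f occurs in the term t. -/
inductive OccIn (f : ℕ) : Trm → Prop
  | here (ts : List Trm) : OccIn f (.app f ts)
  | there {g : ℕ} {ts : List Trm} {t : Trm} : t ∈ ts → OccIn f t → OccIn f (.app g ts)

/-- Labelled terms: applications additionally record the label of the
assignment that created them. -/
inductive LTrm : Type
  | var : ℕ → LTrm
  | app : ℕ → ℕ → List LTrm → LTrm

def lStep (d : ℕ → LTrm) : Letter → (ℕ → LTrm)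
  | .asn y f l args => Function.update d y (LTrm.app f l (args.map d))
  | .prd _ _ _ _ => d

/-- Labelled Herbrand execution from e. -/
def lexec (σ : List Letter) : ℕ → LTrm := σ.foldl lStep LTrm.var

/-- F-terms for words F of labelled function symbols. -/
inductive IsFLTrm : List (ℕ × ℕ) → LTrm → Prop
  | base (f l : ℕ) (ts : List LTrm) : IsFLTrm [(f, l)] (.app f l ts)
  | step {F : List (ℕ × ℕ)} {t : LTrm} (g m : ℕ) {ts : List LTrm} :
      t ∈ ts → IsFLTrm F t → IsFLTrm (F ++ [(g, m)]) (.app g m ts)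

/-- `f^(l) ⤳ u` for a variable u. -/
def DepFV (S : Schema) (fl : ℕ × ℕ) (u : ℕ) : Prop :=
  ∃ σ, TerminalSegment S σ ∧ IsFLTrm [fl] (lexec σ u)

/-- `f^(l) ⤳ g^(m)` for labelled function symbols. -/
def DepFF (S : Schema) (fl gm : ℕ × ℕ) : Prop :=
  ∃ σ, PathSegment S σ ∧ ∃ w, IsFLTrm [fl, gm] (lexec σ w)

/-- `f^(l) ⤳ q^(m)` for a labelled predicate. -/
def DepFP (S : Schema) (fl : ℕ × ℕ) (q m : ℕ) : Prop :=
  ∃ σ args Z, PathSegment S (σ ++ [Letter.prd q m args Z]) ∧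
    ∃ w ∈ args, IsFLTrm [fl] (lexec σ w)

/-- `f^(l) ⤳ x` for a labelled symbol x. -/
def DepFX (S : Schema) (fl : ℕ × ℕ) : LSym → Prop
  | .fn g m => DepFF S fl (g, m)
  | .pr q m => DepFP S fl q m

/-- The labelled predicate `p^(l)` controls the labelled symbol x in S. -/
def ControlsL (S : Schema) (p l : ℕ) (x : LSym) : Prop :=
  (∃ args t e, Occurs (Schema.ite p l args t e) S ∧ (x ∈ lsymSet t ∨ x ∈ lsymSet e)) ∨
  (∃ args b, Occurs (Schema.whil p l args b) S ∧ x ∈ lsymSet b)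

/-- `p^(l)` is a while predicate of S. -/
def IsWhilePred (S : Schema) (p l : ℕ) : Prop :=
  ∃ args b, Occurs (Schema.whil p l args b) S

/-- Slicing criteria: a variable, or termination (ω). -/
inductive Crit : Type
  | var : ℕ → Crit
  | omega

/-- Weiser's labelled symbol set `Need_S(u)`. -/
inductive Need (S : Schema) : Crit → LSym → Prop
  | ofVar {v f l : ℕ} : DepFV S (f, l) v → Need S (.var v) (.fn f l)
  | ofOmega {p l : ℕ} : IsWhilePred S p l → Need S .omega (.pr p l)
  | ofDep {u : Crit} {f l : ℕ} {x : LSym} :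
      Need S u x → DepFX S (f, l) x → Need S u (.fn f l)
  | ofControl {u : Crit} {p l : ℕ} {x : LSym} :
      Need S u x → ControlsL S p l x → Need S u (.pr p l)

/-- `{i,j}` is a p(ts)-couple: i and j differ at the predicate term p(ts)
and agree on every other predicate term. -/
def PTCouple (p : ℕ) (ts : List Trm) (i j : HInterp) : Prop :=
  i p ts ≠ j p ts ∧ ∀ q ss, (q, ss) ≠ (p, ts) → i q ss = j q ss

/-- `{i,j}` is a p(ts)u-couple for S. -/
def PTUCouple (S : Schema) (p : ℕ) (ts : List Trm) (u : ℕ) (i j : HInterp) : Prop :=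
  PTCouple p ts i j ∧
  ∃ σ τ, TermRun S (herb i) eSt σ ∧ TermRun S (herb j) eSt τ ∧ hexec σ u ≠ hexec τ u

/-- `{i,j}` is a pu-couple for S. -/
def PUCouple (S : Schema) (p u : ℕ) (i j : HInterp) : Prop :=
  ∃ ts, PTUCouple S p ts u i j

/-- `{i,j}` is a pω-couple for S: a p-couple such that exactly one of the
two runs terminates. -/
def POmegaCouple (S : Schema) (p : ℕ) (i j : HInterp) : Prop :=
  ∃ ts, PTCouple p ts i j ∧
    Xor' (Terminates S (herb i) eSt) (Terminates S (herb j) eSt)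

/-- A `p^(l)u`-couple for S presented with its divergence data: the common
prefix `head` (the head of the couple), the argument vector of `p^(l)` at the
divergence point, and the two tails. -/
def LPUCoupleData (S : Schema) (p l u : ℕ) (i j : HInterp)
    (head : List Letter) (args : List ℕ) (ρt ρf : List Letter) : Prop :=
  PTCouple p (args.map (hexec head)) i j ∧
  TermRun S (herb i) eSt (head ++ Letter.prd p l args true :: ρt) ∧
  TermRun S (herb j) eSt (head ++ Letter.prd p l args false :: ρf) ∧
  hexec (head ++ Letter.prd p l args true :: ρt) u ≠
    hexec (head ++ Letter.prd p l args false :: ρf) u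

/-- A (p,X)-link in S. -/
def PLink (S : Schema) (p : ℕ) (X : Bool) (ν : List Letter) : Prop :=
  (∃ l args t e, Occurs (Schema.ite p l args t e) S ∧
     ∃ π ∈ Paths (if X then t else e), ν = Letter.prd p l args X :: π) ∨
  (∃ l args b, Occurs (Schema.whil p l args b) S ∧
     ((X = false ∧ ν = [Letter.prd p l args false]) ∨
      (X = true ∧ ∃ π ∈ Paths b, ∃ ρ ∈ Paths (Schema.whil p l args b),
        ν = Letter.prd p l args true :: (π ++ ρ))))

/-- The path-segment μ v-feeds p to q in S. -/
def VFeeds (S : Schema) (v p q : ℕ) (μ : List Letter) : Prop :=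
  ∃ X ν, PLink S p X ν ∧ ∃ m args, PathSegment S (ν ++ μ ++ [Letter.prd q m args true]) ∧
    ∃ w ∈ args, ∃ F, IsVFTrm v F (hexec μ w)

/-- There is an assignment to v in the body (while) or in the true or
false part (if) of the predicate p in S. -/
def AssignInPart (S : Schema) (p v : ℕ) : Prop :=
  (∃ l args t e, Occurs (Schema.ite p l args t e) S ∧ (AssignsTo t v ∨ AssignsTo e v)) ∨
  (∃ l args b, Occurs (Schema.whil p l args b) S ∧ AssignsTo b v)

/-- The (unlabelled) symbol of a letter (function symbols and predicate
symbols kept disjoint via a sum). -/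
def symOf : Letter → Sum ℕ ℕ
  | .asn _ f _ _ => .inl f
  | .prd p _ _ _ => .inr p

/-- The labelled symbol of a letter. -/
def lsymOf : Letter → LSym
  | .asn _ f l _ => .fn f l
  | .prd p l _ _ => .pr p l

/-- The vector of variables referenced by a letter. -/
def refsOf : Letter → List ℕ
  | .asn _ _ _ args => args
  | .prd _ _ args _ => args

/-- Statements of predicate-free schemas. -/
inductive PFStmt : Type
  | skip
  | asn (y : ℕ) (f : ℕ) (args : List ℕ)
  deriving DecidableEq

/-- A predicate-free schema is a finite sequence of skips and assignments. -/
abbrev PFS := List PFStmt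

def pfStep (d : ℕ → Trm) : PFStmt → (ℕ → Trm)
  | .skip => d
  | .asn y f args => Function.update d y (Trm.app f (args.map d))

/-- Execution of a predicate-free schema from a state d. -/
def pfExecFrom (d : ℕ → Trm) (U : PFS) : ℕ → Trm := U.foldl pfStep d

/-- `M[U]_e` for a predicate-free schema. -/
def pfExec (U : PFS) : ℕ → Trm := pfExecFrom eSt U

/-- A predicate-free schema is liberal: executed from e, no two of its
assignments produce equal term values. -/
def PFLiberal (U : PFS) : Prop :=
  ∀ A y f args B w g brgs C,
    U = A ++ PFStmt.asn y f args :: (B ++ PFStmt.asn w g brgs :: C) →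
    pfExec (A ++ [PFStmt.asn y f args]) y ≠
      pfExec (A ++ PFStmt.asn y f args :: (B ++ [PFStmt.asn w g brgs])) w

end SchemaSlicing

namespace SchemaSlicing

/-! ### The control automaton of a schema -/

/-- A program point, represented by the list of statements still to be executed. -/
abbrev Stack := List Schema

/-- Push a schema on a stack, dissolving `skip` and `seq`, so that every stack reached from
`push S []` has only assignments, if-schemas and while-schemas as entries. -/
def push : Schema → Stack → Stack
  | .skip, K => K
  | .assign y f l a, K => .assign y f l a :: K
  | .seq A B, K => push A (push B K)
  | .ite p l a t e, K => .ite p l a t e :: K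
  | .whil p l a b, K => .whil p l a b :: K

/-- One letter read from a program point. -/
inductive Step : Stack → Letter → Stack → Prop
  | asn (y f l a K) : Step (.assign y f l a :: K) (.asn y f l a) K
  | iteT (p l a t e K) : Step (.ite p l a t e :: K) (.prd p l a true) (push t K)
  | iteF (p l a t e K) : Step (.ite p l a t e :: K) (.prd p l a false) (push e K)
  | whT (p l a b K) :
      Step (.whil p l a b :: K) (.prd p l a true) (push b (.whil p l a b :: K))
  | whF (p l a b K) : Step (.whil p l a b :: K) (.prd p l a false) K

/-- A word read from a program point. -/
def Steps : Stack → List Letter → Stack → Prop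
  | K, [], K' => K = K'
  | K, c :: σ, K' => ∃ K1, Step K c K1 ∧ Steps K1 σ K'

@[simp] theorem steps_nil (K K' : Stack) : Steps K [] K' ↔ K = K' := Iff.rfl

theorem steps_cons (K : Stack) (c : Letter) (σ : List Letter) (K' : Stack) :
    Steps K (c :: σ) K' ↔ ∃ K1, Step K c K1 ∧ Steps K1 σ K' := Iff.rfl

theorem steps_append {σ τ : List Letter} {K K' : Stack} :
    Steps K (σ ++ τ) K' ↔ ∃ K1, Steps K σ K1 ∧ Steps K1 τ K' := by
  induction σ generalizing K with
  | nil => simp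
  | cons c σ ih =>
    simp only [List.cons_append, steps_cons, ih]
    constructor
    · rintro ⟨K1, h1, K2, h2, h3⟩; exact ⟨K2, ⟨K1, h1, h2⟩, h3⟩
    · rintro ⟨K2, ⟨K1, h1, h2⟩, h3⟩; exact ⟨K1, h1, K2, h2, h3⟩

theorem step_det {K K1 K2 : Stack} {c : Letter} (h1 : Step K c K1) (h2 : Step K c K2) :
    K1 = K2 := by
  cases h1 <;> cases h2 <;> rfl

theorem steps_det {σ : List Letter} {K K1 K2 : Stack} (h1 : Steps K σ K1)
    (h2 : Steps K σ K2) : K1 = K2 := by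
  induction σ generalizing K with
  | nil => exact h1.symm.trans h2
  | cons c σ ih =>
    obtain ⟨A, a1, a2⟩ := h1
    obtain ⟨B, b1, b2⟩ := h2
    cases step_det a1 b1
    exact ih a2 b2

theorem step_nil {c : Letter} {K : Stack} : ¬ Step [] c K := by
  intro h; cases h

theorem steps_empty {σ : List Letter} {K : Stack} (h : Steps [] σ K) : σ = [] := by
  cases σ with
  | nil => rfl
  | cons c σ => obtain ⟨A, a1, _⟩ := h; exact absurd a1 step_nil

/-- At a program point, two readable letters differ at most in the outcome of a predicate. -/
theorem step_alt {K K1 K2 : Stack} {c c' : Letter} (h1 : Step K c K1) (h2 : Step K c' K2)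
    (hne : c ≠ c') : ∃ p l a b, c = .prd p l a b ∧ c' = .prd p l a (!b) := by
  cases h1 <;> cases h2 <;> simp_all

theorem step_flip {K K1 : Stack} {p l : ℕ} {a : List ℕ} {b : Bool}
    (h : Step K (.prd p l a b) K1) (b' : Bool) : ∃ K2, Step K (.prd p l a b') K2 := by
  cases h <;> cases b' <;> exact ⟨_, by constructor⟩

theorem step_prd_same {K K1 K2 : Stack} {p l q m : ℕ} {a a' : List ℕ} {b b' : Bool}
    (h : Step K (.prd p l a b) K1) (h' : Step K (.prd q m a' b') K2) :
    p = q ∧ l = m ∧ a = a' := by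
  cases h <;> cases h' <;> simp

theorem path_steps : ∀ (X : Schema) (K : Stack) (x : List Letter), x ∈ Paths X →
    Steps (push X K) x K := by
  intro X
  induction X with
  | skip => intro K x hx; cases hx; rfl
  | assign y f l a => intro K x hx; cases hx; exact ⟨K, .asn .., rfl⟩
  | seq A B ihA ihB =>
    rintro K x ⟨x1, h1, x2, h2, rfl⟩
    exact steps_append.2 ⟨_, ihA _ _ h1, ihB _ _ h2⟩
  | ite p l a t e iht ihe =>
    rintro K x (⟨x1, h1, rfl⟩ | ⟨x1, h1, rfl⟩)
    · exact ⟨_, .iteT .., iht _ _ h1⟩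
    · exact ⟨_, .iteF .., ihe _ _ h1⟩
  | whil p l a b ih =>
    rintro K x ⟨n, hn⟩
    induction n generalizing x with
    | zero => cases hn; exact ⟨_, .whF .., rfl⟩
    | succ n ihn =>
      obtain ⟨x1, h1, y, hy, rfl⟩ := hn
      exact ⟨_, .whT .., steps_append.2 ⟨_, ih _ _ h1, ihn _ hy⟩⟩

theorem steps_path : ∀ (X : Schema) (K : Stack) (σ : List Letter), Steps (push X K) σ [] →
    ∃ x ∈ Paths X, ∃ y, σ = x ++ y ∧ Steps K y [] := by
  intro X
  induction X with
  | skip => intro K σ h; exact ⟨[], rfl, σ, rfl, h⟩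
  | assign y f l a =>
    intro K σ h
    cases σ with
    | nil => cases h
    | cons c σ =>
      obtain ⟨K1, h1, h2⟩ := h
      cases h1
      exact ⟨[_], rfl, σ, rfl, h2⟩
  | seq A B ihA ihB =>
    intro K σ h
    obtain ⟨x, hx, y, rfl, h1⟩ := ihA _ _ h
    obtain ⟨x', hx', y', rfl, h2⟩ := ihB _ _ h1
    exact ⟨x ++ x', ⟨x, hx, x', hx', rfl⟩, y', by simp, h2⟩
  | ite p l a t e iht ihe =>
    intro K σ h
    cases σ with
    | nil => cases h
    | cons c σ =>
      obtain ⟨K1, h1, h2⟩ := h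
      cases h1 with
      | iteT =>
        obtain ⟨x, hx, y, rfl, h⟩ := iht _ _ h2
        exact ⟨_, Or.inl ⟨x, hx, rfl⟩, y, rfl, h⟩
      | iteF =>
        obtain ⟨x, hx, y, rfl, h⟩ := ihe _ _ h2
        exact ⟨_, Or.inr ⟨x, hx, rfl⟩, y, rfl, h⟩
  | whil p l a b ih =>
    intro K σ h
    induction hn : σ.length using Nat.strong_induction_on generalizing σ with
    | _ n ihn =>
      cases σ with
      | nil => cases h
      | cons c σ =>
        obtain ⟨K1, h1, h2⟩ := h
        cases h1 with
        | whF => exact ⟨[_], ⟨0, rfl⟩, σ, rfl, h2⟩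
        | whT =>
          obtain ⟨x, hx, y, rfl, h⟩ := ih _ _ h2
          obtain ⟨x', ⟨k, hk⟩, y', rfl, h'⟩ := ihn y.length (by subst hn; simp) y h rfl
          exact ⟨_, ⟨k + 1, x, hx, x', hk, rfl⟩, y', by simp, h'⟩

/-- The initial program point of `S`. -/
abbrev init (S : Schema) : Stack := push S []

theorem mem_paths {S : Schema} {σ : List Letter} : σ ∈ Paths S ↔ Steps (init S) σ [] := by
  refine ⟨path_steps S [] σ, fun h => ?_⟩
  obtain ⟨x, hx, y, rfl, h2⟩ := steps_path S [] σ h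
  rw [steps_empty h2]; simpa using hx

theorem paths_nonempty : ∀ X : Schema, ∃ x, x ∈ Paths X := by
  intro X
  induction X with
  | skip => exact ⟨[], rfl⟩
  | assign y f l a => exact ⟨_, rfl⟩
  | seq A B ihA ihB =>
    obtain ⟨x, hx⟩ := ihA
    obtain ⟨y, hy⟩ := ihB
    exact ⟨_, x, hx, y, hy, rfl⟩
  | ite p l a t e iht ihe =>
    obtain ⟨x, hx⟩ := iht
    exact ⟨_, Or.inl ⟨x, hx, rfl⟩⟩
  | whil p l a b ih => exact ⟨_, 0, rfl⟩

/-- Every entry of the stack is an assignment, an if-schema or a while-schema. -/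
def AtomStack (K : Stack) : Prop := ∀ X ∈ K, ∀ K', push X K' = X :: K'

theorem atom_push : ∀ (X : Schema) (K : Stack), AtomStack K → AtomStack (push X K) := by
  intro X
  induction X with
  | skip => intro K h; exact h
  | seq A B ihA ihB => intro K h; exact ihA _ (ihB _ h)
  | _ =>
    intro K h Y hY
    rcases List.mem_cons.1 hY with rfl | hY
    · intro K'; rfl
    · exact h Y hY

theorem atom_step {K K' : Stack} {c : Letter} (h : Step K c K') (hK : AtomStack K) :
    AtomStack K' := by
  have tl : ∀ {X : Schema} {L : Stack}, AtomStack (X :: L) → AtomStack L :=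
    fun h Y hY => h Y (List.mem_cons_of_mem _ hY)
  cases h with
  | asn => exact tl hK
  | iteT => exact atom_push _ _ (tl hK)
  | iteF => exact atom_push _ _ (tl hK)
  | whT => exact atom_push _ _ hK
  | whF => exact tl hK

theorem atom_steps {σ : List Letter} {K K' : Stack} (h : Steps K σ K') (hK : AtomStack K) :
    AtomStack K' := by
  induction σ generalizing K with
  | nil => cases h; exact hK
  | cons c σ ih =>
    obtain ⟨A, a1, a2⟩ := h
    exact ih a2 (atom_step a1 hK)

theorem atom_complete : ∀ K : Stack, AtomStack K → ∃ τ, Steps K τ [] := by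
  intro K
  induction K with
  | nil => intro _; exact ⟨[], rfl⟩
  | cons X K ih =>
    intro h
    obtain ⟨τ, hτ⟩ := ih fun Y hY => h Y (List.mem_cons_of_mem _ hY)
    obtain ⟨x, hx⟩ := paths_nonempty X
    refine ⟨x ++ τ, steps_append.2 ⟨K, ?_, hτ⟩⟩
    have := path_steps X K x hx
    rwa [h X (List.mem_cons_self ..)] at this

theorem atom_init (S : Schema) : AtomStack (init S) :=
  atom_push _ _ (by intro X hX; cases hX)

theorem complete {S : Schema} {σ : List Letter} {K : Stack} (h : Steps (init S) σ K) :
    ∃ τ, Steps K τ [] := atom_complete K (atom_steps h (atom_init S))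

theorem mem_prePaths {S : Schema} {σ : List Letter} :
    σ ∈ PrePaths S ↔ ∃ K, Steps (init S) σ K := by
  constructor
  · rintro ⟨τ, ⟨ρ, rfl⟩, h⟩
    obtain ⟨K, h1, _⟩ := steps_append.1 (mem_paths.1 h)
    exact ⟨K, h1⟩
  · rintro ⟨K, h⟩
    obtain ⟨τ, hτ⟩ := complete h
    exact ⟨σ ++ τ, ⟨τ, rfl⟩, mem_paths.2 (steps_append.2 ⟨K, h, hτ⟩)⟩

/-- A size of schemas that decreases along every letter except `⟨p, true⟩`. -/
def wt : Schema → ℕ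
  | .skip => 0
  | .assign _ _ _ _ => 1
  | .seq A B => wt A + wt B
  | .ite _ _ _ t e => 1 + wt t + wt e
  | .whil _ _ _ _ => 1

theorem wt_push : ∀ (X : Schema) (K : Stack),
    ((push X K).map wt).sum = wt X + (K.map wt).sum := by
  intro X
  induction X with
  | skip => intro K; simp [push, wt]
  | seq A B ihA ihB => intro K; simp [push, wt, ihA, ihB, add_assoc]
  | _ => intro K; simp [push]

theorem wt_steps {σ : List Letter} {K K' : Stack} (h : Steps K σ K')
    (hf : ∀ p l a, Letter.prd p l a true ∉ σ) :
    (K'.map wt).sum + σ.length ≤ (K.map wt).sum := by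
  induction σ generalizing K with
  | nil => cases h; simp
  | cons c σ ih =>
    obtain ⟨A, a1, a2⟩ := h
    have h1 := ih a2 fun p l a hm => hf p l a (List.mem_cons_of_mem _ hm)
    have h2 : (A.map wt).sum + 1 ≤ (K.map wt).sum := by
      cases a1 with
      | asn => simp [wt]
      | iteT => exact absurd (List.mem_cons_self ..) (hf _ _ _)
      | iteF => simp [wt, wt_push]
      | whT => exact absurd (List.mem_cons_self ..) (hf _ _ _)
      | whF => simp [wt]
    simp only [List.length_cons]; omega

/-- A program point can only be revisited after a predicate has evaluated to `true`: leaving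
every loop at once never leads back. -/
theorem no_return {c : Letter} {σ : List Letter} {K : Stack} (h : Steps K (c :: σ) K) :
    ∃ p l a, Letter.prd p l a true ∈ c :: σ := by
  by_contra hc
  push Not at hc
  have := wt_steps h hc
  simp at this

/-! ### A predicate, or a labelled assignment, determines its program point -/

/-- The program points inside `X`, when `X` is followed by the stack `K`. -/
def At : Schema → Stack → Stack → Prop
  | .skip, _, _ => False
  | .assign y f l a, K, C => C = .assign y f l a :: K
  | .seq A B, K, C => At A (push B K) C ∨ At B K C
  | .ite p l a t e, K, C => C = .ite p l a t e :: K ∨ At t K C ∨ At e K C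
  | .whil p l a b, K, C => C = .whil p l a b :: K ∨ At b (.whil p l a b :: K) C

theorem at_push : ∀ (X : Schema) (K : Stack), push X K = K ∨ At X K (push X K) := by
  intro X
  induction X with
  | skip => intro K; exact Or.inl rfl
  | assign y f l a => intro K; exact Or.inr rfl
  | seq A B ihA ihB =>
    intro K
    rcases ihA (push B K) with h | h
    · rcases ihB K with h' | h'
      · left; simp only [push]; rw [h, h']
      · right; simp only [push]; rw [h]; exact Or.inr h'
    · exact Or.inr (Or.inl h)
  | ite p l a t e _ _ => intro K; exact Or.inr (Or.inl rfl)
  | whil p l a b _ => intro K; exact Or.inr (Or.inl rfl)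

theorem at_step : ∀ (X : Schema) (K C C' : Stack) (c : Letter), At X K C → Step C c C' →
    C' = K ∨ At X K C' := by
  intro X
  induction X with
  | skip => intro K C C' c h; exact h.elim
  | assign y f l a => intro K C C' c h hs; cases h; cases hs; exact Or.inl rfl
  | seq A B ihA ihB =>
    rintro K C C' c (h | h) hs
    · rcases ihA _ _ _ _ h hs with rfl | h'
      · rcases at_push B K with h' | h'
        · exact Or.inl h'
        · exact Or.inr (Or.inr h')
      · exact Or.inr (Or.inl h')
    · rcases ihB _ _ _ _ h hs with rfl | h'
      · exact Or.inl rfl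
      · exact Or.inr (Or.inr h')
  | ite p l a t e iht ihe =>
    rintro K C C' c (rfl | h | h) hs
    · cases hs with
      | iteT => exact (at_push t K).imp id fun h => Or.inr (Or.inl h)
      | iteF => exact (at_push e K).imp id fun h => Or.inr (Or.inr h)
    · exact (iht _ _ _ _ h hs).imp id fun h => Or.inr (Or.inl h)
    · exact (ihe _ _ _ _ h hs).imp id fun h => Or.inr (Or.inr h)
  | whil p l a b ih =>
    rintro K C C' c (rfl | h) hs
    · cases hs with
      | whT => exact Or.inr (at_push b _)
      | whF => exact Or.inl rfl
    · exact Or.inr (ih _ _ _ _ h hs)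

theorem at_reach {S : Schema} {σ : List Letter} {K : Stack} (h : Steps (init S) σ K) :
    K = [] ∨ At S [] K := by
  have gen : ∀ (σ : List Letter) (C : Stack), (C = [] ∨ At S [] C) → Steps C σ K →
      K = [] ∨ At S [] K := by
    intro σ
    induction σ with
    | nil => rintro C hC h; cases h; exact hC
    | cons c σ ih =>
      rintro C hC ⟨A, a1, a2⟩
      rcases hC with rfl | hC
      · exact absurd a1 step_nil
      · exact ih A (at_step _ _ _ _ _ hC a1) a2
  exact gen σ _ (at_push S []) h

/-- Number of occurrences in a schema of statements satisfying `H`. -/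
def cnt (H : Schema → Bool) : Schema → ℕ
  | .skip => 0
  | .assign y f l a => (H (.assign y f l a)).toNat
  | .seq A B => cnt H A + cnt H B
  | .ite p l a t e => (H (.ite p l a t e)).toNat + cnt H t + cnt H e
  | .whil p l a b => (H (.whil p l a b)).toNat + cnt H b

theorem at_cnt (H : Schema → Bool) : ∀ (X : Schema) (K K' : Stack) (Y : Schema),
    At X K (Y :: K') → H Y = true → 1 ≤ cnt H X := by
  intro X
  induction X with
  | skip => intro K K' Y h; exact h.elim
  | assign y f l a => intro K K' Y h hY; cases h; simp [cnt, hY]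
  | seq A B ihA ihB =>
    rintro K K' Y (h | h) hY
    · have := ihA _ _ _ h hY; simp only [cnt]; omega
    · have := ihB _ _ _ h hY; simp only [cnt]; omega
  | ite p l a t e iht ihe =>
    rintro K K' Y (h | h | h) hY
    · cases h; simp [cnt, hY]; omega
    · have := iht _ _ _ h hY; simp only [cnt]; omega
    · have := ihe _ _ _ h hY; simp only [cnt]; omega
  | whil p l a b ih =>
    rintro K K' Y (h | h) hY
    · cases h; simp [cnt, hY]
    · have := ih _ _ _ h hY; simp only [cnt]; omega

theorem at_unique (H : Schema → Bool) : ∀ (X : Schema) (K K1 K2 : Stack) (Y1 Y2 : Schema),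
    cnt H X ≤ 1 → At X K (Y1 :: K1) → At X K (Y2 :: K2) → H Y1 = true → H Y2 = true →
    Y1 :: K1 = Y2 :: K2 := by
  intro X
  induction X with
  | skip => intro K K1 K2 Y1 Y2 _ h; exact h.elim
  | assign y f l a => intro K K1 K2 Y1 Y2 _ h h' _ _; exact h.trans h'.symm
  | seq A B ihA ihB =>
    rintro K K1 K2 Y1 Y2 hc (h | h) (h' | h') H1 H2 <;> simp only [cnt] at hc
    · exact ihA _ _ _ _ _ (by omega) h h' H1 H2
    · have := at_cnt H _ _ _ _ h H1; have := at_cnt H _ _ _ _ h' H2; omega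
    · have := at_cnt H _ _ _ _ h H1; have := at_cnt H _ _ _ _ h' H2; omega
    · exact ihB _ _ _ _ _ (by omega) h h' H1 H2
  | ite p l a t e iht ihe =>
    rintro K K1 K2 Y1 Y2 hc (h | h | h) (h' | h' | h') H1 H2 <;> simp only [cnt] at hc
    · exact h.trans h'.symm
    · cases h; have := at_cnt H _ _ _ _ h' H2; simp [H1] at hc; omega
    · cases h; have := at_cnt H _ _ _ _ h' H2; simp [H1] at hc; omega
    · cases h'; have := at_cnt H _ _ _ _ h H1; simp [H2] at hc; omega
    · exact iht _ _ _ _ _ (by omega) h h' H1 H2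
    · have := at_cnt H _ _ _ _ h H1; have := at_cnt H _ _ _ _ h' H2; omega
    · cases h'; have := at_cnt H _ _ _ _ h H1; simp [H2] at hc; omega
    · have := at_cnt H _ _ _ _ h H1; have := at_cnt H _ _ _ _ h' H2; omega
    · exact ihe _ _ _ _ _ (by omega) h h' H1 H2
  | whil p l a b ih =>
    rintro K K1 K2 Y1 Y2 hc (h | h) (h' | h') H1 H2 <;> simp only [cnt] at hc
    · exact h.trans h'.symm
    · cases h; have := at_cnt H _ _ _ _ h' H2; simp [H1] at hc; omega
    · cases h'; have := at_cnt H _ _ _ _ h H1; simp [H2] at hc; omega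
    · exact ih _ _ _ _ _ (by omega) h h' H1 H2

/-- The statement is an if- or while-schema with predicate `p`. -/
def isPred (p : ℕ) : Schema → Bool
  | .ite q _ _ _ _ => q == p
  | .whil q _ _ _ => q == p
  | _ => false

/-- The statement is an assignment with labelled symbol `f^(l)`. -/
def isAsn (f l : ℕ) : Schema → Bool
  | .assign _ g m _ => g == f && m == l
  | _ => false

theorem cnt_pred (p : ℕ) : ∀ X, cnt (isPred p) X = predCount X p := by
  intro X
  induction X with
  | skip => rfl
  | assign y f l a => rfl
  | seq A B ihA ihB => simp [cnt, predCount, ihA, ihB]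
  | ite q l a t e iht ihe => by_cases h : q = p <;> simp [cnt, predCount, iht, ihe, isPred, h]
  | whil q l a b ih => by_cases h : q = p <;> simp [cnt, predCount, ih, isPred, h]

theorem cnt_asn (f l : ℕ) : ∀ X, cnt (isAsn f l) X = lsymCount X (.fn f l) := by
  intro X
  induction X with
  | skip => rfl
  | assign y g m a =>
    by_cases h : g = f ∧ m = l
    · simp [cnt, lsymCount, isAsn, h.1, h.2]
    · have h' : ¬ (f = g ∧ l = m) := fun e => h ⟨e.1.symm, e.2.symm⟩
      have h2 : (g == f && m == l) = false := by simpa using h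
      simp [cnt, lsymCount, isAsn, h', h2]
  | seq A B ihA ihB => simp [cnt, lsymCount, ihA, ihB]
  | ite q m a t e iht ihe => simp [cnt, lsymCount, iht, ihe, isAsn]
  | whil q m a b ih => simp [cnt, lsymCount, ih, isAsn]

theorem pred_point {S : Schema} (hS : PredLinear S) {σ σ' : List Letter}
    {K K' K1 K1' : Stack} {p l l' : ℕ} {a a' : List ℕ} {b b' : Bool}
    (h : Steps (init S) σ K) (h' : Steps (init S) σ' K')
    (s : Step K (.prd p l a b) K1) (s' : Step K' (.prd p l' a' b') K1') : K = K' := by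
  have hK : ∀ {K K1 : Stack} {l a b}, Step K (.prd p l a b) K1 →
      ∃ Y L, K = Y :: L ∧ isPred p Y = true := by
    intro K K1 l a b s
    cases s <;> exact ⟨_, _, rfl, by simp [isPred]⟩
  obtain ⟨Y, L, rfl, hY⟩ := hK s
  obtain ⟨Y', L', rfl, hY'⟩ := hK s'
  have A := (at_reach h).resolve_left (by simp)
  have A' := (at_reach h').resolve_left (by simp)
  exact at_unique (isPred p) S [] _ _ _ _ (by rw [cnt_pred]; exact hS p) A A' hY hY'

theorem asn_point {S : Schema} (hS : WellLabelled S) {σ σ' : List Letter}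
    {K K' K1 K1' : Stack} {f l y y' : ℕ} {a a' : List ℕ}
    (h : Steps (init S) σ K) (h' : Steps (init S) σ' K')
    (s : Step K (.asn y f l a) K1) (s' : Step K' (.asn y' f l a') K1') : K = K' := by
  have hK : ∀ {K K1 : Stack} {y a}, Step K (.asn y f l a) K1 →
      ∃ Y L, K = Y :: L ∧ isAsn f l Y = true := by
    intro K K1 y a s
    cases s; exact ⟨_, _, rfl, by simp [isAsn]⟩
  obtain ⟨Y, L, rfl, hY⟩ := hK s
  obtain ⟨Y', L', rfl, hY'⟩ := hK s'
  have A := (at_reach h).resolve_left (by simp)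
  have A' := (at_reach h').resolve_left (by simp)
  exact at_unique (isAsn f l) S [] _ _ _ _ (by rw [cnt_asn]; exact hS _) A A' hY hY'

end SchemaSlicing

namespace SchemaSlicing

/-! ### Herbrand execution and the tests made along a path -/

/-- A predicate term `p(ts)`. -/
abbrev Key := ℕ × List Trm

/-- Herbrand states. -/
abbrev St := ℕ → Trm

/-- Effect of one letter on a Herbrand state. -/
def st (s : St) : Letter → St
  | .asn y f _ a => Function.update s y (.app f (a.map s))
  | .prd _ _ _ _ => s

/-- Herbrand execution of a word from the state `s`. -/
def ex : St → List Letter → St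
  | s, [] => s
  | s, c :: σ => ex (st s c) σ

/-- The predicate terms tested along a word executed from `s`, with their outcomes. -/
def tr : St → List Letter → List (Key × Bool)
  | _, [] => []
  | s, .asn y f l a :: σ => tr (st s (.asn y f l a)) σ
  | s, .prd p _ a b :: σ => ((p, a.map s), b) :: tr s σ

/-- The interpretation `i` evaluates all tests of `σ`, executed from `s`, as `σ` prescribes. -/
def Agr (i : Key → Bool) (s : St) (σ : List Letter) : Prop := ∀ x ∈ tr s σ, i x.1 = x.2

@[simp] theorem ex_nil (s : St) : ex s [] = s := rfl
@[simp] theorem ex_cons (s : St) (c σ) : ex s (c :: σ) = ex (st s c) σ := rfl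
@[simp] theorem st_prd (s : St) (p l a b) : st s (.prd p l a b) = s := rfl
@[simp] theorem tr_nil (s : St) : tr s [] = [] := rfl
@[simp] theorem tr_prd (s : St) (p l a b σ) :
    tr s (.prd p l a b :: σ) = ((p, a.map s), b) :: tr s σ := rfl
@[simp] theorem tr_asn (s : St) (y f l a σ) :
    tr s (.asn y f l a :: σ) = tr (st s (.asn y f l a)) σ := rfl

@[simp] theorem ex_append (s : St) (σ τ : List Letter) :
    ex s (σ ++ τ) = ex (ex s σ) τ := by
  induction σ generalizing s with
  | nil => rfl
  | cons c σ ih => exact ih _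

@[simp] theorem tr_append (s : St) (σ τ : List Letter) :
    tr s (σ ++ τ) = tr s σ ++ tr (ex s σ) τ := by
  induction σ generalizing s with
  | nil => rfl
  | cons c σ ih => cases c <;> simp [ih]

theorem mem_tr {s : St} {σ : List Letter} {x : Key × Bool} : x ∈ tr s σ ↔
    ∃ σ1 p l a b σ2, σ = σ1 ++ .prd p l a b :: σ2 ∧ x = ((p, a.map (ex s σ1)), b) := by
  constructor
  · induction σ generalizing s with
    | nil => intro h; cases h
    | cons c σ ih =>
      intro h
      cases c with
      | asn y f l a =>
        obtain ⟨σ1, p, l', a', b, σ2, rfl, rfl⟩ := ih h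
        exact ⟨.asn y f l a :: σ1, p, l', a', b, σ2, rfl, rfl⟩
      | prd p l a b =>
        rcases List.mem_cons.1 h with rfl | h
        · exact ⟨[], p, l, a, b, σ, rfl, rfl⟩
        · obtain ⟨σ1, p', l', a', b', σ2, rfl, rfl⟩ := ih h
          exact ⟨.prd p l a b :: σ1, p', l', a', b', σ2, rfl, rfl⟩
  · rintro ⟨σ1, p, l, a, b, σ2, rfl, rfl⟩
    simp

theorem agr_append {i : Key → Bool} {s : St} {σ τ : List Letter} :
    Agr i s (σ ++ τ) ↔ Agr i s σ ∧ Agr i (ex s σ) τ := by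
  simp only [Agr, tr_append, List.mem_append]
  exact ⟨fun h => ⟨fun x hx => h x (Or.inl hx), fun x hx => h x (Or.inr hx)⟩,
    fun h x hx => hx.elim (h.1 x) (h.2 x)⟩

@[simp] theorem agr_nil {i : Key → Bool} {s : St} : Agr i s [] := by
  intro x hx; cases hx

@[simp] theorem agr_prd {i : Key → Bool} {s : St} {p l a b σ} :
    Agr i s (.prd p l a b :: σ) ↔ i (p, a.map s) = b ∧ Agr i s σ := by
  simp [Agr]

@[simp] theorem agr_asn {i : Key → Bool} {s : St} {y f l a σ} :
    Agr i s (.asn y f l a :: σ) ↔ Agr i (st s (.asn y f l a)) σ := Iff.rfl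

theorem execP_herb (h : HInterp) (s : St) (σ : List Letter) :
    execP (herb h) s σ = ex s σ := by
  induction σ generalizing s with
  | nil => rfl
  | cons c σ ih =>
    have : stepL (herb h) s c = st s c := by cases c <;> rfl
    change execP (herb h) (stepL (herb h) s c) σ = _
    rw [ih, this]; rfl

theorem hexec_eq (σ : List Letter) : hexec σ = ex eSt σ := execP_herb _ _ _

/-- The Herbrand interpretation given by a truth assignment to predicate terms. -/
def toH (i : Key → Bool) : HInterp := fun p ts => i (p, ts)

theorem agrees_iff (h : HInterp) (s : St) (σ : List Letter) :
    Agrees (herb h) s σ ↔ Agr (fun k => h k.1 k.2) s σ := by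
  constructor
  · intro H x hx
    obtain ⟨σ1, p, l, a, b, σ2, rfl, rfl⟩ := mem_tr.1 hx
    have := H σ1 p l a b ⟨σ2, by simp⟩
    rwa [execP_herb] at this
  · rintro H τ p l a b ⟨σ2, rfl⟩
    rw [execP_herb]
    exact H ((p, a.map (ex s τ)), b) (mem_tr.2 ⟨τ, p, l, a, b, σ2, by simp, rfl⟩)

theorem agrees_toH (i : Key → Bool) (s : St) (σ : List Letter) :
    Agrees (herb (toH i)) s σ ↔ Agr i s σ := agrees_iff _ _ _

/-! ### Freeness: no predicate term is tested twice -/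

variable {S : Schema} {u : ℕ}

theorem free_agr (hS : Special S) {σ K} (h : Steps (init S) σ K) :
    ∃ i : Key → Bool, Agr i eSt σ := by
  obtain ⟨i, hi⟩ := hS.2.2.1 σ (mem_prePaths.2 ⟨K, h⟩)
  exact ⟨_, (agrees_iff _ _ _).1 hi⟩

theorem keys_nodup (hS : Special S) {σ K} (h : Steps (init S) σ K) :
    ((tr eSt σ).map Prod.fst).Nodup := by
  induction σ using List.reverseRecOn generalizing K with
  | nil => simp
  | append_singleton σ c ih =>
    obtain ⟨K1, h1, K2, h2, _⟩ := steps_append.1 h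
    have ih' := ih h1
    cases c with
    | asn y f l a => simpa using ih'
    | prd p l a b =>
      rw [tr_append, List.map_append, List.nodup_append]
      refine ⟨ih', by simp, ?_⟩
      rintro k hk k' hk' rfl
      simp only [tr_prd, tr_nil, List.map_cons, List.map_nil, List.mem_singleton] at hk'
      obtain ⟨⟨k', b0⟩, hk0, rfl⟩ := List.mem_map.1 hk
      obtain ⟨K3, h3⟩ := step_flip h2 (!b0)
      obtain ⟨i, hi⟩ := free_agr hS (σ := σ ++ [.prd p l a (!b0)]) (steps_append.2 ⟨K1, h1, K3, h3, rfl⟩)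
      obtain ⟨a1, a2⟩ := agr_append.1 hi
      have e1 := a1 _ hk0
      have e2 := (agr_prd.1 a2).1
      simp only at hk' e1
      rw [← hk', e1] at e2
      cases b0 <;> simp at e2

theorem val_unique {L : List (Key × Bool)} (h : (L.map Prod.fst).Nodup) {k : Key} {b b' : Bool}
    (h1 : (k, b) ∈ L) (h2 : (k, b') ∈ L) : b = b' := by
  have := List.inj_on_of_nodup_map h h1 h2 rfl
  exact (Prod.mk.inj this).2

/-- A predicate term tested along a reachable word gets a single value. -/
theorem key_unique (hS : Special S) {σ K} (h : Steps (init S) σ K) {k : Key} {b b' : Bool}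
    (h1 : (k, b) ∈ tr eSt σ) (h2 : (k, b') ∈ tr eSt σ) : b = b' :=
  val_unique (keys_nodup hS h) h1 h2

/-- A test made after a head `g` is not made within `g`. -/
theorem key_fresh (hS : Special S) {g μ K} (h : Steps (init S) (g ++ μ) K) {k : Key}
    {b b' : Bool} (h1 : (k, b) ∈ tr eSt g) (h2 : (k, b') ∈ tr (ex eSt g) μ) : False := by
  have := keys_nodup hS h
  rw [tr_append, List.map_append, List.nodup_append] at this
  exact this.2.2 k (List.mem_map.2 ⟨_, h1, rfl⟩) k (List.mem_map.2 ⟨_, h2, rfl⟩) rfl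

/-- As `key_fresh`, with the second word split off as two consecutive segments. -/
theorem key_fresh2 (hS : Special S) {g μ ν K} (h : Steps (init S) (g ++ (μ ++ ν)) K) {k : Key}
    {b b' : Bool} (h1 : (k, b) ∈ tr (ex eSt g) μ) (h2 : (k, b') ∈ tr (ex (ex eSt g) μ) ν) :
    False := by
  rw [← List.append_assoc] at h
  refine key_fresh hS h (k := k) (b := b) (b' := b') ?_ (by simpa using h2)
  simp [h1]

/-! ### Liberality: distinct variables hold distinct terms, and heads can be cancelled -/

/-- No letter of `σ` assigns to `v`. -/
def Unasg (v : ℕ) (σ : List Letter) : Prop := ∀ f l a, Letter.asn v f l a ∉ σ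

theorem ex_unasg {v : ℕ} {σ : List Letter} (h : Unasg v σ) (s : St) : ex s σ v = s v := by
  induction σ generalizing s with
  | nil => rfl
  | cons c σ ih =>
    rw [ex_cons, ih fun f l a hm => h f l a (List.mem_cons_of_mem _ hm)]
    cases c with
    | prd p l a b => rfl
    | asn y f l a =>
      have : v ≠ y := by rintro rfl; exact h f l a (List.mem_cons_self ..)
      simp [st, this]

theorem last_asn (v : ℕ) (σ : List Letter) : Unasg v σ ∨
    ∃ σ1 f l a σ2, σ = σ1 ++ .asn v f l a :: σ2 ∧ Unasg v σ2 := by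
  induction σ with
  | nil => left; intro f l a h; cases h
  | cons c σ ih =>
    rcases ih with h | ⟨σ1, f, l, a, σ2, rfl, h⟩
    · by_cases hc : ∃ f l a, c = .asn v f l a
      · obtain ⟨f, l, a, rfl⟩ := hc
        exact Or.inr ⟨[], f, l, a, σ, rfl, h⟩
      · left
        intro f l a hm
        rcases List.mem_cons.1 hm with e | hm
        · exact hc ⟨f, l, a, e.symm⟩
        · exact h f l a hm
    · exact Or.inr ⟨c :: σ1, f, l, a, σ2, rfl, h⟩

theorem ex_last {v : ℕ} {σ1 σ2 : List Letter} {f l a} (h : Unasg v σ2) (s : St) :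
    ex s (σ1 ++ .asn v f l a :: σ2) v = .app f (a.map (ex s σ1)) := by
  rw [ex_append, ex_cons, ex_unasg h]; simp [st]

/-- A newly assigned term differs from every term held earlier. -/
theorem lib_new (hS : Special S) {σ κ K w g m b} (v : ℕ)
    (h : Steps (init S) (σ ++ (κ ++ [.asn w g m b])) K) :
    ex eSt σ v ≠ ex eSt (σ ++ (κ ++ [.asn w g m b])) w := by
  rcases last_asn v σ with hv | ⟨σ1, f, l, a, σ2, rfl, hv⟩
  · rw [ex_unasg hv]; simp [st, eSt]
  · have e : σ1 ++ Letter.asn v f l a :: σ2 ++ (κ ++ [.asn w g m b]) =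
        σ1 ++ Letter.asn v f l a :: ((σ2 ++ κ) ++ [.asn w g m b]) := by simp
    rw [e] at h ⊢
    obtain ⟨i, hi⟩ := free_agr hS h
    have := hS.2.2.2.1 (toH i) σ1 (σ2 ++ κ) v f l a w g m b (mem_prePaths.2 ⟨K, h⟩)
      ((agrees_toH _ _ _).2 hi)
    rw [hexec_eq, hexec_eq] at this
    rw [ex_last hv]
    rw [ex_append] at this
    simpa [st] using this

theorem lib_ne (hS : Special S) {σ K} (h : Steps (init S) σ K) {v w : ℕ} (hne : v ≠ w) :
    ex eSt σ v ≠ ex eSt σ w := by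
  induction σ using List.reverseRecOn generalizing K with
  | nil => simpa [eSt] using hne
  | append_singleton σ c ih =>
    obtain ⟨K1, h1, h2⟩ := steps_append.1 h
    have ih' := ih h1
    cases c with
    | prd p l a b => simpa using ih'
    | asn y f l a =>
      have hn : ∀ z, z ≠ y → ex eSt (σ ++ [Letter.asn y f l a]) z = ex eSt σ z := by
        intro z hz; simp [st, hz]
      by_cases hv : v = y
      · subst hv
        rw [hn w (Ne.symm hne)]
        exact (lib_new hS (κ := []) w h).symm
      · rw [hn v hv]
        by_cases hw : w = y
        · subst hw
          exact lib_new hS (κ := []) v h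
        · rw [hn w hw]; exact ih'

theorem map_transfer {F G F' G' : ℕ → Trm} (H : ∀ x y, F x = G y → F' x = G' y) :
    ∀ a a' : List ℕ, a.map F = a'.map G → a.map F' = a'.map G' := by
  intro a
  induction a with
  | nil => intro a' h; cases a' with
    | nil => rfl
    | cons y a' => simp at h
  | cons x a ih => intro a' h; cases a' with
    | nil => simp at h
    | cons y a' =>
      simp only [List.map_cons, List.cons.injEq] at h ⊢
      exact ⟨H _ _ h.1, ih a' h.2⟩

theorem last_cases (ρ : List Letter) (z : ℕ) : ρ = [] ∨
    (∃ ρ' f l a, ρ = ρ' ++ [.asn z f l a]) ∨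
    ∃ ρ' c, ρ = ρ' ++ [c] ∧ ∀ t : St, ex t ρ z = ex t ρ' z := by
  induction ρ using List.reverseRecOn with
  | nil => exact Or.inl rfl
  | append_singleton ρ c _ =>
    right
    cases c with
    | prd p l a b => exact Or.inr ⟨ρ, _, rfl, fun t => by simp⟩
    | asn y f l a =>
      by_cases hz : z = y
      · subst hz; exact Or.inl ⟨ρ, f, l, a, rfl⟩
      · exact Or.inr ⟨ρ, _, rfl, fun t => by simp [st, hz]⟩

/-- Cancellation: if two words leaving the same program point produce equal terms when executed
after some head `g`, then they produce equal terms from every state. -/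
theorem cancel (hS : Special S) {g K0} (hg : Steps (init S) g K0) (s : St)
    {μ κ : List Letter} {K1 K2 : Stack} {v w : ℕ}
    (h1 : Steps K0 μ K1) (h2 : Steps K0 κ K2)
    (he : ex (ex eSt g) μ v = ex (ex eSt g) κ w) : ex s μ v = ex s κ w := by
  induction hn : μ.length + κ.length using Nat.strong_induction_on
    generalizing μ κ K1 K2 v w with
  | _ n ih =>
    subst hn
    rcases last_cases μ v with rfl | ⟨μ', f, l, a, rfl⟩ | ⟨μ', c, rfl, hc⟩
    · rcases last_cases κ w with rfl | ⟨κ', f', l', a', rfl⟩ | ⟨κ', c', rfl, hc'⟩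
      · by_cases hvw : v = w
        · subst hvw; rfl
        · exact absurd he (lib_ne hS hg hvw)
      · have := lib_new hS (σ := g) v (steps_append.2 ⟨K0, hg, h2⟩)
        rw [ex_append] at this
        exact absurd he this
      · rw [hc'] at he ⊢
        obtain ⟨K3, h3, _⟩ := steps_append.1 h2
        exact ih _ (by simp) h1 h3 he rfl
    · rcases last_cases κ w with rfl | ⟨κ', f', l', a', rfl⟩ | ⟨κ', c', rfl, hc'⟩
      · have := lib_new hS (σ := g) w (steps_append.2 ⟨K0, hg, h1⟩)
        rw [ex_append] at this
        exact absurd he.symm this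
      · obtain ⟨K3, h3, _⟩ := steps_append.1 h1
        obtain ⟨K4, h4, _⟩ := steps_append.1 h2
        simp only [ex_append, ex_cons, ex_nil, st, Function.update_self, Trm.app.injEq] at he ⊢
        refine ⟨he.1, map_transfer (fun x y hxy => ?_) _ _ he.2⟩
        exact ih _ (by simp; omega) h3 h4 hxy rfl
      · rw [hc'] at he ⊢
        obtain ⟨K3, h3, _⟩ := steps_append.1 h2
        exact ih _ (by simp) h1 h3 he rfl
    · rw [hc] at he ⊢
      obtain ⟨K3, h3, _⟩ := steps_append.1 h1
      exact ih _ (by simp) h3 h2 he rfl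

/-- Cancellation for vectors of terms. -/
theorem cancel_map (hS : Special S) {g K0} (hg : Steps (init S) g K0) (s : St)
    {μ κ : List Letter} {K1 K2 : Stack} {a a' : List ℕ}
    (h1 : Steps K0 μ K1) (h2 : Steps K0 κ K2)
    (he : a.map (ex (ex eSt g) μ) = a'.map (ex (ex eSt g) κ)) :
    a.map (ex s μ) = a'.map (ex s κ) :=
  map_transfer (fun _ _ h => cancel hS hg s h1 h2 h) _ _ he

end SchemaSlicing

namespace SchemaSlicing

variable {S : Schema} {u : ℕ}

/-! ### Runs -/

/-- `P` is the terminating run of `S` from the natural state under the interpretation `i`. -/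
def Run (S : Schema) (i : Key → Bool) (P : List Letter) : Prop :=
  Steps (init S) P [] ∧ Agr i eSt P

/-- A complete word extends every word from the same program point agreeing with the same
interpretation. -/
theorem prefix_of_agree {i : Key → Bool} {g P : List Letter} {s : St} {K K1 : Stack}
    (hg : Steps K g K1) (ag : Agr i s g) (hP : Steps K P []) (aP : Agr i s P) :
    ∃ w, P = g ++ w ∧ Steps K1 w [] := by
  induction g generalizing K s P with
  | nil => cases hg; exact ⟨P, rfl, hP⟩
  | cons c g ih =>
    obtain ⟨A, a1, a2⟩ := hg
    cases P with
    | nil => cases hP; exact absurd a1 step_nil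
    | cons c' P =>
      obtain ⟨B, b1, b2⟩ := hP
      by_cases hc : c = c'
      · subst hc
        cases step_det a1 b1
        have ag' : Agr i (st s c) g := by cases c <;> simp_all
        have aP' : Agr i (st s c) P := by cases c <;> simp_all
        obtain ⟨w, rfl, hw⟩ := ih a2 ag' b2 aP'
        exact ⟨w, rfl, hw⟩
      · obtain ⟨p, l, a, b, rfl, rfl⟩ := step_alt a1 b1 hc
        have e1 := (agr_prd.1 ag).1
        have e2 := (agr_prd.1 aP).1
        rw [e1] at e2
        cases b <;> simp at e2

theorem run_det {i : Key → Bool} {P P' : List Letter} (h : Run S i P) (h' : Run S i P') :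
    P = P' := by
  obtain ⟨w, rfl, hw⟩ := prefix_of_agree h.1 h.2 h'.1 h'.2
  rw [steps_empty hw]; simp

/-- Two distinct complete words from the same program point part at a predicate. -/
theorem diverge {K : Stack} {σ τ : List Letter} (hσ : Steps K σ []) (hτ : Steps K τ [])
    (hne : σ ≠ τ) : ∃ g p l a b σ' τ' K1 A B,
      σ = g ++ .prd p l a b :: σ' ∧ τ = g ++ .prd p l a (!b) :: τ' ∧ Steps K g K1 ∧
      Step K1 (.prd p l a b) A ∧ Steps A σ' [] ∧ Step K1 (.prd p l a (!b)) B ∧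
      Steps B τ' [] := by
  induction σ generalizing K τ with
  | nil => cases hσ; exact absurd (steps_empty hτ).symm hne
  | cons c σ ih =>
    cases τ with
    | nil => cases hτ; exact absurd (steps_empty hσ) hne
    | cons c' τ =>
      obtain ⟨A, a1, a2⟩ := hσ
      obtain ⟨B, b1, b2⟩ := hτ
      by_cases hc : c = c'
      · subst hc
        cases step_det a1 b1
        obtain ⟨g, p, l, a, b, σ', τ', K1, A', B', rfl, rfl, h1, h2⟩ :=
          ih a2 b2 (fun e => hne (by rw [e]))
        exact ⟨c :: g, p, l, a, b, σ', τ', K1, A', B', rfl, rfl, ⟨A, a1, h1⟩, h2⟩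
      · obtain ⟨p, l, a, b, rfl, rfl⟩ := step_alt a1 b1 hc
        exact ⟨[], p, l, a, b, σ, τ, K, A, B, rfl, rfl, rfl, a1, a2, b1, b2⟩

open Classical in
/-- As no predicate term is tested twice, a run terminates as soon as the while predicates hold
for finitely many terms only. -/
theorem terminates (hS : Special S) (i : Key → Bool) (F : Finset Key)
    (hF : ∀ g p l a b K, Steps (init S) g (.whil p l a b :: K) → ∀ ts, i (p, ts) = true →
      (p, ts) ∈ F) : ∃ P, Run S i P := by
  have claim : ∀ (X : Schema) (g : List Letter) (K : Stack), Steps (init S) g (push X K) →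
      ∃ x, Steps (push X K) x K ∧ Agr i (ex eSt g) x := by
    intro X
    induction X with
    | skip => intro g K _; exact ⟨[], rfl, agr_nil⟩
    | assign y f l a => intro g K _; exact ⟨[_], ⟨K, .asn .., rfl⟩, by simp⟩
    | seq A B ihA ihB =>
      intro g K h
      obtain ⟨x, hx, ax⟩ := ihA g (push B K) h
      obtain ⟨y, hy, ay⟩ := ihB (g ++ x) K (steps_append.2 ⟨_, h, hx⟩)
      refine ⟨x ++ y, steps_append.2 ⟨_, hx, hy⟩, agr_append.2 ⟨ax, by simpa using ay⟩⟩
    | ite p l a t e iht ihe =>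
      intro g K h
      change Steps (init S) g (.ite p l a t e :: K) at h
      cases hi : i (p, a.map (ex eSt g)) with
      | true =>
        obtain ⟨x, hx, ax⟩ := iht (g ++ [.prd p l a true]) K
          (steps_append.2 ⟨_, h, _, .iteT .., rfl⟩)
        exact ⟨.prd p l a true :: x, ⟨_, .iteT .., hx⟩, by simpa [hi] using ax⟩
      | false =>
        obtain ⟨x, hx, ax⟩ := ihe (g ++ [.prd p l a false]) K
          (steps_append.2 ⟨_, h, _, .iteF .., rfl⟩)
        exact ⟨.prd p l a false :: x, ⟨_, .iteF .., hx⟩, by simpa [hi] using ax⟩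
    | whil p l a b ih =>
      intro g K h
      -- the number of terms of `F` not tested yet decreases at each iteration
      induction hn : (F.filter fun k => k ∉ (tr eSt g).map Prod.fst).card
        using Nat.strong_induction_on generalizing g with
      | _ n ihn =>
        cases hi : i (p, a.map (ex eSt g)) with
        | false => exact ⟨[.prd p l a false], ⟨_, .whF .., rfl⟩, by simp [hi]⟩
        | true =>
          have h1 : Steps (init S) (g ++ [.prd p l a true]) (push b (.whil p l a b :: K)) :=
            steps_append.2 ⟨_, h, _, .whT .., rfl⟩
          obtain ⟨x, hx, ax⟩ := ih _ _ h1
          have h2 : Steps (init S) ((g ++ [.prd p l a true]) ++ x) (.whil p l a b :: K) :=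
            steps_append.2 ⟨_, h1, hx⟩
          obtain ⟨y, hy, ay⟩ := ihn _ (by
            rw [← hn]
            apply Finset.card_lt_card
            rw [Finset.ssubset_iff_of_subset]
            · refine ⟨(p, a.map (ex eSt g)), ?_, ?_⟩
              · rw [Finset.mem_filter]
                refine ⟨hF _ _ _ _ _ _ h _ hi, fun hm => ?_⟩
                obtain ⟨⟨k', b'⟩, hk, e⟩ := List.mem_map.1 hm
                simp only at e
                subst e
                exact key_fresh hS h1 hk (b' := true) (by simp)
              · rw [Finset.mem_filter]
                rintro ⟨-, hm⟩
                exact hm (by simp)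
            · intro k hk
              rw [Finset.mem_filter] at hk ⊢
              refine ⟨hk.1, fun hm => hk.2 ?_⟩
              simp only [tr_append, List.map_append, List.mem_append]
              exact Or.inl (Or.inl hm)) _ h2 rfl
          refine ⟨.prd p l a true :: (x ++ y),
            ⟨_, .whT .., steps_append.2 ⟨_, hx, hy⟩⟩, ?_⟩
          rw [agr_prd, agr_append]
          exact ⟨hi, by simpa using ax, by simpa using ay⟩
  obtain ⟨x, hx, ax⟩ := claim S [] [] rfl
  exact ⟨x, hx, ax⟩

/-- The interpretation holds for finitely many predicate terms only. -/
def FT (i : Key → Bool) : Prop := {k | i k = true}.Finite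

theorem terminates_ft (hS : Special S) {i : Key → Bool} (hi : FT i) : ∃ P, Run S i P :=
  terminates hS i hi.toFinset (fun _ _ _ _ _ _ _ _ h => hi.mem_toFinset.2 h)

theorem ft_tr {i : Key → Bool} (L : List (Key × Bool)) (h : ∀ k, i k = true → (k, true) ∈ L) :
    FT i := by
  refine ((L.map Prod.fst).finite_toSet).subset fun k hk => ?_
  exact List.mem_map.2 ⟨_, h k hk, rfl⟩

/-! ### Predicates on which the final value of `u` depends -/

/-- The words `β` and `β'`, executed from `s`, are compatible in all their tests and produce
different values of `u`. -/
def Cpl (u : ℕ) (s : St) (β β' : List Letter) : Prop :=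
  (∀ k b b', (k, b) ∈ tr s β → (k, b') ∈ tr s β' → b = b') ∧ ex s β u ≠ ex s β' u

theorem Cpl.symm {s : St} {β β' : List Letter} (h : Cpl u s β β') : Cpl u s β' β :=
  ⟨fun k b b' h1 h2 => (h.1 k b' b h2 h1).symm, h.2.symm⟩

/-- The predicate `k` is relevant: at some occurrence of `k` on a path the outcome of this single
test can influence the final value of `u`. -/
def InK (S : Schema) (u k : ℕ) : Prop :=
  ∃ g l a K A B β β', Steps (init S) g K ∧ Step K (.prd k l a true) A ∧
    Step K (.prd k l a false) B ∧ Steps A β [] ∧ Steps B β' [] ∧ Cpl u (ex eSt g) β β'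

theorem cpl_transfer (hS : Special S) {g g' K p l a A B β β'}
    (hg' : Steps (init S) g' K) (hA : Step K (.prd p l a true) A)
    (hB : Step K (.prd p l a false) B) (hβ : Steps A β []) (hβ' : Steps B β' [])
    (h : Cpl u (ex eSt g) β β') : Cpl u (ex eSt g') β β' := by
  have sβ : Steps K (.prd p l a true :: β) [] := ⟨A, hA, hβ⟩
  have sβ' : Steps K (.prd p l a false :: β') [] := ⟨B, hB, hβ'⟩
  refine ⟨fun k b b' h1 h2 => ?_, fun he => h.2 ?_⟩
  · obtain ⟨β1, q, m, c, b1, β2, rfl, e1⟩ := mem_tr.1 h1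
    obtain ⟨β1', q', m', c', b1', β2', rfl, e2⟩ := mem_tr.1 h2
    cases e1
    simp only [Prod.mk.injEq] at e2
    obtain ⟨⟨rfl, e2⟩, rfl⟩ := e2
    obtain ⟨K1, k1, _⟩ := steps_append.1 (show Steps K ((.prd p l a true :: β1) ++ _) [] from sβ)
    obtain ⟨K2, k2, _⟩ :=
      steps_append.1 (show Steps K ((.prd p l a false :: β1') ++ _) [] from sβ')
    have := cancel_map hS hg' (ex eSt g) k1 k2 (by simpa using e2)
    simp only [ex_cons, st_prd] at this
    exact h.1 (q, c.map (ex (ex eSt g) β1)) b b' (mem_tr.2 ⟨_, _, _, _, _, _, rfl, rfl⟩)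
      (mem_tr.2 ⟨_, _, _, _, _, _, rfl, by rw [this]⟩)
  · simpa using cancel hS hg' (ex eSt g) sβ sβ' (v := u) (w := u) (by simpa using he)

/-- A relevant predicate can influence `u` at every place where it is tested. -/
theorem InK.at (hS : Special S) {k} (h : InK S u k) {g K l a b C} (hg : Steps (init S) g K)
    (hs : Step K (.prd k l a b) C) : ∃ A B β β', Step K (.prd k l a true) A ∧
      Step K (.prd k l a false) B ∧ Steps A β [] ∧ Steps B β' [] ∧ Cpl u (ex eSt g) β β' := by
  obtain ⟨g', l', a', K', A, B, β, β', hg', hA, hB, hβ, hβ', hc⟩ := h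
  cases pred_point hS.2.1 hg hg' hs hA
  obtain ⟨-, rfl, rfl⟩ := step_prd_same hs hA
  exact ⟨A, B, β, β', hA, hB, hβ, hβ', cpl_transfer hS hg hA hB hβ hβ' hc⟩

theorem flip_couple (hS : Special S) {i j : Key → Bool} {θ : Key} {P P' : List Letter}
    (hij : ∀ k, k ≠ θ → i k = j k) (h : Run S i P) (h' : Run S j P')
    (hne : ex eSt P u ≠ ex eSt P' u) : InK S u θ.1 := by
  have hPP : P ≠ P' := by rintro rfl; exact hne rfl
  obtain ⟨g, p, l, a, b, σ, τ, K1, A, B, rfl, rfl, hg, hA, hσ, hB, hτ⟩ := diverge h.1 h'.1 hPP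
  have a1 := agr_append.1 h.2
  have a2 := agr_append.1 h'.2
  rw [agr_prd] at a1 a2
  have hθ : (p, a.map (ex eSt g)) = θ := by
    by_contra hc
    have := hij _ hc
    rw [a1.2.1, a2.2.1] at this
    cases b <;> simp at this
  subst hθ
  have hc : Cpl u (ex eSt g) σ τ := by
    refine ⟨fun k b1 b2 h1 h2 => ?_, by simpa using hne⟩
    have hk : k ≠ (p, a.map (ex eSt g)) := by
      rintro rfl
      have := h.1
      refine key_fresh2 hS (μ := [.prd p l a b]) (ν := σ) (k := (p, a.map (ex eSt g))) this
        (b := b) (b' := b1) ?_ ?_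
      · simp
      · simpa using h1
    have e1 := a1.2.2 _ h1
    have e2 := a2.2.2 _ h2
    simp only at e1 e2
    rw [← e1, ← e2]; exact hij k hk
  cases b with
  | true => exact ⟨g, l, a, K1, A, B, σ, τ, hg, hA, hB, hσ, hτ, hc⟩
  | false => exact ⟨g, l, a, K1, B, A, τ, σ, hg, hB, hA, hτ, hσ, hc.symm⟩

theorem inv_ft (hS : Special S) {i j : Key → Bool} (hi : FT i) (hj : FT j)
    (hij : ∀ k, InK S u k.1 → i k = j k) {P P' : List Letter} (h : Run S i P)
    (h' : Run S j P') : ex eSt P u = ex eSt P' u := by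
  classical
  have main : ∀ (D : Finset Key) (i : Key → Bool) (P : List Letter), FT i →
      (∀ k, InK S u k.1 → i k = j k) → (∀ k, k ∉ D → i k = j k) → Run S i P →
      ex eSt P u = ex eSt P' u := by
    intro D
    induction D using Finset.induction_on with
    | empty =>
      intro i P _ _ hD h
      have : i = j := funext fun k => hD k (by simp)
      subst this
      rw [run_det h h']
    | insert θ D hθ ih =>
      intro i P hi hij hD h
      have hi2 : FT (Function.update i θ (j θ)) := by
        refine (hi.union (Set.finite_singleton θ)).subset fun k hk => ?_
        by_cases e : k = θ
        · exact Or.inr e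
        · left; simpa [Function.update_of_ne e] using hk
      obtain ⟨P2, h2⟩ := terminates_ft hS hi2
      have e2 := ih _ P2 hi2 (fun k hk => by
        by_cases e : k = θ
        · subst e; simp
        · simpa [e] using hij k hk) (fun k hk => by
        by_cases e : k = θ
        · subst e; simp
        · simpa [e] using hD k (by simp [e, hk])) h2
      rw [← e2]
      by_contra hne
      have hK : InK S u θ.1 := flip_couple hS (fun k hk => by simp [hk]) h h2 hne
      have : Function.update i θ (j θ) = i := by
        rw [← hij θ hK]; exact Function.update_eq_self _ _
      rw [this] at h2
      exact hne (by rw [run_det h h2])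
  refine main (hi.toFinset ∪ hj.toFinset) i P hi hij (fun k hk => ?_) h
  have e1 : ¬ i k = true := fun e => hk (Finset.mem_union_left _ (hi.mem_toFinset.2 e))
  have e2 : ¬ j k = true := fun e => hk (Finset.mem_union_right _ (hj.mem_toFinset.2 e))
  simp only [Bool.not_eq_true] at e1 e2
  rw [e1, e2]

/-- Two complete paths that are compatible on the relevant predicates produce the same value
of `u`. -/
theorem compat (hS : Special S) {P P' : List Letter} (h : Steps (init S) P [])
    (h' : Steps (init S) P' [])
    (hc : ∀ k b b', InK S u k.1 → (k, b) ∈ tr eSt P → (k, b') ∈ tr eSt P' → b = b') :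
    ex eSt P u = ex eSt P' u := by
  classical
  have key : ∀ {P P' : List Letter}, Steps (init S) P [] → 
      (∀ k b b', InK S u k.1 → (k, b) ∈ tr eSt P → (k, b') ∈ tr eSt P' → b = b') →
      Run S (fun k => decide ((k, true) ∈ tr eSt P ∨ InK S u k.1 ∧ (k, true) ∈ tr eSt P')) P := by
    intro P P' h hc
    refine ⟨h, ?_⟩
    rintro ⟨k, b⟩ hk
    cases b with
    | true => simp [hk]
    | false =>
      simp only [decide_eq_false_iff_not]
      rintro (h1 | ⟨h1, h2⟩)
      · exact Bool.noConfusion (key_unique hS h hk h1)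
      · exact Bool.noConfusion (hc _ _ _ h1 hk h2)
  refine inv_ft hS ?_ ?_ ?_ (key h hc) (key h' fun k b b' hk h1 h2 => (hc k b' b hk h2 h1).symm)
  · refine ft_tr (tr eSt P ++ tr eSt P') fun k hk => ?_
    simp only [decide_eq_true_eq] at hk
    simp only [List.mem_append]; tauto
  · refine ft_tr (tr eSt P ++ tr eSt P') fun k hk => ?_
    simp only [decide_eq_true_eq] at hk
    simp only [List.mem_append]; tauto
  · intro k hk
    simp only [decide_eq_decide]; tauto

open Classical in
/-- The two continuations at a relevant test, taken together with their common head, are the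
runs of two interpretations differing in that test only. -/
theorem couple_runs (hS : Special S) {g K k l a A B β β'} (hg : Steps (init S) g K)
    (hA : Step K (.prd k l a true) A) (hB : Step K (.prd k l a false) B) (hβ : Steps A β [])
    (hβ' : Steps B β' []) (hc : Cpl u (ex eSt g) β β') :
    ∃ i j, FT i ∧ FT j ∧ Run S i (g ++ .prd k l a true :: β) ∧
      Run S j (g ++ .prd k l a false :: β') ∧
      (∀ x, x ≠ (k, a.map (ex eSt g)) → i x = j x) ∧
      ex eSt (g ++ .prd k l a true :: β) u ≠ ex eSt (g ++ .prd k l a false :: β') u := by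
  set θ : Key := (k, a.map (ex eSt g)) with hθ
  set P := g ++ Letter.prd k l a true :: β with hP
  set P' := g ++ Letter.prd k l a false :: β' with hP'
  have sP : Steps (init S) P [] := steps_append.2 ⟨K, hg, A, hA, hβ⟩
  have sP' : Steps (init S) P' [] := steps_append.2 ⟨K, hg, B, hB, hβ'⟩
  have tP : tr eSt P = tr eSt g ++ (θ, true) :: tr (ex eSt g) β := by simp [hP, hθ]
  have tP' : tr eSt P' = tr eSt g ++ (θ, false) :: tr (ex eSt g) β' := by simp [hP', hθ]
  have cmp : ∀ x b b', x ≠ θ → (x, b) ∈ tr eSt P → (x, b') ∈ tr eSt P' → b = b' := by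
    intro x b b' hx h1 h2
    have h1' := h1
    rw [tP] at h1
    rw [tP'] at h2
    simp only [List.mem_append, List.mem_cons, Prod.mk.injEq, hx, false_and, false_or] at h1 h2
    rcases h1 with h1 | h1
    · exact key_unique hS sP' (k := x) (by rw [tP']; simp [h1]) 
        (by rw [tP', List.mem_append, List.mem_cons]; tauto)
    · rcases h2 with h2 | h2
      · exact key_unique hS sP h1' (by rw [tP]; simp [h2])
      · exact hc.1 _ _ _ h1 h2
  let o : Key → Bool := fun x => decide ((x, true) ∈ tr eSt P ∨ (x, true) ∈ tr eSt P')
  have fo : FT o := ft_tr (tr eSt P ++ tr eSt P') fun x hx => by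
    simpa [o] using hx
  refine ⟨o, Function.update o θ false, fo, ?_, ⟨sP, ?_⟩, ⟨sP', ?_⟩, ?_, ?_⟩
  · refine fo.subset fun x hx => ?_
    by_cases e : x = θ
    · subst e; simp at hx
    · simpa [e] using hx
  · rintro ⟨x, b⟩ hx
    cases b with
    | true => simp [o, hx]
    | false =>
      simp only [o, decide_eq_false_iff_not]
      rintro (h1 | h1)
      · exact Bool.noConfusion (key_unique hS sP hx h1)
      · by_cases e : x = θ
        · subst e
          exact Bool.noConfusion (key_unique hS sP hx (b' := true) (by rw [tP]; simp))
        · exact Bool.noConfusion (cmp _ _ _ e hx h1)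
  · rintro ⟨x, b⟩ hx
    by_cases e : x = θ
    · subst e
      simpa using key_unique hS sP' (b := false) (by rw [tP']; simp) hx
    · simp only [Function.update_of_ne e]
      cases b with
      | true => simp [o, hx]
      | false =>
        simp only [o, decide_eq_false_iff_not]
        rintro (h1 | h1)
        · exact Bool.noConfusion (cmp _ _ _ e h1 hx)
        · exact Bool.noConfusion (key_unique hS sP' hx h1)
  · intro x hx; simp [hx]
  · simpa [hP, hP'] using hc.2

end SchemaSlicing

namespace SchemaSlicing

variable {S : Schema} {u : ℕ}

/-! ### Heads that agree on the relevant predicates -/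

open Classical in
/-- The relevant predicate terms found true along `σ`, executed from `s`. -/
noncomputable def TK (S : Schema) (u : ℕ) (s : St) (σ : List Letter) : Finset Key :=
  (((tr s σ).filter fun x => x.2 = true ∧ InK S u x.1.1).map Prod.fst).toFinset

theorem mem_TK {s : St} {σ : List Letter} {k : Key} :
    k ∈ TK S u s σ ↔ (k, true) ∈ tr s σ ∧ InK S u k.1 := by
  simp only [TK, List.mem_toFinset, List.mem_map, List.mem_filter, decide_eq_true_eq]
  constructor
  · rintro ⟨⟨k', b⟩, ⟨h1, h2, h3⟩, rfl⟩
    simp only at h2 h3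
    subst h2
    exact ⟨h1, h3⟩
  · rintro ⟨h1, h2⟩
    exact ⟨(k, true), ⟨h1, rfl, h2⟩, rfl⟩

/-- Two words leading to the same program point and making the same tests of relevant
predicates. -/
structure Heads (S : Schema) (u : ℕ) where
  special : Special S
  h : Bool → List Letter
  K0 : Stack
  reach : ∀ s, Steps (init S) (h s) K0
  kc : ∀ s s' k b, InK S u k.1 → (k, b) ∈ tr eSt (h s) → (k, b) ∈ tr eSt (h s')

namespace Heads

variable (H : Heads S u)

/-- The state reached by the head `s`. -/
def D (s : Bool) : St := ex eSt (H.h s)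

open Classical in
/-- The interpretation that follows the head `s` and afterwards makes exactly the predicate terms
of `O` true. -/
noncomputable def iS (s : Bool) (O : Finset Key) : Key → Bool := fun k =>
  decide ((k, true) ∈ tr eSt (H.h s) ∨ k ∈ O ∧ (k, false) ∉ tr eSt (H.h s))

theorem iS_ft (s : Bool) (O : Finset Key) : FT (H.iS s O) := by
  refine ft_tr (tr eSt (H.h s) ++ O.toList.map fun k => (k, true)) fun k hk => ?_
  simp only [iS, decide_eq_true_eq] at hk
  simp only [List.mem_append, List.mem_map, Finset.mem_toList]
  rcases hk with h | h
  · exact Or.inl h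
  · exact Or.inr ⟨k, h.1, rfl⟩

theorem iS_agr (s : Bool) (O : Finset Key) : Agr (H.iS s O) eSt (H.h s) := by
  rintro ⟨k, b⟩ hk
  cases b with
  | true => simp [iS, hk]
  | false =>
    simp only [iS, decide_eq_false_iff_not]
    rintro (h | h)
    · exact Bool.noConfusion (key_unique H.special (H.reach s) hk h)
    · exact h.2 hk

theorem exists_lam (s : Bool) (O : Finset Key) :
    ∃ w, Steps H.K0 w [] ∧ Agr (H.iS s O) (H.D s) w := by
  obtain ⟨P, hP, aP⟩ := terminates_ft H.special (H.iS_ft s O)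
  obtain ⟨w, rfl, hw⟩ := prefix_of_agree (H.reach s) (H.iS_agr s O) hP aP
  exact ⟨w, hw, (agr_append.1 aP).2⟩

/-- The continuation of the run of `iS s O` after the head `s`. -/
noncomputable def lam (s : Bool) (O : Finset Key) : List Letter := (H.exists_lam s O).choose

theorem lam_steps (s : Bool) (O : Finset Key) : Steps H.K0 (H.lam s O) [] :=
  (H.exists_lam s O).choose_spec.1

theorem lam_agr (s : Bool) (O : Finset Key) : Agr (H.iS s O) (H.D s) (H.lam s O) :=
  (H.exists_lam s O).choose_spec.2

theorem full {s : Bool} {w : List Letter} {K : Stack} (hw : Steps H.K0 w K) :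
    Steps (init S) (H.h s ++ w) K := steps_append.2 ⟨_, H.reach s, hw⟩

theorem fresh {s : Bool} {w : List Letter} {K : Stack} (hw : Steps H.K0 w K) {k : Key}
    {b b' : Bool} (h1 : (k, b) ∈ tr eSt (H.h s)) (h2 : (k, b') ∈ tr (H.D s) w) : False :=
  key_fresh H.special (H.full hw) h1 h2

theorem uniq {s : Bool} {w : List Letter} {K : Stack} (hw : Steps H.K0 w K) {k : Key}
    {b b' : Bool} (h1 : (k, b) ∈ tr (H.D s) w) (h2 : (k, b') ∈ tr (H.D s) w) : b = b' := by
  refine key_unique H.special (H.full (s := s) hw) (k := k) ?_ ?_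
  · rw [tr_append]; exact List.mem_append_right _ h1
  · rw [tr_append]; exact List.mem_append_right _ h2

theorem fresh2 {s : Bool} {μ ν : List Letter} {K : Stack} (hw : Steps H.K0 (μ ++ ν) K)
    {k : Key} {b b' : Bool} (h1 : (k, b) ∈ tr (H.D s) μ)
    (h2 : (k, b') ∈ tr (ex (H.D s) μ) ν) : False :=
  key_fresh2 H.special (H.full hw) h1 h2

theorem iS_val {s : Bool} {O : Finset Key} {w : List Letter} {K : Stack} (hw : Steps H.K0 w K)
    {k : Key} {b : Bool} (hk : (k, b) ∈ tr (H.D s) w) : H.iS s O k = true ↔ k ∈ O := by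
  simp only [iS, decide_eq_true_eq]
  constructor
  · rintro (h | h)
    · exact (H.fresh hw h hk).elim
    · exact h.1
  · intro h
    exact Or.inr ⟨h, fun h' => H.fresh hw h' hk⟩

theorem lam_val {s : Bool} {O : Finset Key} {k : Key} {b : Bool}
    (hk : (k, b) ∈ tr (H.D s) (H.lam s O)) : b = true ↔ k ∈ O := by
  rw [← H.iS_val (H.lam_steps s O) hk, H.lam_agr s O _ hk]

/-- The value of `u` computed when exactly the terms of `O` are true after the head; by
`res_eq` it does not depend on the head chosen. -/
noncomputable def res (O : Finset Key) : Trm := ex (H.D true) (H.lam true O) u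

theorem res_eq (s : Bool) (O : Finset Key) : H.res O = ex (H.D s) (H.lam s O) u := by
  have key : ex eSt (H.h true ++ H.lam true O) u = ex eSt (H.h s ++ H.lam s O) u := by
    refine compat H.special (H.full (H.lam_steps _ _)) (H.full (H.lam_steps _ _)) ?_
    intro k b b' hk h1 h2
    have e1 := agr_append.2 ⟨H.iS_agr true O, H.lam_agr true O⟩ _ h1
    have e2 := agr_append.2 ⟨H.iS_agr s O, H.lam_agr s O⟩ _ h2
    simp only at e1 e2
    rw [← e1, ← e2]
    simp only [iS, decide_eq_decide]
    have f : ∀ c, (k, c) ∈ tr eSt (H.h true) ↔ (k, c) ∈ tr eSt (H.h s) :=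
      fun c => ⟨H.kc _ _ _ _ hk, H.kc _ _ _ _ hk⟩
    rw [f, f]
  simpa [res, D] using key

theorem res_of_path {s : Bool} {O : Finset Key} {w : List Letter} (hw : Steps H.K0 w [])
    (hO : ∀ k b, InK S u k.1 → (k, b) ∈ tr (H.D s) w → (b = true ↔ k ∈ O)) :
    H.res O = ex (H.D s) w u := by
  rw [H.res_eq s]
  have key : ex eSt (H.h s ++ H.lam s O) u = ex eSt (H.h s ++ w) u := by
    refine compat H.special (H.full (H.lam_steps _ _)) (H.full hw) ?_
    intro k b b' hk h1 h2
    rw [tr_append, List.mem_append] at h1 h2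
    rcases h1 with h1 | h1 <;> rcases h2 with h2 | h2
    · exact key_unique H.special (H.reach s) h1 h2
    · exact (H.fresh hw h1 h2).elim
    · exact (H.fresh (H.lam_steps s O) h2 h1).elim
    · have e1 := H.lam_val h1
      have e2 := hO k b' hk h2
      rw [Bool.eq_iff_iff, e1, e2]
  simpa [D] using key

/-- A relevant test, reached from the end of the heads, whose argument terms depend on the
head. -/
def DH (μ : List Letter) (k l : ℕ) (a : List ℕ) : Prop :=
  ∃ K A, Steps H.K0 μ K ∧ Step K (.prd k l a true) A ∧ InK S u k ∧
    a.map (ex (H.D true) μ) ≠ a.map (ex (H.D false) μ)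

/-- A predicate term tested as in `DH`. -/
def DT (θ : Key) : Prop := ∃ μ k l a s, H.DH μ k l a ∧ θ = (k, a.map (ex (H.D s) μ))

theorem DT.inK {H : Heads S u} {θ : Key} (h : H.DT θ) : InK S u θ.1 := by
  obtain ⟨μ, k, l, a, s, ⟨_, _, _, _, h, _⟩, rfl⟩ := h
  exact h

theorem DH.ne {H : Heads S u} {μ k l a} (h : H.DH μ k l a) (s : Bool) :
    a.map (ex (H.D s) μ) ≠ a.map (ex (H.D (!s)) μ) := by
  obtain ⟨_, _, _, _, _, h⟩ := h
  cases s
  · exact h.symm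
  · exact h

theorem DT_head {o : Key} (ho : H.DT o) {s : Bool} {α : List Letter} {K A : Stack} {k l : ℕ}
    {a : List ℕ} {b : Bool} (hα : Steps H.K0 α K) (hs : Step K (.prd k l a b) A)
    (e : o = (k, a.map (ex (H.D s) α))) : H.DH α k l a := by
  obtain ⟨A', hA'⟩ := step_flip hs true
  have hK := ho.inK
  obtain ⟨μ, k0, l0, a0, s0, hμ, rfl⟩ := ho
  have hne := hμ.ne
  obtain ⟨K1, A1, h1, h2, h3, -⟩ := hμ
  simp only [Prod.mk.injEq] at e
  obtain ⟨rfl, e⟩ := e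
  refine ⟨K, A', hα, hA', hK, fun hc => ?_⟩
  have hc' : ∀ s s', a.map (ex (H.D s) α) = a.map (ex (H.D s') α) := by
    intro s s'; cases s <;> cases s' <;> first | rfl | exact hc | exact hc.symm
  -- the arguments of the test at `α` are those of the test at `μ`, from either head
  have e0 : a0.map (ex (H.D s0) μ) = a.map (ex (H.D s0) α) := by rw [e, hc' s s0]
  have e1 : a0.map (ex (H.D (!s0)) μ) = a.map (ex (H.D (!s0)) α) :=
    cancel_map H.special (H.reach s0) (H.D (!s0)) h1 hα e0
  exact hne s0 (by rw [e0, e1]; exact hc' _ _)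

open Classical in
theorem couple_res {s : Bool} {α : List Letter} {K A B : Stack} {k l : ℕ} {a : List ℕ}
    {β β' : List Letter} (hα : Steps H.K0 α K) (hA : Step K (.prd k l a true) A)
    (hB : Step K (.prd k l a false) B) (hβ : Steps A β []) (hβ' : Steps B β' [])
    (hc : Cpl u (ex (H.D s) α) β β') :
    ∃ O : Finset Key, (∀ x ∈ O, InK S u x.1) ∧
      O ⊆ TK S u (H.D s) α ∪ (TK S u (ex (H.D s) α) β ∪ TK S u (ex (H.D s) α) β') ∧
      H.res O ≠ H.res (insert (k, a.map (ex (H.D s) α)) O) := by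
  set θ : Key := (k, a.map (ex (H.D s) α)) with hθ
  set w := α ++ Letter.prd k l a true :: β with hw
  set w' := α ++ Letter.prd k l a false :: β' with hw'
  have sw : Steps H.K0 w [] := steps_append.2 ⟨_, hα, A, hA, hβ⟩
  have sw' : Steps H.K0 w' [] := steps_append.2 ⟨_, hα, B, hB, hβ'⟩
  have tw : tr (H.D s) w = tr (H.D s) α ++ (θ, true) :: tr (ex (H.D s) α) β := by
    simp [hw, hθ]
  have tw' : tr (H.D s) w' = tr (H.D s) α ++ (θ, false) :: tr (ex (H.D s) α) β' := by
    simp [hw', hθ]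
  have cmp : ∀ x b b', x ≠ θ → (x, b) ∈ tr (H.D s) w → (x, b') ∈ tr (H.D s) w' → b = b' := by
    obtain ⟨i, j, -, -, ri, rj, hij, -⟩ := couple_runs H.special
      (H.full (s := s) hα) hA hB hβ hβ' (by simpa [D] using hc)
    intro x b b' hx h1 h2
    have e1 := ri.2 (x, b) (by
      rw [List.append_assoc, tr_append]; exact List.mem_append_right _ h1)
    have e2 := rj.2 (x, b') (by
      rw [List.append_assoc, tr_append]; exact List.mem_append_right _ h2)
    simp only at e1 e2
    rw [← e1, ← e2]
    exact hij x (by simpa [hθ, D] using hx)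
  let O : Finset Key := (TK S u (H.D s) w ∪ TK S u (H.D s) w').erase θ
  have mO : ∀ x, x ∈ O ↔ x ≠ θ ∧
      ((x, true) ∈ tr (H.D s) w ∨ (x, true) ∈ tr (H.D s) w') ∧ InK S u x.1 := by
    intro x
    simp only [O, Finset.mem_erase, Finset.mem_union, mem_TK]
    tauto
  refine ⟨O, fun x hx => ((mO x).1 hx).2.2, fun x hx => ?_, ?_⟩
  · obtain ⟨h1, h2, h3⟩ := (mO x).1 hx
    rw [tw, tw'] at h2
    simp only [List.mem_append, List.mem_cons, Prod.mk.injEq, h1, false_and, false_or] at h2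
    simp only [Finset.mem_union, mem_TK]
    tauto
  · rw [H.res_of_path (s := s) sw' (O := O), H.res_of_path (s := s) sw (O := insert θ O)]
    · simpa [hw, hw'] using hc.2.symm
    · intro x b hK hx
      rw [Finset.mem_insert, mO]
      by_cases e : x = θ
      · subst e
        have : b = true := H.uniq sw hx (by rw [tw]; simp)
        simp [this]
      · constructor
        · rintro rfl; exact Or.inr ⟨e, Or.inl hx, hK⟩
        · rintro (h | ⟨-, h | h, -⟩)
          · exact absurd h e
          · exact H.uniq sw hx h
          · exact cmp _ _ _ e hx h
    · intro x b hK hx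
      rw [mO]
      by_cases e : x = θ
      · subst e
        have : b = false := H.uniq sw' hx (by rw [tw']; simp)
        simp [this]
      · constructor
        · rintro rfl; exact ⟨e, Or.inr hx, hK⟩
        · rintro ⟨-, h | h, -⟩
          · exact (cmp _ _ _ e h hx).symm
          · exact H.uniq sw' hx h

end Heads

end SchemaSlicing

namespace SchemaSlicing

variable {S : Schema} {u : ℕ}

/-! ### Relevant tests do not distinguish such heads -/

open Classical in
/-- Moving a pair of continuations to another head does not increase the number of relevant
predicate terms they find true: by cancellation, terms distinct after the one head are distinct
after the other. -/
theorem TK_card (hS : Special S) {g g' K A B k l a β β'} (hg' : Steps (init S) g' K)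
    (hA : Step K (.prd k l a true) A) (hB : Step K (.prd k l a false) B) (hβ : Steps A β [])
    (hβ' : Steps B β' []) :
    (TK S u (ex eSt g) β ∪ TK S u (ex eSt g) β').card ≤
      (TK S u (ex eSt g') β ∪ TK S u (ex eSt g') β').card := by
  let r : Key → Key → Prop := fun x y =>
    ∃ (w : List Letter) (q : ℕ) (c : List ℕ) (K1 : Stack), Steps K w K1 ∧
    x = (q, c.map (ex (ex eSt g) w)) ∧ y = (q, c.map (ex (ex eSt g') w))
  have one : ∀ (b : Bool) (C : Stack) (σ : List Letter), Step K (.prd k l a b) C →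
      Steps C σ [] → ∀ x ∈ TK S u (ex eSt g) σ, ∃ y ∈ TK S u (ex eSt g') σ, r x y := by
    intro b C σ hC hσ x hx
    obtain ⟨h1, h2⟩ := mem_TK.1 hx
    obtain ⟨σ1, q, m, c, b', σ2, rfl, e⟩ := mem_tr.1 h1
    simp only [Prod.mk.injEq] at e
    obtain ⟨rfl, rfl⟩ := e
    obtain ⟨K1, k1, _⟩ := steps_append.1 hσ
    exact ⟨(q, c.map (ex (ex eSt g') σ1)), mem_TK.2 ⟨mem_tr.2 ⟨_, _, _, _, _, _, rfl, rfl⟩, h2⟩,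
      .prd k l a b :: σ1, q, c, K1, ⟨C, hC, k1⟩, rfl, rfl⟩
  refine Finset.card_le_card_of_forall_subsingleton r ?_ ?_
  · intro x hx
    rcases Finset.mem_union.1 hx with hx | hx
    · obtain ⟨y, hy, hr⟩ := one _ _ _ hA hβ x hx
      exact ⟨y, Finset.mem_union_left _ hy, hr⟩
    · obtain ⟨y, hy, hr⟩ := one _ _ _ hB hβ' x hx
      exact ⟨y, Finset.mem_union_right _ hy, hr⟩
  · rintro y - x ⟨-, w, q, c, K1, hw, rfl, e⟩ x' ⟨-, w', q', c', K1', hw', rfl, e'⟩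
    subst e
    simp only [Prod.mk.injEq] at e'
    obtain ⟨rfl, e'⟩ := e'
    rw [cancel_map hS hg' (ex eSt g) hw hw' e']

theorem prefix_compare {α α' β β' : List Letter} {c c' : Letter}
    (h : α ++ c :: β = α' ++ c' :: β') (hne : α ≠ α') :
    (∃ γ, α' = α ++ c :: γ) ∨ ∃ γ, α = α' ++ c' :: γ := by
  rcases List.append_eq_append_iff.1 h with ⟨δ, h1, h2⟩ | ⟨δ, h1, h2⟩
  · cases δ with
    | nil => simp at h1; exact absurd h1.symm hne
    | cons d δ =>
      simp only [List.cons_append, List.cons.injEq] at h2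
      obtain ⟨rfl, _⟩ := h2
      exact Or.inl ⟨δ, h1⟩
  · cases δ with
    | nil => simp at h1; exact absurd h1 hne
    | cons d δ =>
      simp only [List.cons_append, List.cons.injEq] at h2
      obtain ⟨rfl, _⟩ := h2
      exact Or.inr ⟨δ, h1⟩

namespace Heads

variable (H : Heads S u)

open Classical in
/-- The counting step. Suppose `o` is a minimal influential test, made at `α' ⟨k,b⟩ γ`, and the
predicate `k` was already tested with head-dependent terms at `α'`. Moving the continuations of
the later test back to `α'` saves the tests of `⟨k,b⟩ γ`, at least one of which was true, and gives
an influential test at fewer true terms. -/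
theorem no_repeat {n : ℕ} {Q : Finset Key}
    (ih : ∀ O : Finset Key, O.card < n → (∀ x ∈ O, InK S u x.1) → ∀ θ, H.DT θ →
      H.res O = H.res (insert θ O))
    (hQ : Q.card = n + 1) (hQK : ∀ x ∈ Q, InK S u x.1)
    (hmin : ∀ o ∈ Q, H.DT o → H.res (Q.erase o) ≠ H.res Q)
    {s b : Bool} {α' γ β : List Letter} {k l l' : ℕ} {a a' : List ℕ}
    (hlam : H.lam s Q = (α' ++ .prd k l a b :: γ) ++ .prd k l' a' true :: β)
    (h' : H.DH α' k l a)
    (ho : H.DT (k, a'.map (ex (H.D s) (α' ++ .prd k l a b :: γ)))) : False := by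
  set α := α' ++ Letter.prd k l a b :: γ with hα
  set o : Key := (k, a'.map (ex (H.D s) α)) with ho'
  have sl := H.lam_steps s Q
  have sl0 := sl
  rw [hlam] at sl
  obtain ⟨K, sα, A, hA, sβ⟩ := steps_append.1 sl
  have sα0 := sα
  rw [hα] at sα
  obtain ⟨K', sα', C, hC, sγ⟩ := steps_append.1 sα
  -- both tests of `k` are made at the same program point
  have hK : K' = K := pred_point H.special.2.1 (H.full (s := s) sα') (H.full (s := s) sα0) hC hA
  subst hK
  obtain ⟨-, rfl, rfl⟩ := step_prd_same hC hA
  have tl : tr (H.D s) (H.lam s Q) =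
      tr (H.D s) α ++ (o, true) :: tr (ex (H.D s) α) β := by
    rw [hlam]; simp [ho']
  have oQ : o ∈ Q := (H.lam_val (s := s) (b := true) (by rw [tl]; simp)).1 rfl
  have hres := hmin o oQ ho
  have oα : ∀ b', (o, b') ∉ tr (H.D s) α := fun b' hb =>
    H.fresh2 sl hb (b' := true) (by simp [ho'])
  have oβ : ∀ b', (o, b') ∉ tr (ex (H.D s) α) β := fun b' hb => by
    have sl2 : Steps H.K0 ((α ++ [.prd k l a true]) ++ β) [] := by simpa using sl
    exact H.fresh2 (s := s) sl2 (k := o) (b := true) (b' := b') (by simp [ho']) (by simpa using hb)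
  -- the run with `o` made false shares the head `α`
  have ag : Agr (H.iS s (Q.erase o)) (H.D s) α := by
    rintro ⟨x, c⟩ hx
    have hxo : x ≠ o := by rintro rfl; exact oα _ hx
    have e1 := H.lam_val (s := s) (O := Q) (k := x) (b := c)
      (by rw [tl]; exact List.mem_append_left _ hx)
    have e2 := H.iS_val (s := s) (O := Q.erase o) sα0 hx
    rw [Finset.mem_erase, ← e1] at e2
    change H.iS s (Q.erase o) x = c
    rw [Bool.eq_iff_iff]
    tauto
  obtain ⟨w, hw, sw⟩ := prefix_of_agree sα0 ag (H.lam_steps s (Q.erase o)) (H.lam_agr s _)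
  obtain ⟨B, β', hB, sβ', rfl⟩ : ∃ B β', Step K' (.prd k l a false) B ∧ Steps B β' [] ∧
      w = .prd k l a false :: β' := by
    cases w with
    | nil => cases sw; exact absurd hA step_nil
    | cons c w =>
      obtain ⟨B, hB, sB⟩ := sw
      have hc : c = .prd k l a false := by
        by_contra hne
        have : c = .prd k l a true := by
          by_contra hne'
          obtain ⟨p, l0, a0, b0, e1, e2⟩ := step_alt hA hB (Ne.symm hne')
          cases e1
          exact hne e2
        subst this
        have := H.lam_val (s := s) (O := Q.erase o) (k := o) (b := true)
          (by rw [hw]; simp [ho'])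
        simp at this
      subst hc
      exact ⟨B, w, hB, sB, rfl⟩
  have tl' : tr (H.D s) (H.lam s (Q.erase o)) =
      tr (H.D s) α ++ (o, false) :: tr (ex (H.D s) α) β' := by
    rw [hw]; simp [ho']
  have valβ : ∀ x c, (x, c) ∈ tr (ex (H.D s) α) β → (c = true ↔ x ∈ Q) := fun x c hx =>
    H.lam_val (s := s) (by rw [tl]; simp [hx])
  have valβ' : ∀ x c, (x, c) ∈ tr (ex (H.D s) α) β' → (c = true ↔ x ∈ Q.erase o) :=
    fun x c hx => H.lam_val (s := s) (by rw [tl']; simp [hx])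
  have cpl : Cpl u (ex (H.D s) α) β β' := by
    refine ⟨fun x c c' h1 h2 => ?_, fun he => hres ?_⟩
    · have hxo : x ≠ o := by rintro rfl; exact oβ _ h1
      have e1 := valβ x c h1
      have e2 := valβ' x c' h2
      rw [Finset.mem_erase, ← e1] at e2
      rw [Bool.eq_iff_iff]
      tauto
    · rw [H.res_eq s, H.res_eq s, hlam, hw]
      simpa using he.symm
  have cpl' : Cpl u (ex (H.D s) α') β β' := by
    have := cpl_transfer H.special (u := u) (g := H.h s ++ α) (g' := H.h s ++ α')
      (H.full sα') hA hB sβ sβ' (by simpa [D] using cpl)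
    simpa [D] using this
  obtain ⟨O, hOK, hOsub, hO⟩ := H.couple_res (s := s) sα' hA hB sβ sβ' cpl'
  refine hO (ih O ?_ hOK _ ⟨α', k, l, a, s, h', rfl⟩)
  -- the three disjoint groups of true terms
  set A1 := TK S u (H.D s) α'
  set A2 := TK S u (ex (H.D s) α') (.prd k l a b :: γ)
  set A3 := TK S u (ex (H.D s) α) β ∪ TK S u (ex (H.D s) α) β'
  have exα : ex (H.D s) α = ex (ex (H.D s) α') (.prd k l a b :: γ) := by simp [hα]
  have trα : tr (H.D s) α = tr (H.D s) α' ++ tr (ex (H.D s) α') (.prd k l a b :: γ) := by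
    rw [hα, tr_append]
  have c3 : (TK S u (ex (H.D s) α') β ∪ TK S u (ex (H.D s) α') β').card ≤ A3.card := by
    have := TK_card H.special (u := u) (g := H.h s ++ α') (g' := H.h s ++ α)
      (H.full sα0) hA hB sβ sβ'
    simpa [D, A3] using this
  have c2 : 0 < A2.card := by
    rw [Finset.card_pos]
    obtain ⟨p, m, c, hp⟩ := no_return (c := .prd k l a b) (σ := γ) (K := K') ⟨C, hC, sγ⟩
    obtain ⟨γ1, γ2, e⟩ := List.append_of_mem hp
    have hm : ((p, c.map (ex (ex (H.D s) α') γ1)), true) ∈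
        tr (ex (H.D s) α') (.prd k l a b :: γ) :=
      mem_tr.2 ⟨γ1, p, m, c, true, γ2, e, rfl⟩
    refine ⟨_, mem_TK.2 ⟨hm, ?_⟩⟩
    refine hQK _ ((H.lam_val (s := s) (b := true) ?_).1 rfl)
    rw [tl, trα]
    exact List.mem_append_left _ (List.mem_append_right _ hm)
  have subα : ∀ x, (x, true) ∈ tr (H.D s) α → x ∈ Q.erase o := fun x hx =>
    Finset.mem_erase.2 ⟨by rintro rfl; exact oα _ hx,
      (H.lam_val (s := s) (b := true) (by rw [tl]; exact List.mem_append_left _ hx)).1 rfl⟩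
  have fr3 : ∀ x, x ∈ A3 → (x, true) ∉ tr (H.D s) α := by
    intro x hx hx'
    rcases Finset.mem_union.1 hx with hx | hx
    · exact H.fresh2 sl hx' (b' := true) (by simp [(mem_TK.1 hx).1])
    · have := H.lam_steps s (Q.erase o)
      rw [hw] at this
      exact H.fresh2 this hx' (b' := true) (by simp [(mem_TK.1 hx).1])
  have d12 : Disjoint A1 A2 := by
    rw [Finset.disjoint_left]
    intro x h1 h2
    exact H.fresh2 (s := s) sα (mem_TK.1 h1).1 (mem_TK.1 h2).1
  have d3 : Disjoint (A1 ∪ A2) A3 := by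
    rw [Finset.disjoint_left]
    intro x h1 h2
    refine fr3 x h2 ?_
    rw [trα, List.mem_append]
    rcases Finset.mem_union.1 h1 with h1 | h1
    · exact Or.inl (mem_TK.1 h1).1
    · exact Or.inr (mem_TK.1 h1).1
  have sub : (A1 ∪ A2) ∪ A3 ⊆ Q.erase o := by
    intro x hx
    rcases Finset.mem_union.1 hx with hx | hx
    · refine subα x ?_
      rw [trα, List.mem_append]
      rcases Finset.mem_union.1 hx with h1 | h1
      · exact Or.inl (mem_TK.1 h1).1
      · exact Or.inr (mem_TK.1 h1).1
    · rcases Finset.mem_union.1 hx with h1 | h1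
      · have h2 := (mem_TK.1 h1).1
        exact Finset.mem_erase.2 ⟨by rintro rfl; exact oβ _ h2, (valβ _ _ h2).1 rfl⟩
      · exact (valβ' _ _ (mem_TK.1 h1).1).1 rfl
  have e1 := Finset.card_le_card sub
  rw [Finset.card_union_of_disjoint d3, Finset.card_union_of_disjoint d12,
    Finset.card_erase_of_mem oQ, hQ] at e1
  have e2 := (Finset.card_le_card hOsub).trans (Finset.card_union_le _ _)
  omega

open Classical in
theorem claim : ∀ (n : ℕ) (O : Finset Key), O.card = n → (∀ x ∈ O, InK S u x.1) →
    ∀ θ, H.DT θ → H.res O = H.res (insert θ O) := by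
  intro n
  induction n using Nat.strong_induction_on with
  | _ n ih0 =>
  have ih : ∀ O : Finset Key, O.card < n → (∀ x ∈ O, InK S u x.1) → ∀ θ, H.DT θ →
      H.res O = H.res (insert θ O) := fun O hO => ih0 _ hO O rfl
  intro O hO hOK θ hθ
  by_contra hne
  have hθO : θ ∉ O := fun h => hne (by rw [Finset.insert_eq_of_mem h])
  set Q := insert θ O with hQdef
  have hQ : Q.card = n + 1 := by rw [hQdef, Finset.card_insert_of_notMem hθO, hO]
  have hQK : ∀ x ∈ Q, InK S u x.1 := by
    intro x hx
    rcases Finset.mem_insert.1 hx with rfl | hx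
    · exact hθ.inK
    · exact hOK x hx
  have hmin : ∀ o ∈ Q, H.DT o → H.res (Q.erase o) ≠ H.res Q := by
    intro o ho hoT
    by_cases e : o = θ
    · subst e
      rwa [hQdef, Finset.erase_insert hθO]
    · have hoO : o ∈ O := (Finset.mem_insert.1 ho).resolve_left e
      have c : (O.erase o).card < n := by
        rw [← hO]; exact Finset.card_erase_lt_of_mem hoO
      have kK : ∀ x ∈ O.erase o, InK S u x.1 := fun x hx => hOK x (Finset.mem_of_mem_erase hx)
      have e1 := ih _ c kK o hoT
      have e2 := ih _ c kK θ hθ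
      rw [Finset.insert_erase hoO] at e1
      have e3 : Q.erase o = insert θ (O.erase o) := by
        rw [hQdef, Finset.erase_insert_of_ne (Ne.symm e)]
      rw [e3, ← e2, e1]
      exact hne
  -- every head-dependent term of `Q` is tested, with outcome true, whichever head is used
  have tested : ∀ o ∈ Q, H.DT o → ∀ s, ∃ α k l a β, H.lam s Q = α ++ .prd k l a true :: β ∧
      o = (k, a.map (ex (H.D s) α)) ∧ H.DH α k l a := by
    intro o ho hoT s
    have : ∃ b, (o, b) ∈ tr (H.D s) (H.lam s Q) := by
      by_contra hc
      push Not at hc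
      refine hmin o ho hoT ?_
      rw [H.res_eq s Q]
      refine H.res_of_path (H.lam_steps s Q) fun k b hk hb => ?_
      rw [H.lam_val hb, Finset.mem_erase]
      have : k ≠ o := by rintro rfl; exact hc _ hb
      tauto
    obtain ⟨b, hb⟩ := this
    have hbt := (H.lam_val hb).2 ho
    subst hbt
    obtain ⟨α, k, l, a, b, β, e1, e2⟩ := mem_tr.1 hb
    simp only [Prod.mk.injEq] at e2
    obtain ⟨e2, rfl⟩ := e2
    have sl := H.lam_steps s Q
    rw [e1] at sl
    obtain ⟨K, sα, A, hA, _⟩ := steps_append.1 sl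
    exact ⟨α, k, l, a, β, e1, e2, H.DT_head hoT sα hA e2⟩
  have θQ : θ ∈ Q := Finset.mem_insert_self _ _
  by_cases hl : H.lam true Q = H.lam false Q
  · obtain ⟨α, k, l, a, β, e1, e2, e3⟩ := tested θ θQ hθ true
    obtain ⟨α', k', l', a', β', e1', e2', e3'⟩ := tested θ θQ hθ false
    have ek : k = k' := by rw [e2] at e2'; exact (Prod.mk.inj e2').1
    subst ek
    have hαα : α ≠ α' := by
      rintro rfl
      have hn := e3.ne true
      obtain ⟨K, A, s1, s2, -⟩ := e3
      obtain ⟨K', A', s1', s2', -⟩ := e3'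
      cases steps_det s1 s1'
      obtain ⟨-, -, rfl⟩ := step_prd_same s2 s2'
      rw [e2] at e2'
      exact hn (Prod.mk.inj e2').2
    have hh : α ++ .prd k l a true :: β = α' ++ .prd k l' a' true :: β' := by
      rw [← e1, ← e1', hl]
    rcases prefix_compare hh hαα with ⟨γ, rfl⟩ | ⟨γ, rfl⟩
    · exact H.no_repeat ih hQ hQK hmin e1' e3 (e2' ▸ hθ)
    · exact H.no_repeat ih hQ hQK hmin e1 e3' (e2 ▸ hθ)
  · -- the two continuations part at a test `q`, true on the side `s`
    obtain ⟨s, π, q, m, c, σ, τ, K1, A, eσ, eτ, sπ, hA⟩ : ∃ s π q m c σ τ K1 A,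
        H.lam s Q = π ++ .prd q m c true :: σ ∧
        H.lam (!s) Q = π ++ .prd q m c false :: τ ∧ Steps H.K0 π K1 ∧
        Step K1 (.prd q m c true) A := by
      obtain ⟨π, q, m, c, b, σ, τ, K1, A, B, h1, h2, h3, h4, -, h5, -⟩ :=
        diverge (H.lam_steps true Q) (H.lam_steps false Q) hl
      cases b with
      | true => exact ⟨true, π, q, m, c, σ, τ, K1, A, h1, h2, h3, h4⟩
      | false => exact ⟨false, π, q, m, c, τ, σ, K1, B, h2, h1, h3, h5⟩
    have v1 : (q, c.map (ex (H.D s) π)) ∈ Q :=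
      (H.lam_val (s := s) (b := true) (by rw [eσ]; simp)).1 rfl
    have v2 : (q, c.map (ex (H.D (!s)) π)) ∉ Q := fun h =>
      Bool.noConfusion ((H.lam_val (s := !s) (b := false) (by rw [eτ]; simp)).2 h)
    have hπ : H.DH π q m c := by
      refine ⟨K1, A, sπ, hA, hQK _ v1, fun e => v2 ?_⟩
      cases s
      · simpa [e] using v1
      · simpa [← e] using v1
    have hT : H.DT (q, c.map (ex (H.D s) π)) := ⟨π, q, m, c, s, hπ, rfl⟩
    obtain ⟨α, k, l, a, β, e1, e2, e3⟩ := tested _ v1 hT (!s)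
    have ek : q = k := (Prod.mk.inj e2).1
    subst ek
    have hne2 : α ≠ π := by
      rintro rfl
      rw [e1] at eτ
      have := (List.append_cancel_left eτ)
      simp at this
    rcases prefix_compare (e1.symm.trans eτ) hne2 with ⟨γ, rfl⟩ | ⟨γ, rfl⟩
    · exact H.no_repeat ih hQ hQK hmin eσ e3 hT
    · exact H.no_repeat ih hQ hQK hmin e1 hπ (e2 ▸ hT)

/-- A relevant test made after the heads has the same argument terms after both. -/
theorem test_eq {μ : List Letter} {K A : Stack} {k l : ℕ} {a : List ℕ} {b : Bool}
    (hμ : Steps H.K0 μ K) (hs : Step K (.prd k l a b) A) (hk : InK S u k) :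
    a.map (ex (H.D true) μ) = a.map (ex (H.D false) μ) := by
  classical
  by_contra hne
  obtain ⟨A, B, β, β', hA, hB, hβ, hβ', hc⟩ := hk.at H.special (H.full (s := true) hμ) hs
  obtain ⟨O, hO, -, h⟩ := H.couple_res (s := true) hμ hA hB hβ hβ' (by simpa [D] using hc)
  exact h (H.claim _ O rfl hO _ ⟨μ, k, l, a, true, ⟨K, A, hμ, hA, hk, hne⟩, rfl⟩)

/-- A complete continuation of the heads computes the same value of `u` after both. -/
theorem var_eq {w : List Letter} (hw : Steps H.K0 w []) :
    ex (H.D true) w u = ex (H.D false) w u := by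
  have key : ex eSt (H.h true ++ w) u = ex eSt (H.h false ++ w) u := by
    refine compat H.special (H.full hw) (H.full hw) ?_
    intro k b b' hk h1 h2
    rw [tr_append, List.mem_append] at h1 h2
    rcases h1 with h1 | h1 <;> rcases h2 with h2 | h2
    · exact key_unique H.special (H.reach true) h1 (H.kc false true k b' hk h2)
    · exact (H.fresh (s := false) hw (H.kc true false k b hk h1) h2).elim
    · exact (H.fresh (s := true) hw (H.kc false true k b' hk h2) h1).elim
    · obtain ⟨w1, p, l, a, b0, w2, rfl, e⟩ := mem_tr.1 h2
      simp only [Prod.mk.injEq] at e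
      obtain ⟨rfl, rfl⟩ := e
      obtain ⟨K1, s1, A, hA, _⟩ := steps_append.1 hw
      have := H.test_eq s1 hA hk
      refine H.uniq hw h1 (mem_tr.2 ⟨w1, p, l, a, b', w2, rfl, ?_⟩)
      rw [this]; rfl
  simpa [D] using key

end Heads

end SchemaSlicing

namespace SchemaSlicing

variable {S : Schema} {u : ℕ}

/-! ### Paths through a substatement -/

theorem split_mid {x y P1 P2 : List Letter} {c : Letter} (h : P1 ++ c :: P2 = x ++ y) :
    (∃ r, x = P1 ++ c :: r ∧ P2 = r ++ y) ∨ ∃ r, y = r ++ c :: P2 ∧ P1 = x ++ r := by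
  rcases List.append_eq_append_iff.1 h with ⟨δ, h1, h2⟩ | ⟨δ, h1, h2⟩
  · cases δ with
    | nil => exact Or.inr ⟨[], by simpa using h2.symm, by simpa using h1.symm⟩
    | cons d δ =>
      simp only [List.cons_append, List.cons.injEq] at h2
      obtain ⟨rfl, h2⟩ := h2
      exact Or.inl ⟨δ, h1, h2⟩
  · exact Or.inr ⟨δ, h2, h1⟩

theorem whileIter_letters {p l : ℕ} {a : List ℕ} {B : Set (List Letter)} {Q : LSym → Prop}
    (hB : ∀ x ∈ B, ∀ c ∈ x, Q (lsymOf c)) (hp : Q (.pr p l)) :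
    ∀ n, ∀ x ∈ whileIter p l a B n, ∀ c ∈ x, Q (lsymOf c) := by
  intro n
  induction n with
  | zero => rintro x rfl c hc; simp only [List.mem_singleton] at hc; subst hc; exact hp
  | succ n ih =>
    rintro x ⟨y, hy, z, hz, rfl⟩ c hc
    rcases List.mem_cons.1 hc with rfl | hc
    · exact hp
    · rcases List.mem_append.1 hc with hc | hc
      · exact hB y hy c hc
      · exact ih z hz c hc

theorem letter_lsym : ∀ (X : Schema) (x : List Letter), x ∈ Paths X → ∀ c ∈ x,
    lsymOf c ∈ lsymSet X := by
  intro X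
  induction X with
  | skip => rintro x rfl c hc; simp at hc
  | assign y f l a => rintro x rfl c hc; simp only [List.mem_singleton] at hc; subst hc; rfl
  | seq A B ihA ihB =>
    rintro x ⟨y, hy, z, hz, rfl⟩ c hc
    rcases List.mem_append.1 hc with hc | hc
    · exact Or.inl (ihA y hy c hc)
    · exact Or.inr (ihB z hz c hc)
  | ite p l a t e iht ihe =>
    rintro x (⟨y, hy, rfl⟩ | ⟨y, hy, rfl⟩) c hc <;> rcases List.mem_cons.1 hc with rfl | hc
    · exact Or.inl rfl
    · exact Or.inr (Or.inl (iht y hy c hc))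
    · exact Or.inl rfl
    · exact Or.inr (Or.inr (ihe y hy c hc))
  | whil p l a b ih =>
    rintro x ⟨n, hn⟩
    exact whileIter_letters (Q := fun z => z ∈ lsymSet (.whil p l a b))
      (fun x hx c hc => Or.inr (ih x hx c hc)) (Or.inl rfl) n x hn

theorem whileIter_assigns {p l : ℕ} {a : List ℕ} {B : Set (List Letter)} {c : Letter}
    (hc : ∀ q m d b, c ≠ .prd q m d b) :
    ∀ n, ∀ x ∈ whileIter p l a B n, c ∈ x → ∃ y ∈ B, c ∈ y := by
  intro n
  induction n with
  | zero => rintro x rfl h; simp only [List.mem_singleton] at h; exact absurd h (hc _ _ _ _)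
  | succ n ih =>
    rintro x ⟨y, hy, z, hz, rfl⟩ h
    rcases List.mem_cons.1 h with h | h
    · exact absurd h (hc _ _ _ _)
    · rcases List.mem_append.1 h with h | h
      · exact ⟨y, hy, h⟩
      · exact ih z hz h

theorem letter_assigns {v f l : ℕ} {a : List ℕ} : ∀ (X : Schema) (x : List Letter),
    x ∈ Paths X → Letter.asn v f l a ∈ x → AssignsWith X f v := by
  intro X
  induction X with
  | skip => rintro x rfl hc; simp at hc
  | assign y g m b =>
    rintro x rfl hc
    simp only [List.mem_singleton, Letter.asn.injEq] at hc
    exact ⟨hc.2.1.symm, hc.1.symm⟩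
  | seq A B ihA ihB =>
    rintro x ⟨y, hy, z, hz, rfl⟩ hc
    rcases List.mem_append.1 hc with hc | hc
    · exact Or.inl (ihA y hy hc)
    · exact Or.inr (ihB z hz hc)
  | ite p m b t e iht ihe =>
    rintro x (⟨y, hy, rfl⟩ | ⟨y, hy, rfl⟩) hc
    · exact Or.inl (iht y hy (by simpa using hc))
    · exact Or.inr (ihe y hy (by simpa using hc))
  | whil p m a b ih =>
    rintro x ⟨n, hn⟩ hc
    obtain ⟨y, hy, h⟩ := whileIter_assigns (by simp) n x hn hc
    exact ih y hy h

theorem lsym_count {z : LSym} : ∀ X : Schema, z ∈ lsymSet X → 1 ≤ lsymCount X z := by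
  intro X
  induction X with
  | skip => intro h; exact h.elim
  | assign y f l a => intro h; cases h; simp [lsymCount]
  | seq A B ihA ihB =>
    rintro (h | h)
    · have := ihA h; simp only [lsymCount]; omega
    · have := ihB h; simp only [lsymCount]; omega
  | ite p l a t e iht ihe =>
    rintro (h | h | h)
    · simp only [lsymCount, h, if_true]; omega
    · have := iht h; simp only [lsymCount]; omega
    · have := ihe h; simp only [lsymCount]; omega
  | whil p l a b ih =>
    rintro (h | h)
    · simp only [lsymCount, h, if_true]; omega
    · have := ih h; simp only [lsymCount]; omega

theorem occurs_lsym {X : Schema} {z : LSym} (h : Occurs X S) (hz : z ∈ lsymSet X) :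
    z ∈ lsymSet S := by
  induction h with
  | refl => exact hz
  | seqL _ ih => exact Or.inl ih
  | seqR _ ih => exact Or.inr ih
  | iteT _ ih => exact Or.inr (Or.inl ih)
  | iteF _ ih => exact Or.inr (Or.inr ih)
  | whilB _ ih => exact Or.inr ih

theorem pred_count {p l : ℕ} : ∀ X : Schema, LSym.pr p l ∈ lsymSet X → 1 ≤ predCount X p := by
  intro X
  induction X with
  | skip => intro h; exact h.elim
  | assign y f l a => intro h; cases h
  | seq A B ihA ihB =>
    rintro (h | h)
    · have := ihA h; simp only [predCount]; omega
    · have := ihB h; simp only [predCount]; omega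
  | ite q m a t e iht ihe =>
    rintro (h | h | h)
    · cases h; simp only [predCount, if_true]; omega
    · have := iht h; simp only [predCount]; omega
    · have := ihe h; simp only [predCount]; omega
  | whil q m a b ih =>
    rintro (h | h)
    · cases h; simp only [predCount, if_true]; omega
    · have := ih h; simp only [predCount]; omega

theorem pred_label {p l l' : ℕ} : ∀ X : Schema, predCount X p ≤ 1 → LSym.pr p l ∈ lsymSet X →
    LSym.pr p l' ∈ lsymSet X → l = l' := by
  intro X
  induction X with
  | skip => intro _ h; exact h.elim
  | assign y f l a => intro _ h; cases h
  | seq A B ihA ihB =>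
    simp only [predCount]
    rintro hc (h | h) (h' | h')
    · exact ihA (by omega) h h'
    · have := pred_count _ h; have := pred_count _ h'; omega
    · have := pred_count _ h; have := pred_count _ h'; omega
    · exact ihB (by omega) h h'
  | ite q m a t e iht ihe =>
    simp only [predCount]
    rintro hc (h | h | h) (h' | h' | h')
    · cases h; cases h'; rfl
    · cases h; have := pred_count _ h'; simp only [if_true] at hc; omega
    · cases h; have := pred_count _ h'; simp only [if_true] at hc; omega
    · cases h'; have := pred_count _ h; simp only [if_true] at hc; omega
    · exact iht (by omega) h h'
    · have := pred_count _ h; have := pred_count _ h'; omega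
    · cases h'; have := pred_count _ h; simp only [if_true] at hc; omega
    · have := pred_count _ h; have := pred_count _ h'; omega
    · exact ihe (by omega) h h'
  | whil q m a b ih =>
    simp only [predCount]
    rintro hc (h | h) (h' | h')
    · cases h; cases h'; rfl
    · cases h; have := pred_count _ h'; simp only [if_true] at hc; omega
    · cases h'; have := pred_count _ h; simp only [if_true] at hc; omega
    · exact ih (by omega) h h'

theorem reach_occurs {X : Schema} (h : Occurs X S) :
    ∀ K, ∃ σ K', Steps (push S K) σ (push X K') := by
  induction h with
  | refl => exact fun K => ⟨[], K, rfl⟩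
  | seqL _ ih => exact fun K => ih _
  | @seqR A B _ ih =>
    intro K
    obtain ⟨x, hx⟩ := paths_nonempty A
    obtain ⟨σ, K', h⟩ := ih K
    exact ⟨x ++ σ, K', steps_append.2 ⟨_, path_steps A _ x hx, h⟩⟩
  | iteT _ ih =>
    intro K
    obtain ⟨σ, K', h⟩ := ih K
    exact ⟨_ :: σ, K', _, .iteT .., h⟩
  | iteF _ ih =>
    intro K
    obtain ⟨σ, K', h⟩ := ih K
    exact ⟨_ :: σ, K', _, .iteF .., h⟩
  | @whilB b p l a _ ih =>
    intro K
    obtain ⟨σ, K', h⟩ := ih (.whil p l a b :: K)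
    exact ⟨_ :: σ, K', _, .whT .., h⟩

theorem while_split {p l : ℕ} {a : List ℕ} {b : Schema} {c : Letter} (hc : lsymOf c ≠ .pr p l) :
    ∀ n (P1 P2 : List Letter), P1 ++ c :: P2 ∈ whileIter p l a (Paths b) n →
    ∃ σ x1 x2 τ, P1 = σ ++ x1 ∧ P2 = x2 ++ τ ∧ x1 ++ c :: x2 ∈ Paths b ∧
      ∀ K, Steps (.whil p l a b :: K) σ (push b (.whil p l a b :: K)) ∧
        Steps (.whil p l a b :: K) τ K := by
  intro n
  induction n with
  | zero =>
    intro P1 P2 h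
    have hm : c ∈ P1 ++ c :: P2 := by simp
    rw [show P1 ++ c :: P2 = _ from h, List.mem_singleton] at hm
    subst hm; exact absurd rfl hc
  | succ n ih =>
    rintro P1 P2 ⟨x, hx, y, hy, e⟩
    cases P1 with
    | nil =>
      simp only [List.nil_append, List.cons.injEq] at e
      rw [e.1] at hc; exact absurd rfl hc
    | cons d P1 =>
      simp only [List.cons_append, List.cons.injEq] at e
      obtain ⟨rfl, e⟩ := e
      rcases split_mid e with ⟨r, rfl, rfl⟩ | ⟨r, rfl, rfl⟩
      · refine ⟨[.prd p l a true], P1, r, y, rfl, rfl, hx, fun K => ⟨⟨_, .whT .., rfl⟩, ?_⟩⟩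
        exact path_steps (.whil p l a b) K y ⟨n, hy⟩
      · obtain ⟨σ, x1, x2, τ, rfl, rfl, h1, h2⟩ := ih _ _ hy
        refine ⟨.prd p l a true :: (x ++ σ), x1, x2, τ, by simp, rfl, h1, fun K => ⟨?_, (h2 K).2⟩⟩
        exact ⟨_, .whT .., steps_append.2 ⟨_, path_steps b _ x hx, (h2 K).1⟩⟩

/-- A letter on a path of `S` that stems from a statement `X` of `S` lies on a path through the
whole of `X`. -/
theorem decomp {X : Schema} (h : Occurs X S) : ∀ (P1 : List Letter) (c : Letter)
    (P2 : List Letter), P1 ++ c :: P2 ∈ Paths S → lsymOf c ∈ lsymSet X →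
    lsymCount S (lsymOf c) ≤ 1 →
    ∃ σ ξ1 ξ2 τ, P1 = σ ++ ξ1 ∧ P2 = ξ2 ++ τ ∧ ξ1 ++ c :: ξ2 ∈ Paths X ∧
      ∀ K, ∃ K', Steps (push S K) σ (push X K') ∧ Steps K' τ K := by
  induction h with
  | refl => exact fun P1 c P2 hP _ _ => ⟨[], P1, P2, [], rfl, by simp, hP, fun K => ⟨K, rfl, rfl⟩⟩
  | @seqL A B hX ih =>
    rintro P1 c P2 ⟨x, hx, y, hy, e⟩ hc hn
    have c1 := lsym_count _ (occurs_lsym hX hc)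
    simp only [lsymCount] at hn
    rcases split_mid e with ⟨r, rfl, rfl⟩ | ⟨r, rfl, rfl⟩
    · obtain ⟨σ, ξ1, ξ2, τ, rfl, rfl, h1, h2⟩ := ih _ _ _ hx hc (by omega)
      refine ⟨σ, ξ1, ξ2, τ ++ y, rfl, by simp, h1, fun K => ?_⟩
      obtain ⟨K', h3, h4⟩ := h2 (push B K)
      exact ⟨K', h3, steps_append.2 ⟨_, h4, path_steps B K y hy⟩⟩
    · have := lsym_count _ (letter_lsym B _ hy c (by simp))
      omega
  | @seqR A B hX ih =>
    rintro P1 c P2 ⟨x, hx, y, hy, e⟩ hc hn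
    have c1 := lsym_count _ (occurs_lsym hX hc)
    simp only [lsymCount] at hn
    rcases split_mid e with ⟨r, rfl, rfl⟩ | ⟨r, rfl, rfl⟩
    · have := lsym_count _ (letter_lsym A _ hx c (by simp))
      omega
    · obtain ⟨σ, ξ1, ξ2, τ, rfl, rfl, h1, h2⟩ := ih _ _ _ hy hc (by omega)
      refine ⟨x ++ σ, ξ1, ξ2, τ, by simp, rfl, h1, fun K => ?_⟩
      obtain ⟨K', h3, h4⟩ := h2 K
      exact ⟨K', steps_append.2 ⟨_, path_steps A _ x hx, h3⟩, h4⟩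
  | @iteT t e p l a hX ih =>
    intro P1 c P2 hP hc hn
    have c1 := lsym_count _ (occurs_lsym hX hc)
    simp only [lsymCount] at hn
    have hne : lsymOf c ≠ .pr p l := by
      intro h; rw [if_pos h] at hn; omega
    have key : ∀ b x, P1 ++ c :: P2 = .prd p l a b :: x →
        ∃ P, P1 = .prd p l a b :: P ∧ P ++ c :: P2 = x := by
      intro b x h
      cases P1 with
      | nil => simp only [List.nil_append, List.cons.injEq] at h; rw [h.1] at hne; exact absurd rfl hne
      | cons d P1 => simp only [List.cons_append, List.cons.injEq] at h; exact ⟨P1, by rw [h.1], h.2⟩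
    rcases hP with ⟨x, hx, e⟩ | ⟨x, hx, e⟩ <;> obtain ⟨P1, rfl, rfl⟩ := key _ _ e
    · obtain ⟨σ, ξ1, ξ2, τ, rfl, rfl, h1, h2⟩ := ih _ _ _ hx hc (by omega)
      refine ⟨_ :: σ, ξ1, ξ2, τ, rfl, rfl, h1, fun K => ?_⟩
      obtain ⟨K', h3, h4⟩ := h2 K
      exact ⟨K', ⟨_, .iteT .., h3⟩, h4⟩
    · have := lsym_count _ (letter_lsym _ _ hx c (by simp))
      omega
  | @iteF t e p l a hX ih =>
    intro P1 c P2 hP hc hn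
    have c1 := lsym_count _ (occurs_lsym hX hc)
    simp only [lsymCount] at hn
    have hne : lsymOf c ≠ .pr p l := by
      intro h; rw [if_pos h] at hn; omega
    have key : ∀ b x, P1 ++ c :: P2 = .prd p l a b :: x →
        ∃ P, P1 = .prd p l a b :: P ∧ P ++ c :: P2 = x := by
      intro b x h
      cases P1 with
      | nil => simp only [List.nil_append, List.cons.injEq] at h; rw [h.1] at hne; exact absurd rfl hne
      | cons d P1 => simp only [List.cons_append, List.cons.injEq] at h; exact ⟨P1, by rw [h.1], h.2⟩
    rcases hP with ⟨x, hx, e⟩ | ⟨x, hx, e⟩ <;> obtain ⟨P1, rfl, rfl⟩ := key _ _ e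
    · have := lsym_count _ (letter_lsym _ _ hx c (by simp))
      omega
    · obtain ⟨σ, ξ1, ξ2, τ, rfl, rfl, h1, h2⟩ := ih _ _ _ hx hc (by omega)
      refine ⟨_ :: σ, ξ1, ξ2, τ, rfl, rfl, h1, fun K => ?_⟩
      obtain ⟨K', h3, h4⟩ := h2 K
      exact ⟨K', ⟨_, .iteF .., h3⟩, h4⟩
  | @whilB b p l a hX ih =>
    rintro P1 c P2 ⟨n, hP⟩ hc hn
    have c1 := lsym_count _ (occurs_lsym hX hc)
    simp only [lsymCount] at hn
    have hne : lsymOf c ≠ .pr p l := by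
      intro h; rw [if_pos h] at hn; omega
    obtain ⟨σ, x1, x2, τ, rfl, rfl, h1, h2⟩ := while_split hne n _ _ hP
    obtain ⟨σ', ξ1, ξ2, τ', rfl, rfl, h3, h4⟩ := ih _ _ _ h1 hc (by omega)
    refine ⟨σ ++ σ', ξ1, ξ2, τ' ++ τ, by simp, by simp, h3, fun K => ?_⟩
    obtain ⟨K', h5, h6⟩ := h4 (.whil p l a b :: K)
    exact ⟨K', steps_append.2 ⟨_, (h2 K).1, h5⟩, steps_append.2 ⟨_, h6, (h2 K).2⟩⟩

/-! ### Relevance passes to controlling predicates -/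

/-- A controlled symbol lies on one side of its controlling predicate: paths reaching the symbol
read that side. The false side is possible for if predicates only. -/
theorem ctrl_side (hS : Special S) {p l : ℕ} {z : LSym} (h : ControlsL S p l z)
    (hz : z ≠ .pr p l) : ∃ b0,
    (b0 = true ∨ ∀ g l' a' b K, ¬ Steps (init S) g (.whil p l' a' b :: K)) ∧
    ∀ P ∈ Paths S, ∀ c ∈ P, lsymOf c = z → ∃ a, Letter.prd p l a b0 ∈ P := by
  rcases h with ⟨a, t, e, hX, hz'⟩ | ⟨a, b, hX, hz'⟩
  · have nowh : ∀ g l' a' b K, ¬ Steps (init S) g (.whil p l' a' b :: K) := by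
      intro g l' a' b K hg
      obtain ⟨σ, K', hσ⟩ := reach_occurs hX []
      have := pred_point hS.2.1 hg hσ (.whT ..) (.iteT ..)
      cases this
    have main : ∀ P ∈ Paths S, ∀ c ∈ P, lsymOf c = z →
        ∃ x, ((x ∈ Paths t ∧ c ∈ x ∧ Letter.prd p l a true ∈ P) ∨
          (x ∈ Paths e ∧ c ∈ x ∧ Letter.prd p l a false ∈ P)) := by
      intro P hP c hc he
      obtain ⟨P1, P2, rfl⟩ := List.append_of_mem hc
      obtain ⟨σ, ξ1, ξ2, τ, rfl, rfl, h1, -⟩ := decomp hX P1 c P2 hP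
        (by rw [he]; exact Or.inr hz') (hS.1 _)
      have hcm : c ∈ ξ1 ++ c :: ξ2 := by simp
      have sub : ∀ d ∈ ξ1 ++ c :: ξ2, d ∈ σ ++ ξ1 ++ c :: (ξ2 ++ τ) := by
        intro d hd
        simp only [List.mem_append, List.mem_cons] at hd ⊢
        tauto
      rcases h1 with ⟨x, hx, e1⟩ | ⟨x, hx, e1⟩ <;> rw [e1] at hcm sub <;>
        rcases List.mem_cons.1 hcm with hh | hh
      · rw [hh] at he; exact absurd he.symm hz
      · exact ⟨x, Or.inl ⟨hx, hh, sub _ (by simp)⟩⟩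
      · rw [hh] at he; exact absurd he.symm hz
      · exact ⟨x, Or.inr ⟨hx, hh, sub _ (by simp)⟩⟩
    have excl : z ∈ lsymSet t → z ∈ lsymSet e → False := by
      intro h1 h2
      obtain h3 := hS.1 z
      have : ∀ {A B : Schema}, Occurs A B → lsymCount A z ≤ lsymCount B z := by
        intro A B h
        induction h with
        | refl => exact le_rfl
        | _ => simp only [lsymCount]; omega
      have h4 := this hX
      have := lsym_count _ h1
      have := lsym_count _ h2
      simp only [lsymCount] at h4
      omega
    rcases hz' with hz' | hz'
    · refine ⟨true, Or.inl rfl, fun P hP c hc he => ?_⟩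
      obtain ⟨x, ⟨_, _, h⟩ | ⟨h1, h2, _⟩⟩ := main P hP c hc he
      · exact ⟨a, h⟩
      · exact (excl hz' (he ▸ letter_lsym _ _ h1 _ h2)).elim
    · refine ⟨false, Or.inr nowh, fun P hP c hc he => ?_⟩
      obtain ⟨x, ⟨h1, h2, _⟩ | ⟨_, _, h⟩⟩ := main P hP c hc he
      · exact (excl (he ▸ letter_lsym _ _ h1 _ h2) hz').elim
      · exact ⟨a, h⟩
  · refine ⟨true, Or.inl rfl, fun P hP c hc he => ?_⟩
    obtain ⟨P1, P2, rfl⟩ := List.append_of_mem hc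
    obtain ⟨σ, ξ1, ξ2, τ, rfl, rfl, ⟨n, h1⟩, -⟩ := decomp hX P1 c P2 hP
      (by rw [he]; exact Or.inr hz') (hS.1 _)
    refine ⟨a, ?_⟩
    have hcm : c ∈ ξ1 ++ c :: ξ2 := by simp
    have sub : ∀ d ∈ ξ1 ++ c :: ξ2, d ∈ σ ++ ξ1 ++ c :: (ξ2 ++ τ) := by
      intro d hd
      simp only [List.mem_append, List.mem_cons] at hd ⊢
      tauto
    cases n with
    | zero =>
      rw [show ξ1 ++ c :: ξ2 = _ from h1, List.mem_singleton] at hcm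
      rw [hcm] at he; exact absurd he.symm hz
    | succ n =>
      obtain ⟨x, _, y, _, e1⟩ := h1
      exact sub _ (by rw [e1]; simp)

open Classical in
/-- A predicate controlling a relevant predicate is relevant: otherwise its outcomes could be
fixed so that the controlled predicate is never tested, without affecting `u`. -/
theorem InK.ctrl (hS : Special S) {p l q m : ℕ} (hq : InK S u q)
    (h : ControlsL S p l (.pr q m)) : InK S u p := by
  by_contra hp
  have hqp : q ≠ p := by rintro rfl; exact hp hq
  obtain ⟨b0, hw, hside⟩ := ctrl_side hS h (by simp [hqp])
  obtain ⟨g, lq, aq, K, A, B, β, β', h1, h2, h3, h4, h5, hc⟩ := hq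
  obtain ⟨i, j, fi, fj, ri, rj, hij, hne⟩ := couple_runs hS h1 h2 h3 h4 h5 hc
  let i' : Key → Bool := fun k => if k.1 = p then !b0 else i k
  let j' : Key → Bool := fun k => if k.1 = p then !b0 else j k
  obtain ⟨P, hP⟩ : ∃ P, Run S i' P := by
    refine terminates hS i' fi.toFinset ?_
    intro g p' l' a' b K hg ts ht
    rw [fi.mem_toFinset]
    by_cases e : p' = p
    · subst e
      rcases hw with rfl | hw
      · simp [i'] at ht
      · exact absurd hg (hw _ _ _ _ _)
    · simpa [i', e] using ht
  -- the modified run does not test `q`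
  have noq : ∀ k b, (k, b) ∈ tr eSt P → k.1 ≠ q := by
    rintro k b hk rfl
    obtain ⟨P1, q', m', a', b', P2, e1, e2⟩ := mem_tr.1 hk
    simp only [Prod.mk.injEq] at e2
    obtain ⟨rfl, rfl⟩ := e2
    have hPS := mem_paths.2 hP.1
    have hm : Letter.prd q' m' a' b ∈ P := by rw [e1]; simp
    have l1 : LSym.pr q' m' ∈ lsymSet S := letter_lsym S P hPS _ hm
    have l2 : LSym.pr q' m ∈ lsymSet S := by
      rcases h with ⟨a, t, e, hX, hz⟩ | ⟨a, t, hX, hz⟩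
      · exact occurs_lsym hX (Or.inr hz)
      · exact occurs_lsym hX (Or.inr hz)
    have := pred_label S (hS.2.1 _) l1 l2
    subst this
    obtain ⟨a, ha⟩ := hside P hPS _ hm rfl
    obtain ⟨Q1, Q2, e3⟩ := List.append_of_mem ha
    have := hP.2 _ (mem_tr.2 ⟨Q1, p, l, a, b0, Q2, e3, rfl⟩)
    simp [i'] at this
  have hP' : Agr j' eSt P := by
    rintro ⟨k, b⟩ hk
    have h6 := hP.2 _ hk
    have h7 := noq k b hk
    have h8 : i k = j k := hij k (by rintro rfl; exact h7 rfl)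
    simpa [i', j', h8] using h6
  have cmp : ∀ (i : Key → Bool) (R : List Letter), Run S i R →
      Agr (fun k => if k.1 = p then !b0 else i k) eSt P → ex eSt R u = ex eSt P u := by
    intro i R hR hA
    refine compat hS hR.1 hP.1 fun k b b' hk hb hb' => ?_
    have e1 := hR.2 _ hb
    have e2 := hA _ hb'
    have hkp : k.1 ≠ p := by rintro rfl; exact hp hk
    simp only [hkp, if_false] at e1 e2
    rw [← e1, ← e2]
  exact hne ((cmp i _ ri hP.2).trans (cmp j _ rj hP').symm)

end SchemaSlicing

namespace SchemaSlicing

variable {S : Schema} {u : ℕ}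

/-! ### Data flow along words -/

/-- Along the word, the final value of the second variable is built from the initial value of
the first. -/
def Flow : List Letter → ℕ → ℕ → Prop
  | [], y, w => y = w
  | .asn v _ _ a :: σ, y, w => (y ∈ a ∧ Flow σ v w) ∨ (y ≠ v ∧ Flow σ y w)
  | .prd _ _ _ _ :: σ, y, w => Flow σ y w

theorem flow_append : ∀ {σ τ : List Letter} {y w : ℕ},
    Flow (σ ++ τ) y w ↔ ∃ v, Flow σ y v ∧ Flow τ v w := by
  intro σ
  induction σ with
  | nil => intro τ y w; simp [Flow]
  | cons c σ ih =>
    intro τ y w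
    cases c with
    | prd p l a b => simp only [List.cons_append, Flow]; exact ih
    | asn v f l a =>
      simp only [List.cons_append, Flow, ih]
      constructor
      · rintro (⟨h, x, h1, h2⟩ | ⟨h, x, h1, h2⟩)
        · exact ⟨x, Or.inl ⟨h, h1⟩, h2⟩
        · exact ⟨x, Or.inr ⟨h, h1⟩, h2⟩
      · rintro ⟨x, ⟨h, h1⟩ | ⟨h, h1⟩, h2⟩
        · exact Or.inl ⟨h, x, h1, h2⟩
        · exact Or.inr ⟨h, x, h1, h2⟩

theorem flow_ne : ∀ {σ : List Letter} {y w : ℕ} {s s' : St}, Flow σ y w → s y ≠ s' y →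
    ex s σ w ≠ ex s' σ w := by
  intro σ
  induction σ with
  | nil => intro y w s s' h hne; cases h; exact hne
  | cons c σ ih =>
    intro y w s s' h hne
    cases c with
    | prd p l a b => exact ih h hne
    | asn v f l a =>
      rcases h with ⟨h1, h2⟩ | ⟨h1, h2⟩
      · refine ih h2 ?_
        simp only [st, Function.update_self, ne_eq, Trm.app.injEq, true_and]
        exact fun h => hne (List.map_inj_left.1 h y h1)
      · refine ih h2 ?_
        simpa [st, h1] using hne

theorem flow_occ {f : ℕ} : ∀ {σ : List Letter} {y w : ℕ} {s : St}, Flow σ y w →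
    OccIn f (s y) → OccIn f (ex s σ w) := by
  intro σ
  induction σ with
  | nil => intro y w s h ho; cases h; exact ho
  | cons c σ ih =>
    intro y w s h ho
    cases c with
    | prd p l a b => exact ih h ho
    | asn v g l a =>
      rcases h with ⟨h1, h2⟩ | ⟨h1, h2⟩
      · refine ih h2 ?_
        simp only [st, Function.update_self]
        exact .there (List.mem_map_of_mem h1) ho
      · refine ih h2 ?_
        simpa [st, h1] using ho

theorem flow_unasg : ∀ {σ : List Letter} {y w : ℕ}, Flow σ y w → Unasg w σ → y = w := by
  intro σ
  induction σ with
  | nil => intro y w h _; exact h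
  | cons c σ ih =>
    intro y w h hu
    have hu' : Unasg w σ := fun f l a hm => hu f l a (List.mem_cons_of_mem _ hm)
    cases c with
    | prd p l a b => exact ih h hu'
    | asn v f l a =>
      rcases h with ⟨h1, h2⟩ | ⟨h1, h2⟩
      · have := ih h2 hu'
        subst this
        exact absurd (List.mem_cons_self ..) (hu f l a)
      · exact ih h2 hu'

theorem unasg_flow : ∀ {σ : List Letter} {y : ℕ}, Unasg y σ → Flow σ y y := by
  intro σ
  induction σ with
  | nil => intro y _; rfl
  | cons c σ ih =>
    intro y hu
    have hu' : Unasg y σ := fun f l a hm => hu f l a (List.mem_cons_of_mem _ hm)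
    cases c with
    | prd p l a b => exact ih hu'
    | asn v f l a =>
      exact Or.inr ⟨by rintro rfl; exact hu f l a (List.mem_cons_self ..), ih hu'⟩

/-- The value assigned by `f^(l)` flows, on some path, into the final value of `u` or into an
argument of a relevant predicate. -/
def Good (S : Schema) (u f l : ℕ) : Prop :=
  ∃ P1 y a P2 K, Steps (init S) (P1 ++ .asn y f l a :: P2) K ∧
    ((K = [] ∧ Flow P2 y u) ∨ ∃ k m args K', Step K (.prd k m args true) K' ∧ InK S u k ∧
      ∃ w ∈ args, Flow P2 y w)

/-! ### Relevance passes from assignments to controlling predicates -/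

theorem alt_path (hS : Special S) {p l : ℕ} {z : LSym} (h : ControlsL S p l z) :
    ∃ X, Occurs X S ∧ z ∈ lsymSet X ∧
      (∀ z' ∈ lsymSet X, z' = .pr p l ∨ ControlsL S p l z') ∧
      ∀ ξ ∈ Paths X, ∃ ξ' ∈ Paths X, ∀ v g n c n' c',
        Letter.asn v g n c ∈ ξ → Letter.asn v g n' c' ∈ ξ' → False := by
  rcases h with ⟨a, t, e, hX, hz⟩ | ⟨a, b, hX, hz⟩
  · refine ⟨_, hX, Or.inr hz, ?_, ?_⟩
    · rintro z' (h | h)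
      · exact Or.inl h
      · exact Or.inr (Or.inl ⟨a, t, e, hX, h⟩)
    · rintro ξ (⟨x, hx, rfl⟩ | ⟨x, hx, rfl⟩)
      · obtain ⟨y, hy⟩ := paths_nonempty e
        refine ⟨_, Or.inr ⟨y, hy, rfl⟩, fun v g n c n' c' h1 h2 => ?_⟩
        exact hS.2.2.2.2 _ _ _ _ _ hX g v (letter_assigns _ _ hx (by simpa using h1))
          (letter_assigns _ _ hy (by simpa using h2))
      · obtain ⟨y, hy⟩ := paths_nonempty t
        refine ⟨_, Or.inl ⟨y, hy, rfl⟩, fun v g n c n' c' h1 h2 => ?_⟩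
        exact hS.2.2.2.2 _ _ _ _ _ hX g v (letter_assigns _ _ hy (by simpa using h2))
          (letter_assigns _ _ hx (by simpa using h1))
  · refine ⟨_, hX, Or.inr hz, ?_, ?_⟩
    · rintro z' (h | h)
      · exact Or.inl h
      · exact Or.inr (Or.inr ⟨a, b, hX, h⟩)
    · intro ξ hξ
      exact ⟨[.prd p l a false], ⟨0, rfl⟩, by simp⟩

/-- If `p` controlled a good assignment without being relevant, then neither would be any
predicate inside the statement `X` of `p`; the path through `X` that makes the assignment and one
avoiding it would be heads after which `u` and all relevant tests behave alike, although the
assigned variable differs and flows into one of them. -/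
theorem Good.ctrl (hS : Special S) {p l f lf : ℕ} (hG : Good S u f lf)
    (h : ControlsL S p l (.fn f lf)) : InK S u p := by
  by_contra hp
  obtain ⟨X, hX, hzX, hctl, halt⟩ := alt_path hS h
  obtain ⟨P1, y, a, P2, K, hst, hfin⟩ := hG
  have irr : ∀ ξ ∈ Paths X, ∀ k m c b, Letter.prd k m c b ∈ ξ → ¬ InK S u k := by
    intro ξ hξ k m c b hm hk
    rcases hctl _ (letter_lsym X ξ hξ _ hm) with e | e
    · simp only [lsymOf, LSym.pr.injEq] at e
      exact hp (e.1 ▸ hk)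
    · exact hp (hk.ctrl hS e)
  have irr_tr : ∀ ξ ∈ Paths X, ∀ s k b, (k, b) ∈ tr s ξ → ¬ InK S u k.1 := by
    intro ξ hξ s k b hk
    obtain ⟨x1, q, m, c, b', x2, e1, e2⟩ := mem_tr.1 hk
    simp only [Prod.mk.injEq] at e2
    obtain ⟨rfl, rfl⟩ := e2
    exact irr ξ hξ q m c b (by rw [e1]; simp)
  -- the part of the given path inside `X`, and its continuation `τ1` up to `K`
  obtain ⟨σ, ξ1, ξ2, τ1, K', rfl, rfl, hξ, hσ, hτ⟩ : ∃ σ ξ1 ξ2 τ1 K', P1 = σ ++ ξ1 ∧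
      P2 = ξ2 ++ τ1 ∧ ξ1 ++ Letter.asn y f lf a :: ξ2 ∈ Paths X ∧
      Steps (init S) σ (push X K') ∧ Steps K' τ1 K := by
    obtain ⟨P3, h3, h3'⟩ : ∃ P3, Steps K P3 [] ∧ ∀ c r, P3 = c :: r →
        ∃ k m args b, c = .prd k m args b ∧ InK S u k := by
      rcases hfin with ⟨rfl, _⟩ | ⟨k, m, args, K', hs, hk, _⟩
      · exact ⟨[], rfl, by simp⟩
      · obtain ⟨r, hr⟩ := complete (S := S) (σ := (P1 ++ .asn y f lf a :: P2) ++
          [.prd k m args true]) (steps_append.2 ⟨K, hst, K', hs, rfl⟩)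
        refine ⟨.prd k m args true :: r, ⟨K', hs, hr⟩, ?_⟩
        rintro c r' e
        simp only [List.cons.injEq] at e
        exact ⟨k, m, args, true, e.1.symm, hk⟩
    have hall : P1 ++ .asn y f lf a :: (P2 ++ P3) ∈ Paths S := by
      rw [mem_paths]
      have := steps_append.2 ⟨K, hst, h3⟩
      simpa using this
    obtain ⟨σ, ξ1, ξ2, τ, rfl, e, hξ, hK⟩ := decomp hX P1 _ _ hall hzX (hS.1 _)
    obtain ⟨K', hσ, hτ⟩ := hK []
    have hP2 : ∃ τ1, P2 = ξ2 ++ τ1 := by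
      rcases List.append_eq_append_iff.1 e with ⟨δ, h1, h2⟩ | ⟨δ, h1, h2⟩
      · cases δ with
        | nil => exact ⟨[], by simpa using h1.symm⟩
        | cons c δ =>
          obtain ⟨k, m, args, b, rfl, hk⟩ := h3' c _ h2
          exact absurd hk (irr _ hξ k m args b (by rw [h1]; simp))
      · exact ⟨δ, h1⟩
    obtain ⟨τ1, rfl⟩ := hP2
    refine ⟨σ, ξ1, ξ2, τ1, K', rfl, rfl, hξ, hσ, ?_⟩
    have h4 : Steps (init S) (σ ++ ((ξ1 ++ .asn y f lf a :: ξ2) ++ τ1)) K := by simpa using hst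
    obtain ⟨A, a1, a2⟩ := steps_append.1 h4
    cases steps_det a1 hσ
    obtain ⟨B, b1, b2⟩ := steps_append.1 a2
    cases steps_det b1 (path_steps X K' _ hξ)
    exact b2
  set ξ := ξ1 ++ Letter.asn y f lf a :: ξ2 with hξdef
  obtain ⟨ξ', hξ', hdisj⟩ := halt ξ hξ
  let H : Heads S u :=
    { special := hS
      h := fun s => if s then σ ++ ξ else σ ++ ξ'
      K0 := K'
      reach := by
        intro s
        cases s
        · exact steps_append.2 ⟨_, hσ, path_steps X K' _ hξ'⟩
        · exact steps_append.2 ⟨_, hσ, path_steps X K' _ hξ⟩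
      kc := by
        have key : ∀ x ∈ Paths X, ∀ x' ∈ Paths X, ∀ k b, InK S u k.1 →
            (k, b) ∈ tr eSt (σ ++ x) → (k, b) ∈ tr eSt (σ ++ x') := by
          intro x hx x' hx' k b hk hm
          rw [tr_append, List.mem_append] at hm ⊢
          exact Or.inl (hm.resolve_right fun hm => irr_tr x hx _ _ _ hm hk)
        intro s s' k b hk
        cases s <;> cases s'
        · exact key _ hξ' _ hξ' k b hk
        · exact key _ hξ' _ hξ k b hk
        · exact key _ hξ _ hξ' k b hk
        · exact key _ hξ _ hξ k b hk }
  have main : ∀ w, Flow (ξ2 ++ τ1) y w → ex (H.D true) τ1 w ≠ ex (H.D false) τ1 w := by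
    intro w hw
    obtain ⟨v, hv1, hv2⟩ := flow_append.1 hw
    refine flow_ne hv2 ?_
    change ex eSt (σ ++ ξ) v ≠ ex eSt (σ ++ ξ') v
    -- `v` is assigned in `X` on the first path
    rcases last_asn v ξ with hun | ⟨x1, g, n, c, x2, e1, hx2⟩
    · have : y = v := flow_unasg hv1 fun f l a hm => hun f l a (by rw [hξdef]; simp [hm])
      subst this
      exact absurd (by rw [hξdef]; simp) (hun f lf a)
    · have hv : ex eSt (σ ++ ξ) v = ex eSt (σ ++ (x1 ++ [.asn v g n c])) v := by
        rw [e1, ex_append, ex_last hx2, ex_append, ex_last (σ2 := []) (by simp [Unasg])]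
      rcases last_asn v ξ' with hun' | ⟨x1', g', n', c', x2', e1', hx2'⟩
      · rw [hv, ex_append (τ := ξ'), ex_unasg hun']
        have hs := H.reach true
        have hs' : Steps (init S) ((σ ++ (x1 ++ [.asn v g n c])) ++ x2) K' := by
          have : H.h true = (σ ++ (x1 ++ [.asn v g n c])) ++ x2 := by
            change σ ++ ξ = _
            rw [e1]; simp
          rw [← this]; exact hs
        obtain ⟨A, hA, _⟩ := steps_append.1 hs'
        exact (lib_new hS v hA).symm
      · rw [ex_append (τ := ξ), ex_append (τ := ξ'), e1, e1', ex_last hx2, ex_last hx2']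
        intro he
        have : g = g' := by simp only [Trm.app.injEq] at he; exact he.1
        subst this
        exact hdisj v g n c n' c' (by rw [e1]; simp) (by rw [e1']; simp)
  rcases hfin with ⟨rfl, hf⟩ | ⟨k, m, args, K1, hs, hk, w, hw, hf⟩
  · exact main _ hf (H.var_eq hτ)
  · exact main _ hf (List.map_inj_left.1 (H.test_eq hτ hs hk) w hw)

end SchemaSlicing

namespace SchemaSlicing

variable {S : Schema} {u : ℕ}

/-! ### Needed symbols are relevant -/

theorem lfold_unasg {v : ℕ} : ∀ {σ : List Letter} (s : ℕ → LTrm), Unasg v σ →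
    σ.foldl lStep s v = s v := by
  intro σ
  induction σ with
  | nil => intro s _; rfl
  | cons c σ ih =>
    intro s h
    rw [List.foldl_cons, ih _ fun f l a hm => h f l a (List.mem_cons_of_mem _ hm)]
    cases c with
    | prd p l a b => rfl
    | asn y f l a =>
      have : v ≠ y := by rintro rfl; exact h f l a (List.mem_cons_self ..)
      simp [lStep, this]

theorem lexec_app {σ : List Letter} {w f l : ℕ} {ts : List LTrm}
    (h : lexec σ w = .app f l ts) : ∃ σ1 a σ2, σ = σ1 ++ .asn w f l a :: σ2 ∧ Unasg w σ2 ∧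
      ts = a.map (lexec σ1) := by
  rcases last_asn w σ with hu | ⟨σ1, g, m, a, σ2, rfl, hu⟩
  · rw [lexec, lfold_unasg _ hu] at h; cases h
  · rw [lexec, List.foldl_append, List.foldl_cons, lfold_unasg _ hu] at h
    simp only [lStep, Function.update_self, LTrm.app.injEq] at h
    obtain ⟨rfl, rfl, rfl⟩ := h
    exact ⟨σ1, a, σ2, rfl, hu, rfl⟩

theorem isFL_ne {F : List (ℕ × ℕ)} {t : LTrm} (h : IsFLTrm F t) : F ≠ [] := by
  cases h <;> simp

theorem isFL_one {fl : ℕ × ℕ} {t : LTrm} (h : IsFLTrm [fl] t) :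
    ∃ ts, t = .app fl.1 fl.2 ts := by
  generalize hF : [fl] = F at h
  cases h with
  | base f l ts => cases hF; exact ⟨ts, rfl⟩
  | @step F t g m ts _ h2 =>
    cases F with
    | nil => exact absurd rfl (isFL_ne h2)
    | cons x F => simp at hF

theorem isFL_two {fl gm : ℕ × ℕ} {t : LTrm} (h : IsFLTrm [fl, gm] t) :
    ∃ ts, t = .app gm.1 gm.2 ts ∧ ∃ ts', LTrm.app fl.1 fl.2 ts' ∈ ts := by
  generalize hF : [fl, gm] = F at h
  cases h with
  | base f l ts => cases hF
  | @step F t g m ts h1 h2 =>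
    have e : F = [fl] ∧ gm = (g, m) := by
      have : [fl] ++ [gm] = F ++ [(g, m)] := hF
      have := List.append_inj' this rfl
      simpa [eq_comm] using this
    obtain ⟨rfl, rfl⟩ := e
    obtain ⟨ts', rfl⟩ := isFL_one h2
    exact ⟨ts, rfl, ts', h1⟩

theorem good_of_var {f l : ℕ} (h : DepFV S (f, l) u) : Good S u f l := by
  obtain ⟨σ, ⟨α, hα⟩, hF⟩ := h
  obtain ⟨ts, ht⟩ := isFL_one hF
  obtain ⟨σ1, a, σ2, rfl, hu, -⟩ := lexec_app ht
  refine ⟨α ++ σ1, u, a, σ2, [], ?_, Or.inl ⟨rfl, unasg_flow hu⟩⟩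
  simpa using mem_paths.1 hα

theorem good_of_pred {f l q m : ℕ} (hq : InK S u q) (h : DepFP S (f, l) q m) :
    Good S u f l := by
  obtain ⟨σ, args, Z, ⟨α, β, hα⟩, w, hw, hF⟩ := h
  obtain ⟨ts, ht⟩ := isFL_one hF
  obtain ⟨σ1, a, σ2, rfl, hu, -⟩ := lexec_app ht
  have hs : Steps (init S) ((α ++ σ1 ++ .asn w f l a :: σ2) ++ (.prd q m args Z :: β)) [] := by
    simpa using mem_paths.1 hα
  obtain ⟨K, h1, K1, h2, -⟩ := steps_append.1 hs
  obtain ⟨K2, h3⟩ := step_flip h2 true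
  exact ⟨α ++ σ1, w, a, σ2, K, h1, Or.inr ⟨q, m, args, K2, h3, hq, w, hw, unasg_flow hu⟩⟩

theorem good_of_fn (hS : Special S) {f l g m : ℕ} (hg : Good S u g m)
    (h : DepFF S (f, l) (g, m)) : Good S u f l := by
  obtain ⟨σ, ⟨α, β, hα⟩, w, hF⟩ := h
  obtain ⟨ts, ht, ts', ht'⟩ := isFL_two hF
  obtain ⟨σ1, b, σ2, rfl, -, rfl⟩ := lexec_app ht
  obtain ⟨x, hx, hx'⟩ := List.mem_map.1 ht'
  obtain ⟨ρ1, a, ρ2, rfl, hu, -⟩ := lexec_app hx'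
  obtain ⟨P1, y, c, P2, K, hP, hfin⟩ := hg
  obtain ⟨K1, k1, K2, k2, k3⟩ := steps_append.1 hP
  have hs : Steps (init S) ((α ++ ρ1 ++ .asn x f l a :: ρ2) ++ (.asn w g m b :: (σ2 ++ β))) [] := by
    simpa using mem_paths.1 hα
  obtain ⟨M1, m1, M2, m2, -⟩ := steps_append.1 hs
  -- both paths make the assignment `g^(m)` at the same program point, so they can be spliced
  cases asn_point hS.1 k1 m1 k2 m2
  obtain ⟨rfl, rfl⟩ : y = w ∧ c = b := by cases k2; cases m2; exact ⟨rfl, rfl⟩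
  have fl : ∀ v, Flow P2 y v → Flow (ρ2 ++ .asn y g m c :: P2) x v := fun v hv =>
    flow_append.2 ⟨x, unasg_flow hu, Or.inl ⟨hx, hv⟩⟩
  refine ⟨α ++ ρ1, x, a, ρ2 ++ .asn y g m c :: P2, K, ?_, ?_⟩
  · have : Steps (init S) ((α ++ ρ1 ++ .asn x f l a :: ρ2) ++ (.asn y g m c :: P2)) K :=
      steps_append.2 ⟨K1, m1, K2, k2, k3⟩
    simpa using this
  · rcases hfin with ⟨e, hf⟩ | ⟨k, n, args, K', h1, h2, v, hv, hf⟩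
    · exact Or.inl ⟨e, fl _ hf⟩
    · exact Or.inr ⟨k, n, args, K', h1, h2, v, hv, fl _ hf⟩

/-- Relevance of a labelled symbol: `Good` for function symbols, `InK` for predicates. -/
def Rel (S : Schema) (u : ℕ) : LSym → Prop
  | .fn f l => Good S u f l
  | .pr p _ => InK S u p

theorem need_rel (hS : Special S) {x : LSym} (h : Need S (.var u) x) : Rel S u x := by
  generalize hc : Crit.var u = c at h
  induction h with
  | ofVar h => cases hc; exact good_of_var h
  | ofOmega h => cases hc
  | @ofDep _ f l x _ hd ih =>
    have hr := ih hc
    cases x with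
    | fn g m => exact good_of_fn hS hr hd
    | pr q m => exact good_of_pred hr hd
  | @ofControl _ p l x _ hd ih =>
    have hr := ih hc
    cases x with
    | fn g m => exact Good.ctrl hS hr hd
    | pr q m => exact InK.ctrl hS hr hd

/-! ### Slices contain the relevant symbols -/

/-- A slice must test the term at which two runs of `S` with different results differ. -/
theorem slice_couple {T : Schema} (hsl : IsUSlice S T u) {i j : Key → Bool} {θ : Key}
    {P P' : List Letter} (hij : ∀ k, k ≠ θ → i k = j k) (hP : Run S i P) (hP' : Run S j P')
    (hne : ex eSt P u ≠ ex eSt P' u) : ∃ τ ∈ Paths T, ∃ b, (θ, b) ∈ tr eSt τ := by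
  by_contra hc
  push Not at hc
  have term : ∀ {i : Key → Bool} {P}, Run S i P → TermRun S (herb (toH i)) eSt P :=
    fun h => ⟨mem_paths.2 h.1, (agrees_toH _ _ _).2 h.2⟩
  obtain ⟨⟨τ, hτ⟩, h1⟩ := hsl Trm (herb (toH i)) eSt ⟨P, term hP⟩
  obtain ⟨-, h2⟩ := hsl Trm (herb (toH j)) eSt ⟨P', term hP'⟩
  have e1 := h1 P τ (term hP) hτ
  have hA : Agr i eSt τ := (agrees_toH _ _ _).1 hτ.2
  have hB : Agr j eSt τ := by
    intro x hx
    rw [← hij x.1 (by rintro e; exact hc τ hτ.1 x.2 (e ▸ hx))]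
    exact hA x hx
  have e2 := h2 P' τ (term hP') ⟨hτ.1, (agrees_toH _ _ _).2 hB⟩
  rw [execP_herb, execP_herb] at e1 e2
  exact hne (e1.trans e2.symm)

theorem occ_letter {f : ℕ} : ∀ {τ : List Letter} {s : St} {w : ℕ}, OccIn f (ex s τ w) →
    (∃ v, OccIn f (s v)) ∨ ∃ y l a, Letter.asn y f l a ∈ τ := by
  intro τ
  induction τ with
  | nil => intro s w h; exact Or.inl ⟨w, h⟩
  | cons c τ ih =>
    intro s w h
    rcases ih (s := st s c) h with ⟨v, hv⟩ | ⟨y, l, a, hm⟩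
    · cases c with
      | prd p l a b => exact Or.inl ⟨v, hv⟩
      | asn y g l a =>
        by_cases e : v = y
        · subst e
          simp only [st, Function.update_self] at hv
          cases hv with
          | here => exact Or.inr ⟨v, l, a, List.mem_cons_self ..⟩
          | there h1 h2 =>
            obtain ⟨x, _, rfl⟩ := List.mem_map.1 h1
            exact Or.inl ⟨x, h2⟩
        · simp only [st, Function.update_of_ne e] at hv
          exact Or.inl ⟨v, hv⟩
    · exact Or.inr ⟨y, l, a, List.mem_cons_of_mem _ hm⟩

theorem occ_mem {T : Schema} {f w : ℕ} {τ ρ : List Letter} (hτ : τ ++ ρ ∈ Paths T)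
    (h : OccIn f (ex eSt τ w)) : ∃ m, LSym.fn f m ∈ lsymSet T := by
  rcases occ_letter h with ⟨v, hv⟩ | ⟨y, l, a, hm⟩
  · cases hv
  · exact ⟨l, letter_lsym T _ hτ _ (List.mem_append_left _ hm)⟩

theorem InK.mem_slice (hS : Special S) {T : Schema} (hsl : IsUSlice S T u) {p : ℕ}
    (h : InK S u p) : ∃ m, LSym.pr p m ∈ lsymSet T := by
  obtain ⟨g, l, a, K, A, B, β, β', h1, h2, h3, h4, h5, hc⟩ := h
  obtain ⟨i, j, -, -, ri, rj, hij, hne⟩ := couple_runs hS h1 h2 h3 h4 h5 hc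
  obtain ⟨τ, hτ, b, hb⟩ := slice_couple hsl hij ri rj hne
  obtain ⟨τ1, q, m, c, b', τ2, e1, e2⟩ := mem_tr.1 hb
  simp only [Prod.mk.injEq] at e2
  obtain ⟨⟨rfl, -⟩, -⟩ := e2
  exact ⟨m, letter_lsym T τ hτ (.prd p m c b') (by rw [e1]; simp)⟩

theorem Good.mem_slice (hS : Special S) {T : Schema} (hsl : IsUSlice S T u) {f l : ℕ}
    (h : Good S u f l) : ∃ m, LSym.fn f m ∈ lsymSet T := by
  obtain ⟨P1, y, a, P2, K, hP, hfin⟩ := h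
  have occ : ∀ w, Flow P2 y w → OccIn f (ex eSt (P1 ++ .asn y f l a :: P2) w) := by
    intro w hw
    rw [ex_append, ex_cons]
    refine flow_occ hw ?_
    simp only [st, Function.update_self]
    exact .here _
  rcases hfin with ⟨rfl, hf⟩ | ⟨k, m, args, K', h1, hk, w, hw, hf⟩
  · obtain ⟨i, hi⟩ := free_agr hS hP
    have hr : TermRun S (herb (toH i)) eSt _ := ⟨mem_paths.2 hP, (agrees_toH _ _ _).2 hi⟩
    obtain ⟨⟨τ, hτ⟩, h1⟩ := hsl Trm (herb (toH i)) eSt ⟨_, hr⟩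
    have e := h1 _ τ hr hτ
    rw [execP_herb, execP_herb] at e
    exact occ_mem (ρ := []) (by simpa using hτ.1) (e ▸ occ u hf)
  · obtain ⟨A, B, β, β', h2, h3, h4, h5, hc⟩ := hk.at hS hP h1
    obtain ⟨i, j, -, -, ri, rj, hij, hne⟩ := couple_runs hS hP h2 h3 h4 h5 hc
    obtain ⟨τ, hτ, b, hb⟩ := slice_couple hsl hij ri rj hne
    obtain ⟨τ1, q, m, c, b', τ2, rfl, e2⟩ := mem_tr.1 hb
    simp only [Prod.mk.injEq] at e2
    -- the term tested by the slice contains `f`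
    have hm : ex eSt (P1 ++ .asn y f l a :: P2) w ∈ c.map (ex eSt τ1) := by
      rw [← e2.1.2]; exact List.mem_map_of_mem hw
    obtain ⟨v, -, hv⟩ := List.mem_map.1 hm
    exact occ_mem hτ (hv ▸ occ w hf)

end SchemaSlicing

namespace SchemaSlicing

/-- Theorem 27(2) / main1.thm: if T is a subschema of a special
schema S and a u-slice of S, then T contains at least one occurrence of every
function or predicate symbol having a labelled occurrence in `Need_S(u)`. -/
theorem slice_contains_needed_symbols (S T : Schema) (u : ℕ)
    (hS : Special S) (hsub : Subschema T S) (hsl : IsUSlice S T u) :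
    (∀ f l, Need S (Crit.var u) (LSym.fn f l) → ∃ m, LSym.fn f m ∈ lsymSet T) ∧
    (∀ p l, Need S (Crit.var u) (LSym.pr p l) → ∃ m, LSym.pr p m ∈ lsymSet T) := by
  exact ⟨fun f l h => Good.mem_slice (l := l) hS hsl (need_rel hS h),
    fun p l h => InK.mem_slice hS hsl (need_rel hS h)⟩

end SchemaSlicing
end

section
/- There exist a special schema S and a subschema T of S such that T is an ω-slice of S, but some function symbol that has a labelled occurrence in Need_S(ω) does not occur in T. (Hence the minimality result for u-slices with u a variable fails when the slicing criterion is termination behaviour.) -/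
namespace SchemaSlicing

/-! ### The two schemas -/

/-- Body of the loop: `a := s(b); c := g(c); b := t(c)`, with variables `x, a, b, c` coded as
`0, 1, 2, 3` and function symbols `f, h, k, s, g, t` as `0, …, 5`. -/
def loopBody : Schema :=
  .seq (.assign 1 3 1 [2]) (.seq (.assign 3 4 0 [3]) (.assign 2 5 0 [3]))

/-- The slice: everything except `x := f(x)`. The predicate symbols `q, p` are `0, 1`. -/
def slicedSchema : Schema :=
  .seq (.ite 0 0 [0]
      (.seq (.assign 1 1 0 []) (.assign 2 2 0 []))
      (.seq (.assign 1 2 1 []) (.assign 2 1 1 [])))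
    (.seq (.assign 1 3 0 [1]) (.whil 1 0 [1] loopBody))

/-- The original schema: `x := f(x)` followed by the slice. -/
def fullSchema : Schema := .seq (.assign 0 0 0 [0]) slicedSchema

/-- The only path through the loop body. -/
def bodyPath : List Letter := [.asn 1 3 1 [2], .asn 3 4 0 [3], .asn 2 5 0 [3]]

/-- The part of a path of `slicedSchema` before the loop, for outcome `Z` of the predicate `q`. -/
def headPath (Z : Bool) : List Letter :=
  .prd 0 0 [0] Z ::
    (bif Z then [.asn 1 1 0 [], .asn 2 2 0 []] else [.asn 1 2 1 [], .asn 2 1 1 []]) ++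
    [.asn 1 3 0 [1]]

theorem paths_loopBody : Paths loopBody = {bodyPath} := by
  ext σ
  simp [loopBody, Paths, bodyPath]

theorem mem_paths_sliced (σ : List Letter) :
    σ ∈ Paths slicedSchema ↔ ∃ (Z : Bool) (n : ℕ), ∃ ρ ∈ whileIter 1 0 [1] {bodyPath} n,
      σ = headPath Z ++ ρ := by
  constructor
  · rintro ⟨u, hu, v, ⟨w, hw, ρ, ⟨n, hρ⟩, rfl⟩, rfl⟩
    rw [paths_loopBody] at hρ
    rcases hu with ⟨y, ⟨y₁, h₁, y₂, h₂, rfl⟩, rfl⟩ | ⟨y, ⟨y₁, h₁, y₂, h₂, rfl⟩, rfl⟩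
    · refine ⟨true, n, ρ, hρ, ?_⟩
      simp only [Paths, Set.mem_singleton_iff] at hw h₁ h₂
      simp [hw, h₁, h₂, headPath]
    · refine ⟨false, n, ρ, hρ, ?_⟩
      simp only [Paths, Set.mem_singleton_iff] at hw h₁ h₂
      simp [hw, h₁, h₂, headPath]
  · rintro ⟨Z, n, ρ, hρ, rfl⟩
    have hw : ρ ∈ Paths (.whil 1 0 [1] loopBody) := ⟨n, by rwa [paths_loopBody]⟩
    cases Z
    · exact ⟨_, Or.inr ⟨_, ⟨_, rfl, _, rfl, rfl⟩, rfl⟩, _, ⟨_, rfl, ρ, hw, rfl⟩, by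
        simp [headPath]⟩
    · exact ⟨_, Or.inl ⟨_, ⟨_, rfl, _, rfl, rfl⟩, rfl⟩, _, ⟨_, rfl, ρ, hw, rfl⟩, by
        simp [headPath]⟩

theorem mem_paths_full (σ : List Letter) :
    σ ∈ Paths fullSchema ↔ ∃ τ ∈ Paths slicedSchema, σ = .asn 0 0 0 [0] :: τ := by
  simp [fullSchema, Paths]

/-! ### Executing paths -/

section Exec

variable {D : Type} (I : Interp D)

theorem agrees_nil (d : ℕ → D) : Agrees I d [] := by
  intro τ p l args b h
  simp at h

theorem agrees_asn (d : ℕ → D) (y f l : ℕ) (args : List ℕ) (σ : List Letter) :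
    Agrees I d (.asn y f l args :: σ) ↔ Agrees I (stepL I d (.asn y f l args)) σ := by
  constructor
  · intro h τ p m as b hp
    exact h (.asn y f l args :: τ) p m as b (by simpa using hp)
  · intro h τ p m as b hp
    cases τ with
    | nil => simp at hp
    | cons c τ =>
      simp only [List.cons_append, List.cons_prefix_cons] at hp
      obtain ⟨rfl, hp⟩ := hp
      exact h τ p m as b hp

theorem agrees_prd (d : ℕ → D) (q l : ℕ) (args : List ℕ) (Z : Bool) (σ : List Letter) :
    Agrees I d (.prd q l args Z :: σ) ↔ I.pr q (args.map d) = Z ∧ Agrees I d σ := by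
  constructor
  · intro h
    refine ⟨h [] q l args Z (by simp), fun τ p m as b hp => ?_⟩
    exact h (.prd q l args Z :: τ) p m as b (by simpa using hp)
  · rintro ⟨h₀, h⟩ τ p m as b hp
    cases τ with
    | nil =>
      simp only [List.nil_append, List.cons_prefix_cons, Letter.prd.injEq] at hp
      obtain ⟨⟨rfl, rfl, rfl, rfl⟩, -⟩ := hp
      exact h₀
    | cons c τ =>
      simp only [List.cons_append, List.cons_prefix_cons] at hp
      obtain ⟨rfl, hp⟩ := hp
      exact h τ p m as b hp

theorem Agrees.of_prefix {I : Interp D} {d : ℕ → D} {σ τ : List Letter} (h : Agrees I d τ)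
    (hp : σ <+: τ) : Agrees I d σ :=
  fun ρ p l args b hρ => h ρ p l args b (hρ.trans hp)

/-- The values assigned successively along a path. -/
def vals : (ℕ → D) → List Letter → List D
  | _, [] => []
  | d, .asn y f l args :: σ =>
      I.fn f (args.map d) :: vals (stepL I d (.asn y f l args)) σ
  | d, .prd _ _ _ _ :: σ => vals d σ

theorem vals_append (d : ℕ → D) (σ τ : List Letter) :
    vals I d (σ ++ τ) = vals I d σ ++ vals I (execP I d σ) τ := by
  induction σ generalizing d with
  | nil => rfl
  | cons c σ ih =>
    cases c with
    | asn y f l args =>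
      simp only [List.cons_append, vals, ih]
      rfl
    | prd p l args b =>
      simp only [List.cons_append, vals, ih]
      rfl

theorem execP_append (d : ℕ → D) (σ τ : List Letter) :
    execP I d (σ ++ τ) = execP I (execP I d σ) τ := by
  simp [execP]

/-! ### Termination of the slice -/

theorem terminates_loop (d : ℕ → D) :
    (∃ n, ∃ σ ∈ whileIter 1 0 [1] {bodyPath} n, Agrees I d σ) ↔
      ∃ n, I.pr 1 [((fun e => execP I e bodyPath)^[n] d) 1] = false := by
  constructor
  · rintro ⟨n, σ, hσ, ha⟩
    refine ⟨n, ?_⟩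
    induction n generalizing d σ with
    | zero =>
      obtain rfl : σ = _ := hσ
      simpa [agrees_prd, agrees_nil] using ha
    | succ n ih =>
      obtain ⟨x, rfl, y, hy, rfl⟩ := hσ
      rw [Function.iterate_succ_apply]
      refine ih _ y hy ?_
      simp only [bodyPath, List.cons_append, List.nil_append, agrees_prd, agrees_asn] at ha
      exact ha.2
  · rintro ⟨n, hn⟩
    induction n generalizing d with
    | zero =>
      exact ⟨0, _, rfl, by simpa [agrees_prd, agrees_nil] using hn⟩
    | succ n ih =>
      by_cases h0 : I.pr 1 [d 1] = false
      · exact ⟨0, _, rfl, by simpa [agrees_prd, agrees_nil] using h0⟩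
      · rw [Function.iterate_succ_apply] at hn
        obtain ⟨m, σ, hσ, ha⟩ := ih _ hn
        refine ⟨m + 1, _, ⟨bodyPath, rfl, σ, hσ, rfl⟩, ?_⟩
        simp only [bodyPath, List.cons_append, List.nil_append, agrees_prd, agrees_asn]
        exact ⟨by simpa using h0, ha⟩

theorem iterate_body_c (d : ℕ → D) (n : ℕ) :
    ((fun e => execP I e bodyPath)^[n] d) 3 = (fun z => I.fn 4 [z])^[n] (d 3) := by
  induction n with
  | zero => rfl
  | succ n ih =>
    rw [Function.iterate_succ_apply', Function.iterate_succ_apply', ← ih]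
    simp [execP, bodyPath, stepL]

theorem iterate_body_a (d : ℕ → D) (n : ℕ) :
    ((fun e => execP I e bodyPath)^[n + 2] d) 1 =
      I.fn 3 [I.fn 5 [(fun z => I.fn 4 [z])^[n + 1] (d 3)]] := by
  rw [← iterate_body_c, Function.iterate_succ_apply', Function.iterate_succ_apply']
  simp [execP, bodyPath, stepL]

/-- Termination of the slice after the loop has been reached, split according to the first two
evaluations of the guard and all the later ones. -/
theorem terminates_loop' (d : ℕ → D) :
    (∃ n, ∃ σ ∈ whileIter 1 0 [1] {bodyPath} n, Agrees I d σ) ↔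
      I.pr 1 [d 1] = false ∨ I.pr 1 [I.fn 3 [d 2]] = false ∨
      ∃ n, I.pr 1 [I.fn 3 [I.fn 5 [(fun z => I.fn 4 [z])^[n + 1] (d 3)]]] = false := by
  rw [terminates_loop]
  have h1 : ((fun e => execP I e bodyPath)^[1] d) 1 = I.fn 3 [d 2] := by
    simp [execP, bodyPath, stepL]
  constructor
  · rintro ⟨n, hn⟩
    match n, hn with
    | 0, hn => exact Or.inl hn
    | 1, hn => exact Or.inr (Or.inl (h1 ▸ hn))
    | n + 2, hn => exact Or.inr (Or.inr ⟨n, by rwa [iterate_body_a] at hn⟩)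
  · rintro (h | h | ⟨n, h⟩)
    · exact ⟨0, h⟩
    · exact ⟨1, h1 ▸ h⟩
    · exact ⟨n + 2, by rwa [iterate_body_a]⟩

/-- The slice terminates iff `p` fails at `s(h)`, at `s(k)` or at some `s(t(g^{n+1}(c)))`. -/
theorem terminates_sliced (d : ℕ → D) :
    Terminates slicedSchema I d ↔
      I.pr 1 [I.fn 3 [I.fn 1 []]] = false ∨ I.pr 1 [I.fn 3 [I.fn 2 []]] = false ∨
      ∃ n, I.pr 1 [I.fn 3 [I.fn 5 [(fun z => I.fn 4 [z])^[n + 1] (d 3)]]] = false := by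
  have key : Terminates slicedSchema I d ↔ ∃ Z : Bool, I.pr 0 [d 0] = Z ∧
      ∃ n, ∃ σ ∈ whileIter 1 0 [1] {bodyPath} n, Agrees I (execP I d (headPath Z)) σ := by
    have hd : ∀ Z ρ, Agrees I d (headPath Z ++ ρ) ↔
        I.pr 0 [d 0] = Z ∧ Agrees I (execP I d (headPath Z)) ρ := by
      intro Z ρ
      cases Z <;> simp [headPath, agrees_prd, agrees_asn, execP, stepL]
    constructor
    · rintro ⟨σ, hσ, ha⟩
      obtain ⟨Z, n, ρ, hρ, rfl⟩ := (mem_paths_sliced σ).1 hσ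
      rw [hd] at ha
      exact ⟨Z, ha.1, n, ρ, hρ, ha.2⟩
    · rintro ⟨Z, hZ, n, ρ, hρ, ha⟩
      exact ⟨_, (mem_paths_sliced _).2 ⟨Z, n, ρ, hρ, rfl⟩, (hd _ _).2 ⟨hZ, ha⟩⟩
  rw [key]
  simp only [terminates_loop', exists_eq_left']
  cases I.pr 0 [d 0] <;> simp [headPath, execP, stepL]
  tauto

theorem terminates_full (d : ℕ → D) :
    Terminates fullSchema I d ↔
      Terminates slicedSchema I (stepL I d (.asn 0 0 0 [0])) := by
  constructor
  · rintro ⟨σ, hσ, ha⟩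
    obtain ⟨τ, hτ, rfl⟩ := (mem_paths_full σ).1 hσ
    exact ⟨τ, hτ, (agrees_asn ..).1 ha⟩
  · rintro ⟨τ, hτ, ha⟩
    exact ⟨_, (mem_paths_full _).2 ⟨τ, hτ, rfl⟩, (agrees_asn ..).2 ha⟩

/-! ### From an arbitrary interpretation to Herbrand interpretations -/

/-- Value of a term under an interpretation and a state. -/
def evalT (d : ℕ → D) : Trm → D
  | .var v => d v
  | .app f ts => I.fn f (ts.map (evalT d))

/-- Evaluation carries Herbrand execution to execution under `I`. -/
theorem evalT_execP (h : HInterp) (d : ℕ → D) (e : ℕ → Trm) (σ : List Letter) (v : ℕ) :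
    evalT I d (execP (herb h) e σ v) = execP I (fun w => evalT I d (e w)) σ v := by
  induction σ generalizing e with
  | nil => rfl
  | cons c σ ih =>
    change evalT I d (execP (herb h) (stepL (herb h) e c) σ v) = execP I (stepL I _ c) σ v
    rw [ih]
    congr 1
    funext w
    cases c with
    | prd p l args b => rfl
    | asn y f l args =>
      simp only [stepL, herb, Function.update_apply]
      split_ifs
      · simp [evalT, Function.comp_def]
      · rfl

theorem evalT_hexec (d : ℕ → D) (σ : List Letter) (v : ℕ) :
    evalT I d (hexec σ v) = execP I d σ v := by
  rw [hexec, evalT_execP]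
  simp [eSt, evalT]

theorem hAgrees_of_agrees (d : ℕ → D) (σ : List Letter) (h : Agrees I d σ) :
    hAgrees (fun p ts => I.pr p (ts.map (evalT I d))) σ := by
  intro τ p l args b hp
  rw [← h τ p l args b hp]
  simp only [herb, List.map_map]
  congr 1
  refine List.map_congr_left fun v _ => ?_
  exact (evalT_execP I _ d eSt τ v).trans (by simp [eSt, evalT])

end Exec

/-! ### The numerical model -/

/-- An interpretation over `ℕ` which, from a state with `c = 2`, makes `q` equal to `Z`, runs the
loop `N` times, and makes the
assigned values increase: `0, 1, 2, 3` before the loop and then `4, 5, 6, 7, …`. -/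
def model (Z : Bool) (N : ℕ) : Interp ℕ where
  fn f ts := match f, ts with
    | 1, _ => bif Z then 1 else 2
    | 2, _ => bif Z then 2 else 1
    | 3, [v] => if v ≤ 2 then v + 2 else v + 1
    | 4, [v] => v + 3
    | 5, [v] => v + 1
    | _, _ => 0
  pr p ts := match p, ts with
    | 0, _ => Z
    | 1, [v] => decide (v < 3 * N + 1)
    | _, _ => false

/-- The hypotheses on `d` hold at the loop entry and are preserved by the body; `m` is the number
of remaining iterations. -/
theorem loop_good (Z : Bool) (N m : ℕ) (σ : List Letter)
    (hσ : σ ∈ whileIter 1 0 [1] {bodyPath} m) (d : ℕ → ℕ)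
    (hs : (model Z N).fn 3 [d 2] = d 3 + 2) (hl : d 3 ≤ d 1 + 1) (hu : d 1 ≤ d 3 + 1)
    (hN : d 3 + 3 * m = 3 * N + 2) :
    Agrees (model Z N) d σ ∧ (∀ v ∈ vals (model Z N) d σ, d 3 + 1 < v) ∧
      (vals (model Z N) d σ).Pairwise (· < ·) := by
  induction m generalizing d σ with
  | zero =>
    obtain rfl : σ = _ := hσ
    have : ¬ d 1 < 3 * N + 1 := by omega
    simp only [agrees_prd, agrees_nil, vals]
    simpa [model] using this
  | succ m ih =>
    obtain ⟨x, rfl, y, hy, rfl⟩ := hσ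
    have e1 : execP (model Z N) d bodyPath 1 = d 3 + 2 := by
      simp [execP, bodyPath, stepL, hs]
    have e2 : execP (model Z N) d bodyPath 2 = d 3 + 4 := by
      simp [execP, bodyPath, stepL, model]
    have e3 : execP (model Z N) d bodyPath 3 = d 3 + 3 := by
      simp [execP, bodyPath, stepL, model]
    obtain ⟨h1, h2, h3⟩ := ih y hy (execP (model Z N) d bodyPath)
      (by rw [e2, e3]; simp [model]) (by omega) (by omega) (by omega)
    have hv : vals (model Z N) d (.prd 1 0 [1] true :: (bodyPath ++ y)) =
        (d 3 + 2) :: (d 3 + 3) :: (d 3 + 4) ::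
          vals (model Z N) (execP (model Z N) d bodyPath) y := by
      rw [vals, vals_append, ← hs]
      simp [bodyPath, vals, stepL, model]
    rw [e3] at h2
    refine ⟨?_, ?_, ?_⟩
    · rw [agrees_prd]
      refine ⟨?_, ?_⟩
      · have : d 1 < 3 * N + 1 := by omega
        simpa [model] using this
      · simp only [bodyPath, List.cons_append, List.nil_append, agrees_asn]
        exact h1
    · rw [hv]
      intro v hv'
      simp only [List.mem_cons] at hv'
      rcases hv' with rfl | rfl | rfl | hv'
      · omega
      · omega
      · omega
      · have := h2 v hv'
        omega
    · rw [hv]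
      simp only [List.pairwise_cons, List.mem_cons]
      refine ⟨?_, ?_, ?_, h3⟩
      · rintro v (rfl | rfl | hv')
        · omega
        · omega
        · have := h2 v hv'
          omega
      · rintro v (rfl | hv')
        · omega
        · have := h2 v hv'
          omega
      · intro v hv'
        have := h2 v hv'
        omega

theorem path_good (σ : List Letter) (hσ : σ ∈ Paths fullSchema) :
    ∃ (J : Interp ℕ) (d : ℕ → ℕ), Agrees J d σ ∧ (vals J d σ).Pairwise (· < ·) := by
  obtain ⟨τ, hτ, rfl⟩ := (mem_paths_full σ).1 hσ
  obtain ⟨Z, N, ρ, hρ, rfl⟩ := (mem_paths_sliced τ).1 hτ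
  -- The counter `c` starts at `2`, so that the first value assigned in the loop is `4`.
  refine ⟨model Z N, fun v => if v = 3 then 2 else 0, ?_⟩
  set d : ℕ → ℕ := fun v => if v = 3 then 2 else 0 with hd
  set d' := execP (model Z N) d (.asn 0 0 0 [0] :: headPath Z) with hd'
  have e1 : d' 1 = 3 := by
    cases Z <;> simp [hd', execP, headPath, stepL, model]
  have e2 : d' 2 = 2 := by
    cases Z <;> simp [hd', execP, headPath, stepL, model]
  have e3 : d' 3 = 2 := by
    cases Z <;> simp [hd', hd, execP, headPath, stepL]
  obtain ⟨h1, h2, h3⟩ := loop_good Z N N ρ hρ d'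
    (by rw [e2, e3]; simp [model]) (by omega) (by omega) (by omega)
  constructor
  · have hq : (model Z N).pr 0 = fun _ => Z := by
      funext ts
      simp [model]
    cases Z <;>
    · simp only [headPath, cond_true, cond_false, List.cons_append, List.nil_append, agrees_asn,
        agrees_prd, hq, true_and]
      exact h1
  · have hv : vals (model Z N) d (.asn 0 0 0 [0] :: (headPath Z ++ ρ)) =
        0 :: 1 :: 2 :: 3 :: vals (model Z N) d' ρ := by
      rw [← List.cons_append, vals_append, ← hd']
      cases Z <;> simp [headPath, vals, stepL, model]
    rw [hv]
    rw [e3] at h2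
    simp only [List.pairwise_cons, List.mem_cons]
    refine ⟨?_, ?_, ?_, ?_, h3⟩
    · rintro v (rfl | rfl | rfl | hv')
      · omega
      · omega
      · omega
      · have := h2 v hv'
        omega
    · rintro v (rfl | rfl | hv')
      · omega
      · omega
      · have := h2 v hv'
        omega
    · rintro v (rfl | hv')
      · omega
      · have := h2 v hv'
        omega
    · intro v hv'
      have := h2 v hv'
      omega

theorem free_full : Free fullSchema := by
  rintro σ ⟨τ, hp, hτ⟩
  obtain ⟨J, d, h, -⟩ := path_good τ hτ
  exact ⟨_, hAgrees_of_agrees J d σ (h.of_prefix hp)⟩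

theorem liberal_full : Liberal fullSchema := by
  rintro i μ ν y f l args w g m brgs ⟨τ, ⟨ρ, rfl⟩, hτ⟩ - heq
  obtain ⟨J, d, -, hv⟩ := path_good _ hτ
  have heq' := congrArg (evalT J d) heq
  rw [evalT_hexec, evalT_hexec] at heq'
  set d₁ := execP J d (μ ++ [.asn y f l args]) with hd₁
  -- The two values in question as members of the increasing list of assigned values.
  have h1 : d₁ y = J.fn f (args.map (execP J d μ)) := by
    rw [hd₁, execP_append]
    simp [execP, stepL]
  have h2 : execP J d (μ ++ .asn y f l args :: (ν ++ [.asn w g m brgs])) w =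
      J.fn g (brgs.map (execP J d₁ ν)) := by
    rw [List.append_cons, execP_append, execP_append]
    simp [execP, stepL, hd₁]
  rw [h1, h2] at heq'
  rw [vals_append, vals_append] at hv
  have hv' := (List.pairwise_append.1 (List.pairwise_append.1 hv).1).2.1
  rw [vals, vals_append, List.pairwise_cons] at hv'
  have hd₁' : stepL J (execP J d μ) (.asn y f l args) = d₁ := by
    rw [hd₁, execP_append]
    rfl
  rw [hd₁'] at hv'
  have := hv'.1 (J.fn g (brgs.map (execP J d₁ ν))) (by simp [vals])
  omega

/-! ### Syntactic conditions and the set `Need` -/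

theorem special_full : Special fullSchema := by
  refine ⟨?_, ?_, free_full, liberal_full, ?_⟩
  · intro x
    rcases x with ⟨f, l⟩ | ⟨p, l⟩
    · simp only [fullSchema, slicedSchema, loopBody, lsymCount, LSym.fn.injEq, reduceCtorEq,
        if_false]
      split_ifs <;> omega
    · simp only [fullSchema, slicedSchema, loopBody, lsymCount, LSym.pr.injEq, reduceCtorEq,
        if_false]
      split_ifs <;> omega
  · intro p
    simp only [fullSchema, slicedSchema, loopBody, predCount]
    split_ifs <;> omega
  · intro p l args t e hocc f v ht he
    have : t = .seq (.assign 1 1 0 []) (.assign 2 2 0 []) ∧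
        e = .seq (.assign 1 2 1 []) (.assign 2 1 1 []) := by
      unfold fullSchema slicedSchema loopBody at hocc
      repeat' first
        | exact ⟨rfl, rfl⟩
        | (rename_i hh; cases hh)
        | cases hocc
    obtain ⟨rfl, rfl⟩ := this
    simp only [AssignsWith] at ht he
    omega

/-- The path through `fullSchema` on which `q` holds and the loop is not entered. -/
theorem short_path : (.asn 0 0 0 [0] :: (headPath true ++ [.prd 1 0 [1] false])) ∈
    Paths fullSchema :=
  (mem_paths_full _).2 ⟨_, (mem_paths_sliced _).2 ⟨true, 0, _, rfl, rfl⟩, rfl⟩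

theorem need_f : Need fullSchema .omega (.fn 0 0) := by
  have hp : Need fullSchema .omega (.pr 1 0) :=
    .ofOmega ⟨[1], loopBody, .seqR (.seqR (.seqR (.refl _)))⟩
  have hs : Need fullSchema .omega (.fn 3 0) := by
    refine .ofDep hp ⟨[.asn 1 3 0 [1]], [1], false,
      ⟨[.asn 0 0 0 [0], .prd 0 0 [0] true, .asn 1 1 0 [], .asn 2 2 0 []], [], ?_⟩,
      1, by simp, ?_⟩
    · exact short_path
    · exact .base 3 0 _
  have hh : Need fullSchema .omega (.fn 1 0) := by
    refine .ofDep hs ⟨[.asn 1 1 0 [], .asn 2 2 0 [], .asn 1 3 0 [1]],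
      ⟨[.asn 0 0 0 [0], .prd 0 0 [0] true], [.prd 1 0 [1] false], ?_⟩, 1, ?_⟩
    · exact short_path
    · exact .step (F := [(1, 0)]) (t := .app 1 0 []) 3 0 (by simp [lStep]) (.base 1 0 [])
  have hq : Need fullSchema .omega (.pr 0 0) := by
    refine .ofControl hh (Or.inl ⟨_, _, _, .seqR (.seqL (.refl _)), Or.inl ?_⟩)
    simp [lsymSet]
  refine .ofDep hq ⟨[.asn 0 0 0 [0]], [0], true,
    ⟨[], [.asn 1 1 0 [], .asn 2 2 0 [], .asn 1 3 0 [1], .prd 1 0 [1] false], ?_⟩,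
    0, by simp, ?_⟩
  · exact short_path
  · exact .base 0 0 _

/-- Section 8: there exist a special schema S and a subschema T
of S such that T is an ω-slice of S although some function symbol with a
labelled occurrence in `Need_S(ω)` does not occur in T. -/
theorem omega_slice_not_minimal :
    ∃ (S T : Schema), Special S ∧ Subschema T S ∧ IsOmegaSlice S T ∧
      ∃ f l, Need S Crit.omega (LSym.fn f l) ∧ ∀ m, LSym.fn f m ∉ lsymSet T := by
  refine ⟨fullSchema, slicedSchema, special_full, .seqR _ _, ?_, 0, 0, need_f, ?_⟩
  · intro D I d
    rw [terminates_full, terminates_sliced, terminates_sliced]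
    simp [stepL]
  · intro m
    simp [slicedSchema, loopBody, lsymSet]

end SchemaSlicing
end
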